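/- arXiv:0706.3905 — 4 statements merged into one kernel-verified Lean document; each statement's English description precedes it below -/
import Mathlib

section
/- Let X be a locally path-connected Hausdorff topological space, let U be an open subset of ℝⁿ, and let f : X × U → ℝⁿ be continuous. Suppose that for every x ∈ X the map f_x : U → ℝⁿ defined by f_x(y) = f(x,y) is differentiable (not necessarily C¹) and without critical points, i.e. at every y ∈ U it has a Fréchet derivative that is a bijective linear map ℝⁿ → ℝⁿ. Fix (x₀, y₀) ∈ X × U and set z₀ = f(x₀, y₀). Then there exist a neighborhood V of x₀ in X and a function g : V → U, continuous on V, such that g(x₀) = y₀ and f(x, g(x)) = z₀ for all x ∈ V. -/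
open Set Filter Topology Metric

/-- `h` is differentiable on `U` with bijective derivatives. -/
def GoodOn {E : Type*} [NormedAddCommGroup E] [NormedSpace ℝ E] (h : E → E) (U : Set E) : Prop :=
  ∀ y ∈ U, ∃ D : E →L[ℝ] E, HasFDerivAt h D y ∧ Function.Bijective D

section aux
variable {E : Type*} [NormedAddCommGroup E] [InnerProductSpace ℝ E] [FiniteDimensional ℝ E]

lemma GoodOn.continuousAt {h : E → E} {U : Set E} (hg : GoodOn h U) {y : E} (hy : y ∈ U) :
    ContinuousAt h y := by
  obtain ⟨D, hD, -⟩ := hg y hy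
  exact hD.continuousAt

lemma GoodOn.continuousOn {h : E → E} {U : Set E} (hg : GoodOn h U) : ContinuousOn h U :=
  fun _ hy => (hg.continuousAt hy).continuousWithinAt

lemma exists_bound (D : E →L[ℝ] E) (hb : Function.Bijective D) :
    ∃ C > 0, ∀ v, ‖v‖ ≤ C * ‖D v‖ := by
  obtain ⟨K, hK, h⟩ := (LinearMap.injective_iff_antilipschitz (f := (D : E →ₗ[ℝ] E))).1 hb.1
  refine ⟨K, hK, fun v => ?_⟩
  simpa using h.le_mul_dist v 0

lemma lower_bound {h : E → E} {D : E →L[ℝ] E} {y : E} (hD : HasFDerivAt h D y)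
    (hb : Function.Bijective D) :
    ∃ C > 0, ∀ᶠ x in 𝓝 y, ‖x - y‖ ≤ C * ‖h x - h y‖ := by
  obtain ⟨C, hC, hCD⟩ := exists_bound D hb
  refine ⟨2 * C, by positivity, ?_⟩
  have := hD.isLittleO.def (c := 1 / (2 * C)) (by positivity)
  filter_upwards [this] with x hx
  have h1 := hCD (x - y)
  have h2 : ‖D (x - y)‖ ≤ ‖h x - h y‖ + ‖h x - h y - D (x - y)‖ := by
    have := norm_sub_le (h x - h y) (h x - h y - D (x - y))
    simpa using this
  have h3 : C * ‖D (x - y)‖ ≤ C * (‖h x - h y‖ + 1 / (2 * C) * ‖x - y‖) := by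
    gcongr; linarith
  have h4 : C * (‖h x - h y‖ + 1 / (2 * C) * ‖x - y‖) = C * ‖h x - h y‖ + ‖x - y‖ / 2 := by
    field_simp
  linarith

lemma exists_preimage {h : E → E} {y z : E} {r : ℝ} (hr : 0 < r)
    (hg : GoodOn h (closedBall y r)) (hs : ∀ x ∈ sphere y r, ‖h y - z‖ < ‖h x - z‖) :
    ∃ x ∈ ball y r, h x = z := by
  have hc : ContinuousOn (fun x => ‖h x - z‖ ^ 2) (closedBall y r) :=
    ((hg.continuousOn.sub continuousOn_const).norm).pow 2
  obtain ⟨x, hx, hmin⟩ := (isCompact_closedBall y r).exists_isMinOn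
    ⟨y, mem_closedBall_self hr.le⟩ hc
  have hxy : ‖h x - z‖ ^ 2 ≤ ‖h y - z‖ ^ 2 := hmin (mem_closedBall_self hr.le)
  have hxb : x ∈ ball y r := by
    rcases (mem_closedBall.1 hx).lt_or_eq with h1 | h1
    · exact h1
    · have := hs x h1
      have h2 := pow_lt_pow_left₀ this (norm_nonneg _) two_ne_zero
      linarith
  refine ⟨x, hxb, ?_⟩
  obtain ⟨D, hD, hb⟩ := hg x hx
  have hloc : IsLocalMin (fun x => ‖h x - z‖ ^ 2) x :=
    hmin.isLocalMin (mem_of_superset (isOpen_ball.mem_nhds hxb) ball_subset_closedBall)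
  have hz := hloc.hasFDerivAt_eq_zero (hD.sub_const z).norm_sq
  obtain ⟨v, hv⟩ := hb.2 (h x - z)
  have := DFunLike.congr_fun hz v
  simp only [smul_apply, ContinuousLinearMap.comp_apply, hv,
    innerSL_apply_apply, zero_apply, real_inner_self_eq_norm_sq] at this
  simpa [sub_eq_zero] using this

lemma GoodOn.mem_nhds_image {h : E → E} {U : Set E} (hg : GoodOn h U) {O : Set E} {y : E}
    (hO : O ∈ 𝓝 y) (hU : U ∈ 𝓝 y) : h '' O ∈ 𝓝 (h y) := by
  obtain ⟨D, hD, hb⟩ := hg y (mem_of_mem_nhds hU)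
  obtain ⟨C, hC, hl⟩ := lower_bound hD hb
  obtain ⟨r, hr, hrs⟩ := nhds_basis_closedBall.mem_iff.1 (inter_mem (inter_mem hO hU) hl)
  refine mem_of_superset (ball_mem_nhds (h y) (ε := r / C / 2) (by positivity)) fun z hz => ?_
  obtain ⟨x, hx, hxz⟩ := exists_preimage (z := z) hr
    (fun x hx => hg x (hrs hx).1.2) (fun x hx => by
      have h1 : ‖x - y‖ ≤ C * ‖h x - h y‖ := (hrs (sphere_subset_closedBall hx)).2
      rw [mem_sphere, dist_eq_norm] at hx
      rw [mem_ball, dist_comm, dist_eq_norm] at hz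
      have h2 : r / C ≤ ‖h x - h y‖ := by
        rw [div_le_iff₀ hC]; linarith
      have h3 : ‖h x - h y‖ ≤ ‖h x - z‖ + ‖h y - z‖ := by
        have := norm_sub_le (h x - z) (h y - z)
        simpa using this
      linarith)
  exact ⟨x, (hrs (ball_subset_closedBall hx)).1.1, hxz⟩

lemma cover {h : E → E} {B : Set E} (hB : IsCompact B) (hc : ContinuousOn h B) {z : E} {r : ℝ}
    (hr : 0 < r)
    (hloc : ∀ b ∈ B, h b ∈ ball z r → ∃ O, IsOpen O ∧ b ∈ O ∧ O ⊆ B ∧ InjOn h O ∧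
      ∀ O' ⊆ O, IsOpen O' → IsOpen (h '' O')) :
    (∀ P ⊆ B, (∀ x ∈ P, h x ∈ ball z r) → IsPreconnected P → InjOn h P) ∧
    (∀ a ∈ B, h a ∈ ball z r → ∃ σ : E → E, ContinuousOn σ (ball z r) ∧ σ (h a) = a ∧
      ∀ w ∈ ball z r, σ w ∈ B ∧ h (σ w) = w) := by
  have : CompactSpace B := isCompact_iff_compactSpace.1 hB
  let p : B → E := fun b => h b
  have hp : Continuous p := continuousOn_iff_continuous_domRestrict.1 hc
  have hcov : IsCoveringMapOn p (ball z r) := by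
    refine IsCoveringMapOn.of_isLocalHomeomorphOn hp ?_
    rw [isLocalHomeomorphOn_iff_isOpenEmbedding_restrict]
    rintro ⟨b, hb⟩ hbs
    obtain ⟨O, hO, hbO, hOB, hinj, hop⟩ := hloc b hb hbs
    have hO1 : IsOpen ((↑) ⁻¹' O : Set B) := hO.preimage continuous_subtype_val
    refine ⟨(↑) ⁻¹' O, hO1.mem_nhds hbO, ?_⟩
    refine IsOpenEmbedding.of_continuous_injective_isOpenMap
      (hp.comp continuous_subtype_val) ?_ ?_
    · intro x y hxy
      exact Subtype.ext (Subtype.ext (hinj x.2 y.2 hxy))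
    · intro S hS
      have h1 : IsOpen ((↑) '' S : Set B) := hO1.isOpenMap_subtype_val S hS
      obtain ⟨T, hT, hTS⟩ := isOpen_induced_iff.1 h1
      have : (domRestrict ((↑) ⁻¹' O : Set B) p) '' S = h '' (T ∩ O) := by
        ext w
        constructor
        · rintro ⟨x, hx, rfl⟩
          refine ⟨x, ⟨?_, x.2⟩, rfl⟩
          have : x.1 ∈ ((↑) ⁻¹' T : Set B) := hTS ▸ ⟨x, hx, rfl⟩
          exact this
        · rintro ⟨x, ⟨hxT, hxO⟩, rfl⟩
          have : (⟨x, hOB hxO⟩ : B) ∈ ((↑) '' S : Set B) := by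
            rw [← hTS]; exact hxT
          obtain ⟨s, hs, hsx⟩ := this
          refine ⟨s, hs, ?_⟩
          show h s.1.1 = h x
          rw [hsx]
      rw [this]
      exact hop _ inter_subset_right (hT.inter hO)
  have : ContractibleSpace (ball z r) :=
    (convex_ball z r).contractibleSpace ⟨z, mem_ball_self hr⟩
  have : LocallyPathConnectedSpace (ball z r) := isOpen_ball.locallyPathConnectedSpace
  have hsec : ∀ a : B, h a ∈ ball z r → ∃ F : C(ball z r, B), 
      (∀ w, p (F w) = w) ∧ ∀ w : ball z r, w = h a → F w = a := by
    intro a ha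
    obtain ⟨F, ⟨hF1, hF2⟩, -⟩ := hcov.existsUnique_continuousMap_lifts
      (⟨Subtype.val, continuous_subtype_val⟩ : C(ball z r, E)) (a₀ := ⟨h a, ha⟩) (e₀ := a)
      rfl (fun a => a.2)
    refine ⟨F, fun w => congr_fun hF2 w, ?_⟩
    rintro ⟨w, hw⟩ rfl
    exact hF1
  constructor
  · intro P hPB hPs hP x hx y hy hxy
    obtain ⟨F, hF1, hF2⟩ := hsec ⟨x, hPB hx⟩ (hPs x hx)
    have : PreconnectedSpace P := isPreconnected_iff_preconnectedSpace.1 hP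
    let g1 : P → p ⁻¹' (ball z r) := fun q => ⟨⟨q, hPB q.2⟩, hPs q q.2⟩
    let g2 : P → p ⁻¹' (ball z r) := fun q => ⟨F ⟨h q, hPs q q.2⟩, by
      rw [mem_preimage, hF1]; exact hPs q q.2⟩
    have hcP : Continuous fun q : P => h q :=
      continuousOn_iff_continuous_domRestrict.1 (hc.mono hPB)
    have hg1 : Continuous g1 := by
      refine Continuous.subtype_mk (Continuous.subtype_mk continuous_subtype_val _) _
    have hg2 : Continuous g2 := by
      refine Continuous.subtype_mk (F.continuous.comp (Continuous.subtype_mk hcP _)) _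
    have heq : g1 = g2 := by
      refine hcov.isCoveringMap_restrictPreimage.eq_of_comp_eq hg1 hg2 ?_ ⟨x, hx⟩ ?_
      · funext q
        refine Subtype.ext ?_
        show h q = p _
        rw [hF1]
      · refine Subtype.ext ?_
        exact (hF2 _ rfl).symm
    have h1 := congr_arg (fun u => (u.1 : B)) (congr_fun heq ⟨y, hy⟩)
    have h2 : F ⟨h y, hPs y hy⟩ = ⟨x, hPB hx⟩ := hF2 _ hxy.symm
    have h3 : (⟨y, hPB hy⟩ : B) = ⟨x, hPB hx⟩ := h1.trans h2
    exact (congr_arg Subtype.val h3).symm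
  · intro a ha has
    obtain ⟨F, hF1, hF2⟩ := hsec ⟨a, ha⟩ has
    classical
    refine ⟨fun w => if hw : w ∈ ball z r then F ⟨w, hw⟩ else w, ?_, ?_, ?_⟩
    · rw [continuousOn_iff_continuous_domRestrict]
      convert continuous_subtype_val.comp F.continuous using 1
      funext w
      simp [-mem_ball]
    · simp only [dif_pos has]
      rw [hF2 _ rfl]
    · intro w hw
      simp only [dif_pos hw]
      exact ⟨(F _).2, hF1 _⟩

lemma cone {h : E → E} {D : E →L[ℝ] E} {x ν : E} (hD : HasFDerivAt h D x)
    (hb : Function.Bijective D) (hν : ν ≠ 0) {N : Set E} (hN : N ∈ 𝓝 x) :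
    ∃ K ⊆ N, IsPreconnected K ∧ (∀ a ∈ K, h a ∈ ball (h x + ν) ‖ν‖) ∧
      ∃ M ∈ 𝓝 x, ∀ a ∈ M, ∀ ε : ℝ, 0 < ε → h a = h x + ε • ν → a ∈ K := by
  obtain ⟨C, hC, hCD⟩ := exists_bound D hb
  have hν' : 0 < ‖ν‖ := norm_pos_iff.2 hν
  have hev := hD.isLittleO.def (c := 1 / (8 * C)) (by positivity)
  obtain ⟨δ, hδ, hδs⟩ := Metric.mem_nhds_iff.1 (inter_mem hN hev)
  have key : ∀ a ∈ ball x δ, ‖h a - h x - D (a - x)‖ ≤ ‖D (a - x)‖ / 8 := by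
    intro a ha
    have h1 : ‖h a - h x - D (a - x)‖ ≤ 1 / (8 * C) * ‖a - x‖ := (hδs ha).2
    have h2 : 1 / (8 * C) * ‖a - x‖ ≤ 1 / (8 * C) * (C * ‖D (a - x)‖) := by
      gcongr; exact hCD _
    have h3 : 1 / (8 * C) * (C * ‖D (a - x)‖) = ‖D (a - x)‖ / 8 := by field_simp
    linarith
  obtain ⟨s0, hs0, hs1, hs2⟩ : ∃ s0 > 0, s0 ≤ 1 ∧ 2 * C * s0 * ‖ν‖ ≤ δ := by
    refine ⟨min 1 (δ / (2 * C * ‖ν‖)), by positivity, min_le_left _ _, ?_⟩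
    have := min_le_right 1 (δ / (2 * C * ‖ν‖))
    rw [le_div_iff₀ (by positivity)] at this
    linarith
  have hKb : ∀ a s, s < s0 → 0 < s → ‖D (a - x) - s • ν‖ ≤ s * ‖ν‖ / 4 →
      a ∈ ball x δ ∧ ‖D (a - x)‖ ≤ 5 / 4 * (s * ‖ν‖) := by
    intro a s hs hs' has
    have h1 : ‖D (a - x)‖ ≤ ‖D (a - x) - s • ν‖ + ‖s • ν‖ := by
      simpa using norm_add_le (D (a - x) - s • ν) (s • ν)
    rw [norm_smul, Real.norm_of_nonneg hs'.le] at h1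
    have h2 : ‖D (a - x)‖ ≤ 5 / 4 * (s * ‖ν‖) := by linarith
    refine ⟨?_, h2⟩
    rw [mem_ball, dist_eq_norm]
    have h3 := hCD (a - x)
    have h4 : C * ‖D (a - x)‖ ≤ C * (5 / 4 * (s * ‖ν‖)) := by gcongr
    have h5 : C * (s * ‖ν‖) < C * (s0 * ‖ν‖) := by gcongr
    have h6 : 0 < C * (s * ‖ν‖) := by positivity
    linarith
  refine ⟨{a | ∃ s, 0 < s ∧ s < s0 ∧ ‖D (a - x) - s • ν‖ ≤ s * ‖ν‖ / 4}, ?_, ?_, ?_, ?_⟩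
  · rintro a ⟨s, h1, h2, h3⟩
    exact (hδs (hKb a s h2 h1 h3).1).1
  · refine Convex.isPreconnected ?_
    rintro a ⟨s, h1, h2, h3⟩ b ⟨t, g1, g2, g3⟩ α β hα hβ hαβ
    refine ⟨α * s + β * t, ?_, ?_, ?_⟩
    · rcases hα.eq_or_lt with h | h
      · have : β = 1 := by linarith
        subst h; subst this; simpa
      · have : 0 ≤ β * t := by positivity
        have : 0 < α * s := by positivity
        linarith
    · rcases hα.eq_or_lt with h | h
      · have : β = 1 := by linarith
        subst h; subst this; simpa
      · have : β * t ≤ β * s0 := by gcongr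
        have : α * s < α * s0 := by gcongr
        calc α * s + β * t < (α + β) * s0 := by linarith
          _ = s0 := by rw [hαβ, one_mul]
    · have e : D (α • a + β • b - x) - (α * s + β * t) • ν
          = α • (D (a - x) - s • ν) + β • (D (b - x) - t • ν) := by
        have : α • a + β • b - x = α • (a - x) + β • (b - x) := by
          rw [smul_sub, smul_sub]
          have : x = α • x + β • x := by rw [← add_smul, hαβ, one_smul]
          nth_rw 1 [this]
          abel
        rw [this, map_add, map_smul, map_smul]
        module
      rw [e]
      refine (norm_add_le _ _).trans ?_
      rw [norm_smul, norm_smul, Real.norm_of_nonneg hα, Real.norm_of_nonneg hβ]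
      have q1 := mul_le_mul_of_nonneg_left h3 hα
      have q2 := mul_le_mul_of_nonneg_left g3 hβ
      linarith
  · rintro a ⟨s, h1, h2, h3⟩
    obtain ⟨k1, k2⟩ := hKb a s h2 h1 h3
    have k3 := key a k1
    rw [mem_ball, dist_eq_norm]
    have e : h a - (h x + ν) = (h a - h x - D (a - x)) + (D (a - x) - s • ν) + (-(1 - s)) • ν := by
      module
    rw [e]
    refine (norm_add₃_le).trans_lt ?_
    rw [norm_smul, norm_neg, Real.norm_of_nonneg (by linarith)]
    have : 0 < s * ‖ν‖ := by positivity
    linarith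
  · have hcont : ∀ᶠ a in 𝓝 x, ‖h a - h x‖ < s0 * ‖ν‖ := by
      have : ContinuousAt (fun a => ‖h a - h x‖) x :=
        (hD.continuousAt.sub continuousAt_const).norm
      refine this.eventually_lt continuousAt_const ?_
      simp only [sub_self, norm_zero]; positivity
    refine ⟨_, inter_mem (ball_mem_nhds x hδ) hcont, ?_⟩
    rintro a ⟨ha1, ha2⟩ ε hε hae
    have e : h a - h x = ε • ν := by rw [hae]; abel
    have k := key a ha1
    rw [e] at k
    have ha2 : ‖h a - h x‖ < s0 * ‖ν‖ := ha2
    rw [e, norm_smul, Real.norm_of_nonneg hε.le] at ha2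
    have h1 : ‖D (a - x)‖ ≤ ‖ε • ν‖ + ‖ε • ν - D (a - x)‖ := by
      simpa using norm_sub_le (ε • ν) (ε • ν - D (a - x))
    rw [norm_smul, Real.norm_of_nonneg hε.le] at h1
    refine ⟨ε, hε, lt_of_mul_lt_mul_right ha2 hν'.le, ?_⟩
    rw [norm_sub_rev]
    have : 0 < ε * ‖ν‖ := by positivity
    linarith

lemma GoodOn.cover_hyp {h : E → E} {U : Set E} (hU : IsOpen U) (hg : GoodOn h U)
    {B : Set E} {b : E} (hbU : b ∈ U) (hbB : B ∈ 𝓝 b) (hi : ∃ O ∈ 𝓝 b, InjOn h O) :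
    ∃ O, IsOpen O ∧ b ∈ O ∧ O ⊆ B ∧ InjOn h O ∧
      ∀ O' ⊆ O, IsOpen O' → IsOpen (h '' O') := by
  obtain ⟨O, hO, hinj⟩ := hi
  obtain ⟨T, hTs, hT, hbT⟩ := _root_.mem_nhds_iff.1 (inter_mem (inter_mem hO hbB) (hU.mem_nhds hbU))
  refine ⟨T, hT, hbT, fun x hx => (hTs hx).1.2, hinj.mono fun x hx => (hTs hx).1.1, ?_⟩
  intro O' hO' hop
  rw [isOpen_iff_mem_nhds]
  rintro _ ⟨x, hx, rfl⟩
  exact hg.mem_nhds_image (hop.mem_nhds hx) (hU.mem_nhds (hTs (hO' hx)).2)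

lemma baire_step {h : E → E} {U : Set E} (hU : IsOpen U) (hg : GoodOn h U) {F : Set E}
    (hF : IsClosed F) (hne : (U ∩ F).Nonempty) :
    ∃ x₁ ∈ U ∩ F, ∃ δ > 0, ∃ k > (0 : ℝ), ∀ x ∈ U ∩ F, dist x x₁ < δ →
      ∀ x' ∈ U, dist x' x < 1 / k → ‖x' - x‖ ≤ k * ‖h x' - h x‖ := by
  have hGd : IsGδ (U ∩ F) := hU.isGδ.inter hF.isGδ
  have : BaireSpace (U ∩ F : Set E) := hGd.baireSpace_of_t2Space_locallyCompactSpace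
  have : Nonempty (U ∩ F : Set E) := hne.to_subtype
  let A : ℕ → Set (U ∩ F : Set E) := fun j =>
    {x | ∀ x' ∈ U, dist x' x < 1 / ((j : ℝ) + 1) → ‖x' - x‖ ≤ ((j : ℝ) + 1) * ‖h x' - h x‖}
  have hcont : Continuous fun x : (U ∩ F : Set E) => h x :=
    continuousOn_iff_continuous_domRestrict.1 (hg.continuousOn.mono inter_subset_left)
  have hA : ∀ j, IsClosed (A j) := by
    intro j
    have : A j = ⋂ x' ∈ U, ({x : (U ∩ F : Set E) | 1 / ((j : ℝ) + 1) ≤ dist x' x} ∪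
        {x : (U ∩ F : Set E) | ‖x' - x‖ ≤ ((j : ℝ) + 1) * ‖h x' - h x‖}) := by
      ext x
      simp only [A, mem_ofPred_eq, mem_iInter, mem_union]
      refine forall₂_congr fun x' _ => ?_
      rw [imp_iff_not_or, not_lt]
    rw [this]
    refine isClosed_biInter fun x' _ => IsClosed.union ?_ ?_
    · exact isClosed_le continuous_const (by fun_prop)
    · exact isClosed_le (by fun_prop) (continuous_const.mul (continuous_const.sub hcont).norm)
  have hun : ⋃ j, A j = univ := by
    refine eq_univ_of_forall fun x => ?_
    obtain ⟨D, hD, hb⟩ := hg x x.2.1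
    obtain ⟨C, hC, hl⟩ := lower_bound hD hb
    obtain ⟨ε, hε, hs⟩ := Metric.mem_nhds_iff.1 hl
    obtain ⟨j, hj⟩ := exists_nat_gt (max C (1 / ε))
    refine mem_iUnion.2 ⟨j, fun x' _ hd => ?_⟩
    have h1 : C < j := (le_max_left _ _).trans_lt hj
    have h2 : 1 / ε < j := (le_max_right _ _).trans_lt hj
    have h3 : 1 / ((j : ℝ) + 1) ≤ ε := by
      rw [div_le_iff₀ (by positivity)]
      rw [div_lt_iff₀ hε] at h2
      linarith
    have h4 : ‖x' - x‖ ≤ C * ‖h x' - h x‖ := hs (hd.trans_le h3)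
    refine h4.trans ?_
    gcongr
    linarith
  obtain ⟨j, x₁, hx₁⟩ := nonempty_interior_of_iUnion_of_closed hA hun
  obtain ⟨δ, hδ, hs⟩ := Metric.mem_nhds_iff.1 (mem_interior_iff_mem_nhds.1 hx₁)
  refine ⟨x₁, x₁.2, δ, hδ, (j : ℝ) + 1, by positivity, fun x hx hd => ?_⟩
  exact hs (show (⟨x, hx⟩ : (U ∩ F : Set E)) ∈ ball x₁ δ from hd)

lemma GoodOn.locally_injective {h : E → E} {U : Set E} (hU : IsOpen U) (hg : GoodOn h U) :
    ∀ y ∈ U, ∃ O ∈ 𝓝 y, InjOn h O := by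
  by_contra! hcon
  obtain ⟨y, hy, hyO⟩ := hcon
  let G : Set E := {y | ∃ O ∈ 𝓝 y, InjOn h O}
  have hG : IsOpen G := by
    rw [isOpen_iff_mem_nhds]
    rintro x ⟨O, hO, hi⟩
    filter_upwards [eventually_mem_nhds_iff.2 hO] with x' hx'
    exact ⟨O, hx', hi⟩
  obtain ⟨x₁, hx₁, δ, hδ, k, hk, hbd⟩ := baire_step hU hg hG.isClosed_compl
    ⟨y, hy, fun ⟨O, hO, hi⟩ => hyO O hO hi⟩
  obtain ⟨R, hR, hRU, hRδ, hRk⟩ : ∃ R > 0, closedBall x₁ R ⊆ U ∧ R < δ ∧ 2 * R < 1 / k := by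
    obtain ⟨R₀, hR₀, hs⟩ := nhds_basis_closedBall.mem_iff.1 (hU.mem_nhds hx₁.1)
    refine ⟨min R₀ (min (δ / 2) (1 / k / 4)), by positivity, ?_, ?_, ?_⟩
    · exact (closedBall_subset_closedBall (min_le_left _ _)).trans hs
    · have := (min_le_right R₀ (min (δ / 2) (1 / k / 4))).trans (min_le_left _ _)
      linarith
    · have := (min_le_right R₀ (min (δ / 2) (1 / k / 4))).trans (min_le_right _ _)
      have : 0 < 1 / k := by positivity
      linarith
  set B := closedBall x₁ R with hB
  have hBc : IsCompact B := isCompact_closedBall _ _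
  have hx₁B : x₁ ∈ B := mem_closedBall_self hR.le
  have hlow : ∀ x ∈ B ∩ Gᶜ, ∀ x' ∈ B, ‖x' - x‖ ≤ k * ‖h x' - h x‖ := by
    rintro x ⟨hx, hxG⟩ x' hx'
    refine hbd x ⟨hRU hx, hxG⟩ ((mem_closedBall.1 hx).trans_lt hRδ) x' (hRU hx') ?_
    have := dist_triangle_right x' x x₁
    have h1 := mem_closedBall.1 hx
    have h2 := mem_closedBall.1 hx'
    linarith
  have huniq : ∀ x ∈ B ∩ Gᶜ, ∀ x' ∈ B, h x' = h x → x' = x := by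
    intro x hx x' hx' he
    have := hlow x hx x' hx'
    rw [he, sub_self, norm_zero, mul_zero] at this
    exact sub_eq_zero.1 (norm_le_zero_iff.1 this)
  set ρ := R / k with hρ
  have hρ0 : 0 < ρ := by positivity
  have hint : ∀ x ∈ B, h x ∈ ball (h x₁) ρ → x ∈ ball x₁ R := by
    intro x hx hxs
    have h1 := hlow x₁ ⟨hx₁B, hx₁.2⟩ x hx
    rw [mem_ball, dist_eq_norm] at hxs ⊢
    rw [hρ, lt_div_iff₀ hk] at hxs
    linarith
  have hcB : ContinuousOn h B := hg.continuousOn.mono hRU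
  have hC : IsCompact (h '' (B ∩ Gᶜ)) :=
    (hBc.inter_right hG.isClosed_compl).image_of_continuousOn (hcB.mono inter_subset_left)
  -- two points with the same image
  obtain ⟨a, ha, b, hb, hab, hne⟩ : ∃ a ∈ B ∩ h ⁻¹' ball (h x₁) (ρ / 2),
      ∃ b ∈ B ∩ h ⁻¹' ball (h x₁) (ρ / 2), h a = h b ∧ a ≠ b := by
    by_contra! hcon
    refine hx₁.2 ⟨B ∩ h ⁻¹' ball (h x₁) (ρ / 2), inter_mem (closedBall_mem_nhds _ hR)
      ((hg.continuousAt hx₁.1).preimage_mem_nhds (ball_mem_nhds _ (by positivity))), ?_⟩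
    intro a ha b hb
    exact hcon a ha b hb
  set z := h a with hz
  obtain ⟨z₂, hz₂, hmin⟩ := hC.exists_isMinOn (f := fun w => dist z w)
    ⟨h x₁, x₁, ⟨hx₁B, hx₁.2⟩, rfl⟩ (by fun_prop)
  obtain ⟨x₂, hx₂, rfl⟩ := hz₂
  set r := dist z (h x₂) with hr
  have hr1 : r ≤ dist z (h x₁) := hmin ⟨x₁, ⟨hx₁B, hx₁.2⟩, rfl⟩
  have hz1 : dist z (h x₁) < ρ / 2 := ha.2
  have hr0 : 0 < r := by
    rw [hr, dist_pos]
    intro he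
    have e1 := huniq x₂ hx₂ a ha.1 he
    have e2 := huniq x₂ hx₂ b hb.1 (hab.symm.trans he)
    exact hne (e1.trans e2.symm)
  have hsub : ball z r ⊆ ball (h x₁) ρ := ball_subset_ball' (by linarith)
  obtain ⟨hinj, hsec⟩ := cover hBc hcB (z := z) hr0 (by
    intro c hc hcs
    refine hg.cover_hyp hU (hRU hc) ?_ ?_
    · exact mem_of_superset (isOpen_ball.mem_nhds (hint c hc (hsub hcs))) ball_subset_closedBall
    · by_contra hcG
      have : r ≤ dist z (h c) := hmin ⟨c, ⟨hc, hcG⟩, rfl⟩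
      rw [mem_ball, dist_comm] at hcs
      linarith)
  obtain ⟨σ, hσc, hσa, hσ⟩ := hsec a ha.1 (mem_ball_self hr0)
  obtain ⟨τ, hτc, hτb, hτ⟩ := hsec b hb.1 (by rw [← hab]; exact mem_ball_self hr0)
  have hx₂b : x₂ ∈ ball x₁ R := by
    refine hint x₂ hx₂.1 ?_
    have := dist_triangle_left (h x₂) (h x₁) z
    rw [mem_ball]
    linarith
  set ν := z - h x₂ with hν
  have hνr : ‖ν‖ = r := by rw [hr, dist_eq_norm]
  have hν0 : ν ≠ 0 := by rw [← norm_pos_iff, hνr]; exact hr0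
  obtain ⟨D, hD, hDb⟩ := hg x₂ (hRU hx₂.1)
  obtain ⟨K, hKB, hKc, hKs, M, hM, hMK⟩ := cone hD hDb hν0 (isOpen_ball.mem_nhds hx₂b)
  rw [hνr, show h x₂ + ν = z by rw [hν]; abel] at hKs
  -- choose ε
  have hK' : IsCompact (h '' (B \ interior M)) :=
    (hBc.diff isOpen_interior).image_of_continuousOn (hcB.mono sdiff_subset)
  have hnot : h x₂ ∉ h '' (B \ interior M) := by
    rintro ⟨x, hx, he⟩
    have := huniq x₂ hx₂ x hx.1 he
    subst this
    exact hx.2 (mem_interior_iff_mem_nhds.2 hM)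
  have hev : ∀ᶠ ε : ℝ in 𝓝[>] 0, h x₂ + ε • ν ∉ h '' (B \ interior M) := by
    have hc : Tendsto (fun ε : ℝ => h x₂ + ε • ν) (𝓝[>] 0) (𝓝 (h x₂)) := by
      have : Continuous (fun ε : ℝ => h x₂ + ε • ν) := by fun_prop
      have := (this.tendsto 0).mono_left (nhdsWithin_le_nhds (s := Ioi 0))
      simpa using this
    exact hc.eventually (hK'.isClosed.isOpen_compl.mem_nhds hnot)
  have hev2 : ∀ᶠ ε : ℝ in 𝓝[>] 0, ε ∈ Ioo (0 : ℝ) 1 := Ioo_mem_nhdsGT one_pos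
  obtain ⟨ε, hε, hε0, hε1⟩ := (hev.and hev2).exists
  set w := h x₂ + ε • ν with hw
  have hws : w ∈ ball z r := by
    rw [mem_ball, dist_eq_norm, show w - z = (-(1 - ε)) • ν by rw [hw, hν]; module, norm_smul,
      norm_neg, Real.norm_of_nonneg (by linarith), hνr]
    nlinarith
  have hmem : ∀ x ∈ B, h x = w → x ∈ K := by
    intro x hx hxw
    refine hMK x ?_ ε hε0 hxw
    by_contra hxM
    exact hε ⟨x, ⟨hx, fun h' => hxM (interior_subset h')⟩, hxw⟩
  have heq : σ w = τ w :=
    hinj K (hKB.trans ball_subset_closedBall) hKs hKc (hmem _ (hσ w hws).1 (hσ w hws).2)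
      (hmem _ (hτ w hws).1 (hτ w hws).2) ((hσ w hws).2.trans (hτ w hws).2.symm)
  have hpre : IsPreconnected (ball z r) := (convex_ball z r).isPreconnected
  have hPc : IsPreconnected (σ '' ball z r ∪ τ '' ball z r) :=
    (hpre.image σ hσc).union (σ w) ⟨w, hws, rfl⟩ ⟨w, hws, heq.symm⟩ (hpre.image τ hτc)
  refine hne (hinj _ ?_ ?_ hPc (Or.inl ⟨h a, mem_ball_self hr0, hσa⟩)
    (Or.inr ⟨h b, by rw [← hab]; exact mem_ball_self hr0, hτb⟩) hab)
  · rintro _ (⟨w, hw, rfl⟩ | ⟨w, hw, rfl⟩)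
    exacts [(hσ w hw).1, (hτ w hw).1]
  · rintro _ (⟨w, hw, rfl⟩ | ⟨w, hw, rfl⟩)
    · rw [(hσ w hw).2]; exact hw
    · rw [(hτ w hw).2]; exact hw

end aux

theorem implicit_function_theorem
    {n : ℕ} {X : Type*} [TopologicalSpace X] [LocallyPathConnectedSpace X] [T2Space X]
    {U : Set (EuclideanSpace ℝ (Fin n))} (hU : IsOpen U)
    (f : X × EuclideanSpace ℝ (Fin n) → EuclideanSpace ℝ (Fin n))
    (hf : ContinuousOn f ((Set.univ : Set X) ×ˢ U))
    (hdiff : ∀ x : X, ∀ y ∈ U,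
      ∃ D : EuclideanSpace ℝ (Fin n) →L[ℝ] EuclideanSpace ℝ (Fin n),
        HasFDerivAt (fun y' => f (x, y')) D y ∧ Function.Bijective D)
    (x₀ : X) (y₀ : EuclideanSpace ℝ (Fin n)) (hy₀ : y₀ ∈ U) :
    ∃ V ∈ nhds x₀, ∃ g : X → EuclideanSpace ℝ (Fin n),
      ContinuousOn g V ∧ g x₀ = y₀ ∧
      ∀ x ∈ V, g x ∈ U ∧ f (x, g x) = f (x₀, y₀) := by
  have hg : ∀ x, GoodOn (fun y => f (x, y)) U := hdiff
  have hfc : ∀ x, ∀ y ∈ U, ContinuousAt f (x, y) := fun x y hy =>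
    hf.continuousAt ((isOpen_univ.prod hU).mem_nhds ⟨mem_univ _, hy⟩)
  have hli := fun x => (hg x).locally_injective hU
  obtain ⟨O, hO, hOinj⟩ := hli x₀ y₀ hy₀
  obtain ⟨R, hR, hRs⟩ := nhds_basis_closedBall.mem_iff.1 (inter_mem hO (hU.mem_nhds hy₀))
  set B := closedBall y₀ R with hB
  have hBU : B ⊆ U := fun y hy => (hRs hy).2
  have hBc : IsCompact B := isCompact_closedBall _ _
  have hinjB : InjOn (fun y => f (x₀, y)) B := hOinj.mono fun y hy => (hRs hy).1
  have hy₀B : y₀ ∈ B := mem_closedBall_self hR.le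
  set z₀ := f (x₀, y₀) with hz₀
  have hcB : ∀ x, ContinuousOn (fun y => f (x, y)) B := fun x => (hg x).continuousOn.mono hBU
  obtain ⟨ρ, hρ, hρs⟩ : ∃ ρ > 0, ∀ y ∈ sphere y₀ R, ρ ≤ dist (f (x₀, y)) z₀ := by
    have hS : IsCompact ((fun y => f (x₀, y)) '' sphere y₀ R) :=
      (isCompact_sphere _ _).image_of_continuousOn ((hcB x₀).mono sphere_subset_closedBall)
    have hn : z₀ ∉ (fun y => f (x₀, y)) '' sphere y₀ R := by
      rintro ⟨y, hy, he⟩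
      have : y = y₀ := hinjB (sphere_subset_closedBall hy) hy₀B he
      subst this
      simp at hy
      linarith
    obtain ⟨ρ, hρ, hs⟩ := Metric.mem_nhds_iff.1 (hS.isClosed.isOpen_compl.mem_nhds hn)
    refine ⟨ρ, hρ, fun y hy => ?_⟩
    by_contra! hlt
    exact hs hlt ⟨y, hy, rfl⟩
  have hcov : ∀ x : X, ∀ ρ' > 0, (∀ y ∈ sphere y₀ R, ρ' ≤ dist (f (x, y)) z₀) → _ :=
    fun x ρ' hρ' hs => cover hBc (hcB x) (z := z₀) hρ' (by
      intro b hb hbs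
      refine (hg x).cover_hyp hU (hBU hb) ?_ (hli x b (hBU hb))
      rcases (mem_closedBall.1 hb).lt_or_eq with h1 | h1
      · exact mem_of_superset (isOpen_ball.mem_nhds h1) ball_subset_closedBall
      · exact absurd (hs b h1) (not_le.2 hbs))
  obtain ⟨σ, hσc, hσ0, hσ⟩ := (hcov x₀ ρ hρ hρs).2 y₀ hy₀B (mem_ball_self hρ)
  have hVnhds : ∀ᶠ x in 𝓝 x₀, ∀ y ∈ B, dist (f (x, y)) (f (x₀, y)) < ρ / 4 := by
    refine hBc.eventually_forall_of_forall_eventually fun y hy => ?_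
    have h1 : ContinuousAt (fun p : X × EuclideanSpace ℝ (Fin n) => f (x₀, p.2)) (x₀, y) :=
      ContinuousAt.comp (g := f) (hfc x₀ y (hBU hy)) (by fun_prop)
    have h2 : ContinuousAt (fun p : X × EuclideanSpace ℝ (Fin n) => dist (f p) (f (x₀, p.2)))
      (x₀, y) := (hfc x₀ y (hBU hy)).dist h1
    have h3 := h2.eventually_lt (continuousAt_const (y := ρ / 4)) (by simpa using by positivity)
    simpa [nhds_prod_eq] using h3
  set V := {x | ∀ y ∈ B, dist (f (x, y)) (f (x₀, y)) < ρ / 4} with hV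
  set P := σ '' ball z₀ (ρ / 2) with hP
  have hsubb : ball z₀ (ρ / 2) ⊆ ball z₀ ρ := ball_subset_ball (by linarith)
  have hPpre : IsPreconnected P :=
    (convex_ball z₀ (ρ / 2)).isPreconnected.image σ (hσc.mono hsubb)
  have hPB : P ⊆ B := by
    rintro _ ⟨w, hw, rfl⟩
    exact (hσ w (hsubb hw)).1
  have hsph : ∀ x ∈ V, ∀ y ∈ sphere y₀ R, 3 * ρ / 4 ≤ dist (f (x, y)) z₀ := by
    intro x hx y hy
    have h1 := hx y (sphere_subset_closedBall hy)
    have h2 := hρs y hy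
    have h3 := dist_triangle_left (f (x₀, y)) z₀ (f (x, y))
    linarith
  have hPinj : ∀ x ∈ V, InjOn (fun y => f (x, y)) P := by
    intro x hx
    refine (hcov x (3 * ρ / 4) (by positivity) (hsph x hx)).1 P hPB ?_ hPpre
    rintro _ ⟨w, hw, rfl⟩
    obtain ⟨h1, h2⟩ := hσ w (hsubb hw)
    have h3 := hx _ h1
    rw [h2] at h3
    rw [mem_ball] at hw ⊢
    have h4 := dist_triangle (f (x, σ w)) w z₀
    linarith
  have hPmem : ∀ x ∈ V, ∀ y ∈ B, f (x, y) = z₀ → y ∈ P := by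
    intro x hx y hy he
    have h1 := hx y hy
    rw [he, dist_comm] at h1
    have h2 : f (x₀, y) ∈ ball z₀ (ρ / 2) := by rw [mem_ball]; linarith
    refine ⟨f (x₀, y), h2, ?_⟩
    obtain ⟨h3, h4⟩ := hσ _ (hsubb h2)
    exact hinjB h3 hy h4
  have huniq : ∀ x ∈ V, ∀ y ∈ B, ∀ y' ∈ B, f (x, y) = z₀ → f (x, y') = z₀ → y = y' :=
    fun x hx y hy y' hy' h1 h2 =>
      hPinj x hx (hPmem x hx y hy h1) (hPmem x hx y' hy' h2) (h1.trans h2.symm)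
  have hex : ∀ x, ∃ y, x ∈ V → y ∈ B ∧ f (x, y) = z₀ := by
    intro x
    by_cases hx : x ∈ V
    · obtain ⟨y, hy, he⟩ := exists_preimage (h := fun y => f (x, y)) (z := z₀) hR
        (fun y hy => hg x y (hBU hy)) (by
          intro y hy
          have h1 := hx y₀ hy₀B
          have h2 := hsph x hx y hy
          rw [← dist_eq_norm, ← dist_eq_norm]
          linarith)
      exact ⟨y, fun _ => ⟨ball_subset_closedBall hy, he⟩⟩
    · exact ⟨y₀, fun h => absurd h hx⟩
  choose g hgx using hex
  have hx₀V : x₀ ∈ V := mem_of_mem_nhds hVnhds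
  refine ⟨V, hVnhds, g, ?_, ?_, fun x hx => ⟨hBU (hgx x hx).1, (hgx x hx).2⟩⟩
  · intro x hx
    rw [ContinuousWithinAt, tendsto_def]
    intro M hM
    have hev : ∀ᶠ x' in 𝓝 x, ∀ y ∈ B \ interior M, f (x', y) ≠ z₀ := by
      refine (hBc.diff isOpen_interior).eventually_forall_of_forall_eventually fun y hy => ?_
      have hne : f (x, y) ≠ z₀ := by
        intro he
        have := huniq x hx y hy.1 (g x) (hgx x hx).1 he (hgx x hx).2
        exact hy.2 (this ▸ mem_interior_iff_mem_nhds.2 hM)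
      have := (hfc x y (hBU hy.1)).eventually_ne hne
      simpa [nhds_prod_eq] using this
    filter_upwards [mem_nhdsWithin_of_mem_nhds hev, self_mem_nhdsWithin] with x' h1 h2
    by_contra hxM
    exact h1 (g x') ⟨(hgx x' h2).1, fun h' => hxM (interior_subset (s := M) h')⟩ (hgx x' h2).2
  · exact huniq x₀ hx₀V _ (hgx x₀ hx₀V).1 _ hy₀B (hgx x₀ hx₀V).2 rfl
end

section
/- Let I × V × W be an open neighborhood of (t₀, x₀, y₀) in ℝ × ℝⁿ × ℝⁿ and let F : I × V × W → ℝⁿ be a continuous map with F(t₀, x₀, y₀) = 0. Suppose that for every (t, x) ∈ I × V the map y ↦ F(t, x, y) from W to ℝⁿ is differentiable (not necessarily C¹) and without critical points, i.e. at every y ∈ W it has a Fréchet derivative that is a bijective linear map ℝⁿ → ℝⁿ. Then there exist ε > 0 and a differentiable function φ : (t₀ − ε, t₀ + ε) → ℝⁿ such that φ(t₀) = x₀, φ′(t₀) = y₀, and for all t ∈ (t₀ − ε, t₀ + ε): φ(t) ∈ V, φ′(t) ∈ W, and F(t, φ(t), φ′(t)) = 0. -/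
namespace ImplODE

open Set Filter Topology Metric

set_option linter.unusedSectionVars false

lemma cov_inj {P B A : Type*} [TopologicalSpace P] [TopologicalSpace B] [TopologicalSpace A]
    [SimplyConnectedSpace B] [LocallyPathConnectedSpace B] [PreconnectedSpace A] {p : P → B}
    (cov : IsCoveringMap p) (h : A → P) (hc : Continuous h) (a b : A) (hab : p (h a) = p (h b)) :
    h a = h b := by
  obtain ⟨g, ⟨hg0, hg1⟩, -⟩ := cov.existsUnique_continuousMap_lifts (ContinuousMap.id B) (p (h a))
    (h a) rfl
  have key : h = g ∘ p ∘ h := by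
    refine cov.eq_of_comp_eq hc (g.continuous.comp (cov.continuous.comp hc)) ?_ a ?_
    · ext x
      have := congrFun hg1 (p (h x))
      simpa using this.symm
    · simp [hg0]
  have h2 := congrFun key b
  simp only [Function.comp] at h2
  rw [h2, ← hab, hg0]

lemma cov_two {P B : Type*} [TopologicalSpace P] [TopologicalSpace B]
    [SimplyConnectedSpace B] [LocallyPathConnectedSpace B] {p : P → B}
    (cov : IsCoveringMap p) (a b : P) (hne : a ≠ b) (hab : p a = p b) (w : B) :
    ∃ a' b', a' ≠ b' ∧ p a' = w ∧ p b' = w := by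
  obtain ⟨g, ⟨hg0, hg1⟩, -⟩ := cov.existsUnique_continuousMap_lifts (ContinuousMap.id B) (p a)
    a rfl
  obtain ⟨k, ⟨hk0, hk1⟩, -⟩ := cov.existsUnique_continuousMap_lifts (ContinuousMap.id B) (p b)
    b rfl
  refine ⟨g w, k w, fun h => hne ?_, congrFun hg1 w, congrFun hk1 w⟩
  have := cov.eq_of_comp_eq g.continuous k.continuous (hg1.trans hk1.symm) w h
  rw [← hg0, ← hk0, ← hab]
  exact congrFun this _

variable {E : Type*} [NormedAddCommGroup E] [InnerProductSpace ℝ E] [FiniteDimensional ℝ E]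

/-- local data: near `y`, inside `K`, `f` is injective and open. -/
def LocHomeo (f : E → E) (K : Set E) (y : E) : Prop :=
  ∃ U : Set E, IsOpen U ∧ y ∈ U ∧ U ⊆ K ∧ InjOn f U ∧ ∀ O ⊆ U, IsOpen O → IsOpen (f '' O)

lemma covering (f : E → E) (K : Set E) (hK : IsCompact K) (hf : ContinuousOn f K) (B : Set E)
    (h : ∀ y ∈ K, f y ∈ B → LocHomeo f K y) :
    IsCoveringMapOn (fun x : K => f x) B := by
  have : CompactSpace K := isCompact_iff_compactSpace.mp hK
  have hc : Continuous (fun x : K => f x) := continuousOn_iff_continuous_domRestrict.mp hf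
  refine IsCoveringMapOn.of_isLocalHomeomorphOn hc ?_
  rw [isLocalHomeomorphOn_iff_isOpenEmbedding_restrict]
  rintro ⟨y, hy⟩ hyB
  obtain ⟨U, hU, hyU, hUK, hinj, hop⟩ := h y hy hyB
  refine ⟨Subtype.val ⁻¹' U, (hU.preimage continuous_subtype_val).mem_nhds hyU, ?_⟩
  refine .of_continuous_injective_isOpenMap (hc.comp continuous_subtype_val) ?_ ?_
  · rintro ⟨⟨a, ha⟩, ha'⟩ ⟨⟨b, hb⟩, hb'⟩ hab
    have := hinj ha' hb' hab
    subst this; rfl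
  · intro O hO
    obtain ⟨O1, hO1, rfl⟩ := isOpen_induced_iff.mp hO
    obtain ⟨O2, hO2, rfl⟩ := isOpen_induced_iff.mp hO1
    convert hop (U ∩ O2) inter_subset_left (hU.inter hO2) using 1
    ext z
    constructor
    · rintro ⟨⟨⟨a, ha⟩, ha'⟩, h1, rfl⟩
      exact ⟨a, ⟨ha', h1⟩, rfl⟩
    · rintro ⟨a, ⟨h1, h2⟩, rfl⟩
      exact ⟨⟨⟨a, hUK h1⟩, h1⟩, h2, rfl⟩

lemma ball_inst (c : E) {η : ℝ} (hη : 0 < η) :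
    SimplyConnectedSpace (ball c η) ∧ LocallyPathConnectedSpace (ball c η) := by
  have : ContractibleSpace (ball c η) :=
    (convex_ball c η).contractibleSpace (nonempty_ball.mpr hη)
  exact ⟨inferInstance, isOpen_ball.locallyPathConnectedSpace⟩

lemma key_inj (f : E → E) (K : Set E) (hK : IsCompact K) (hf : ContinuousOn f K) (c : E) (η : ℝ)
    (h : ∀ y ∈ K, f y ∈ ball c η → LocHomeo f K y)
    (S : Set E) (hS : IsPreconnected S) (hSK : S ⊆ K) (hSB : ∀ y ∈ S, f y ∈ ball c η) :
    InjOn f S := by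
  intro a ha b hb hab
  have hη : 0 < η := pos_of_mem_ball (hSB a ha)
  obtain ⟨_, _⟩ := ball_inst c hη
  have := isPreconnected_iff_preconnectedSpace.mp hS
  have cov := (covering f K hK hf _ h).isCoveringMap_restrictPreimage
  have := cov_inj cov (fun x : S => ⟨⟨x, hSK x.2⟩, hSB x x.2⟩) (by fun_prop) ⟨a, ha⟩ ⟨b, hb⟩
    (Subtype.ext hab)
  simpa using this

lemma key_two (f : E → E) (K : Set E) (hK : IsCompact K) (hf : ContinuousOn f K) (c : E) (η : ℝ)
    (h : ∀ y ∈ K, f y ∈ ball c η → LocHomeo f K y)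
    (a b : E) (ha : a ∈ K) (hb : b ∈ K) (hne : a ≠ b) (hab : f a = f b) (hB : f a ∈ ball c η)
    (w : E) (hw : w ∈ ball c η) :
    ∃ a' ∈ K, ∃ b' ∈ K, a' ≠ b' ∧ f a' = w ∧ f b' = w := by
  have hη : 0 < η := pos_of_mem_ball hw
  obtain ⟨_, _⟩ := ball_inst c hη
  have cov := (covering f K hK hf _ h).isCoveringMap_restrictPreimage
  obtain ⟨a', b', h1, h2, h3⟩ := cov_two cov ⟨⟨a, ha⟩, hB⟩ ⟨⟨b, hb⟩, by simpa [← hab] using hB⟩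
    (by simpa using hne) (Subtype.ext hab) ⟨w, hw⟩
  refine ⟨a'.1.1, a'.1.2, b'.1.1, b'.1.2, fun h => h1 (Subtype.ext (Subtype.ext h)),
    congrArg Subtype.val h2, congrArg Subtype.val h3⟩

/-- differentiable with bijective derivative -/
def Reg (f : E → E) (y : E) : Prop :=
  ∃ D : E →L[ℝ] E, HasFDerivAt f D y ∧ Function.Bijective D

lemma Reg.lower {f : E → E} {y : E} (h : Reg f y) :
    ∃ c > 0, ∃ r > 0, ∀ x, dist x y < r → c * ‖x - y‖ ≤ ‖f x - f y‖ := by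
  obtain ⟨D, hD, hb⟩ := h
  obtain ⟨C, hC, hanti⟩ := LinearMap.exists_antilipschitzWith (D : E →ₗ[ℝ] E)
    (LinearMap.ker_eq_bot.mpr hb.1)
  have hC' : (0 : ℝ) < C := hC
  have hl := hD.isLittleO.def (c := (2 * C : ℝ)⁻¹) (by positivity)
  obtain ⟨r, hr, hh⟩ := Metric.eventually_nhds_iff.mp hl
  refine ⟨(2 * C : ℝ)⁻¹, by positivity, r, hr, fun x hx => ?_⟩
  have h1 := hh hx
  have h2 : ‖x - y‖ ≤ C * ‖D (x - y)‖ := by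
    have := hanti.le_mul_dist (x - y) 0
    simpa using this
  have h3 : ‖D (x - y)‖ ≤ ‖f x - f y‖ + ‖f x - f y - D (x - y)‖ := by
    have := norm_sub_le (f x - f y) (f x - f y - D (x - y))
    simpa using this
  have h4 : 2 * ((2 * C : ℝ)⁻¹ * ‖x - y‖) = (C : ℝ)⁻¹ * ‖x - y‖ := by field_simp
  have h5 : (C : ℝ)⁻¹ * ‖x - y‖ ≤ ‖D (x - y)‖ := by
    rw [inv_mul_le_iff₀ hC']; exact h2
  linarith

lemma exists_sol {f : E → E} {y₀ z : E} {r : ℝ} (hr : 0 < r)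
    (hc : ContinuousOn f (closedBall y₀ r)) (hreg : ∀ y ∈ ball y₀ r, Reg f y)
    (hs : ∀ y ∈ sphere y₀ r, ‖f y₀ - z‖ < ‖f y - z‖) : ∃ y ∈ ball y₀ r, f y = z := by
  obtain ⟨y, hy, hmin⟩ := (isCompact_closedBall y₀ r).exists_isMinOn
    (nonempty_closedBall.mpr hr.le) (f := fun y => ‖f y - z‖) (by fun_prop)
  have hy' : y ∈ ball y₀ r := by
    by_contra hn
    have : y ∈ sphere y₀ r := by
      simp only [mem_sphere, mem_closedBall, mem_ball, not_lt] at *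
      exact le_antisymm hy hn
    exact absurd (hmin (mem_closedBall_self hr.le)) (not_le.mpr (hs y this))
  refine ⟨y, hy', ?_⟩
  obtain ⟨D, hD, hb⟩ := hreg y hy'
  have hd : HasFDerivAt (fun x => ‖f x - z‖ ^ 2) _ y := (hD.sub_const z).norm_sq
  have hl : IsLocalMin (fun x => ‖f x - z‖ ^ 2) y := by
    filter_upwards [isOpen_ball.mem_nhds hy'] with x hx
    have := hmin (ball_subset_closedBall hx)
    exact pow_le_pow_left₀ (norm_nonneg _) this 2
  have h0 := hl.hasFDerivAt_eq_zero hd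
  obtain ⟨v, hv⟩ := hb.2 (f y - z)
  have := congrArg (fun L : E →L[ℝ] ℝ => L v) h0
  simp [hv, ← inner_sub_left] at this
  exact sub_eq_zero.mp this

lemma open_image {f : E → E} {O : Set E} (hO : IsOpen O) (hreg : ∀ y ∈ O, Reg f y) :
    IsOpen (f '' O) := by
  rw [Metric.isOpen_iff]
  rintro _ ⟨y, hy, rfl⟩
  obtain ⟨c, hc, r, hr, hlow⟩ := (hreg y hy).lower
  obtain ⟨r', hr', hsub⟩ := Metric.isOpen_iff.mp hO y hy
  set ρ := min r r' / 2 with hρ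
  have hm : 0 < min r r' := lt_min hr hr'
  have hρ0 : 0 < ρ := by positivity
  have h1 : ρ < r := by have := min_le_left r r'; linarith
  have h2 : ρ < r' := by have := min_le_right r r'; linarith
  have hcb : closedBall y ρ ⊆ O := (closedBall_subset_ball h2).trans hsub
  refine ⟨c * ρ / 2, by positivity, fun z hz => ?_⟩
  obtain ⟨x, hx, hxz⟩ := exists_sol (f := f) (z := z) hρ0
    (fun x hx => by
      obtain ⟨D, hD, -⟩ := hreg x (hcb hx)
      exact hD.continuousAt.continuousWithinAt)
    (fun x hx => hreg x (hcb (ball_subset_closedBall hx)))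
    (fun x hx => by
      have hx' : dist x y = ρ := hx
      have h3 := hlow x (by linarith)
      rw [← dist_eq_norm, ← dist_eq_norm, hx'] at h3
      rw [← dist_eq_norm, ← dist_eq_norm]
      rw [mem_ball] at hz
      have := dist_triangle (f x) z (f y)
      rw [dist_comm (f y) z]
      linarith)
  exact ⟨x, hcb (ball_subset_closedBall hx), hxz⟩


lemma Reg.cont {f : E → E} {y : E} (h : Reg f y) : ContinuousAt f y := by
  obtain ⟨D, hD, -⟩ := h
  exact hD.continuousAt

/-- set of points of local injectivity -/
def GG (f : E → E) : Set E := {x | ∃ U ∈ 𝓝 x, InjOn f U}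

lemma GG_open (f : E → E) : IsOpen (GG f) := by
  rw [isOpen_iff_mem_nhds]
  rintro x ⟨U, hU, hi⟩
  filter_upwards [eventually_mem_nhds_iff.mpr hU] with y hy
  exact ⟨U, hy, hi⟩

lemma locHomeo_of {f : E → E} {K O : Set E} {y : E} (hO : IsOpen O) (hyO : y ∈ O) (hOK : O ⊆ K)
    (hreg : ∀ y ∈ O, Reg f y) (hg : y ∈ GG f) : LocHomeo f K y := by
  obtain ⟨U, hU, hi⟩ := hg
  refine ⟨interior U ∩ O, isOpen_interior.inter hO, ⟨mem_interior_iff_mem_nhds.mpr hU, hyO⟩,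
    fun x hx => hOK hx.2, hi.mono fun x hx => interior_subset hx.1, fun O' h hO' => ?_⟩
  exact open_image hO' fun y hy => hreg y (h hy).2

lemma baire_step {f : E → E} {Ω : Set E} (hΩ : IsOpen Ω) (hreg : ∀ y ∈ Ω, Reg f y)
    (x : E) (hx : x ∈ Ω) (hxG : x ∉ GG f) :
    ∃ x₁ ∈ Ω, x₁ ∉ GG f ∧ ∃ c > 0, ∃ ρ > 0, ball x₁ ρ ⊆ Ω ∧
      ∀ e ∈ ball x₁ ρ, e ∉ GG f → ∀ y ∈ ball x₁ ρ, c * ‖y - e‖ ≤ ‖f y - f e‖ := by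
  set T : Set E := Ω ∩ (GG f)ᶜ with hT
  have hlc : IsLocallyClosed T := hΩ.isLocallyClosed.inter (GG_open f).isClosed_compl.isLocallyClosed
  have : LocallyCompactSpace T := hlc.locallyCompactSpace
  have : Nonempty T := ⟨⟨x, hx, hxG⟩⟩
  let A : ℕ → Set T := fun n => {e | ∀ y ∈ Ω, dist y e < 1 / ((n : ℝ) + 1) →
    1 / ((n : ℝ) + 1) * ‖y - e‖ ≤ ‖f y - f e‖}
  have hfc : Continuous fun e : T => f e := by
    rw [continuous_iff_continuousAt]
    rintro ⟨e, he⟩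
    exact ContinuousAt.comp (hreg e he.1).cont continuous_subtype_val.continuousAt
  have hA : ∀ n, IsClosed (A n) := by
    intro n
    have : A n = ⋂ y ∈ Ω, ({e : T | 1 / ((n : ℝ) + 1) ≤ dist y e} ∪
        {e : T | 1 / ((n : ℝ) + 1) * ‖y - e‖ ≤ ‖f y - f e‖}) := by
      ext e
      simp only [A, mem_iInter, mem_union, Set.mem_ofPred_eq]
      refine forall₂_congr fun y hy => ?_
      rw [imp_iff_not_or, not_lt]
    rw [this]
    refine isClosed_biInter fun y hy => IsClosed.union ?_ ?_
    · exact isClosed_le (by fun_prop) (by fun_prop)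
    · exact isClosed_le (by fun_prop) (continuous_const.sub hfc).norm
  have hU : ⋃ n, A n = univ := by
    rw [eq_univ_iff_forall]
    rintro ⟨e, he⟩
    obtain ⟨c, hc, r, hr, h⟩ := (hreg e he.1).lower
    obtain ⟨n, hn⟩ := exists_nat_one_div_lt (lt_min hc hr)
    rw [lt_min_iff] at hn
    refine mem_iUnion.mpr ⟨n, fun y hy hd => ?_⟩
    refine le_trans ?_ (h y (hd.trans hn.2))
    gcongr
    exact hn.1.le
  obtain ⟨n, ⟨⟨x₁, hx₁⟩, hx₁i⟩⟩ := nonempty_interior_of_iUnion_of_closed hA hU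
  rw [mem_interior_iff_mem_nhds, Metric.mem_nhds_iff] at hx₁i
  obtain ⟨δ, hδ, hsub⟩ := hx₁i
  obtain ⟨r', hr', hsub'⟩ := Metric.isOpen_iff.mp hΩ x₁ hx₁.1
  have hn : (0 : ℝ) < 1 / ((n : ℝ) + 1) := by positivity
  refine ⟨x₁, hx₁.1, hx₁.2, 1 / ((n : ℝ) + 1), hn, min (min δ r') (1 / ((n : ℝ) + 1) / 2),
    by positivity, (ball_subset_ball ((min_le_left _ _).trans (min_le_right _ _))).trans hsub', ?_⟩
  intro e he heG y hy
  simp only [mem_ball, lt_min_iff] at he hy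
  have heΩ : e ∈ Ω := hsub' he.1.2
  have := hsub (show (⟨e, heΩ, heG⟩ : T) ∈ ball ⟨x₁, hx₁⟩ δ from he.1.1)
  refine this y (hsub' hy.1.2) ?_
  have h3 := dist_triangle_right y e x₁
  simp only
  linarith [he.2, hy.2]

lemma contra_step {f : E → E} {x₁ : E} {c ρ : ℝ} (hc : 0 < c) (hρ : 0 < ρ)
    (hreg : ∀ y ∈ ball x₁ ρ, Reg f y) (hG : x₁ ∉ GG f)
    (hlow : ∀ e ∈ ball x₁ ρ, e ∉ GG f → ∀ y ∈ ball x₁ ρ, c * ‖y - e‖ ≤ ‖f y - f e‖) : False := by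
  set K := closedBall x₁ (ρ / 2) with hKdef
  have hKb : K ⊆ ball x₁ ρ := closedBall_subset_ball (by linarith)
  have hK : IsCompact K := isCompact_closedBall _ _
  have hfK : ContinuousOn f K := fun y hy => (hreg y (hKb hy)).cont.continuousWithinAt
  have hx₁ : x₁ ∈ K := mem_closedBall_self (by linarith)
  -- two points with the same image
  have hnb : ball x₁ (ρ / 2) ∩ f ⁻¹' ball (f x₁) (c * ρ / 4) ∈ 𝓝 x₁ :=
    inter_mem (ball_mem_nhds _ (by linarith))
      ((hreg x₁ (hKb hx₁)).cont (ball_mem_nhds _ (by positivity)))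
  have hni : ¬ InjOn f (ball x₁ (ρ / 2) ∩ f ⁻¹' ball (f x₁) (c * ρ / 4)) := fun h => hG ⟨_, hnb, h⟩
  simp only [InjOn, not_forall] at hni
  obtain ⟨a, ⟨ha, haf⟩, b, ⟨hb, hbf⟩, hab, hne⟩ := hni
  have haK : a ∈ K := ball_subset_closedBall ha
  have hbK : b ∈ K := ball_subset_closedBall hb
  set z := f a with hz
  -- nearest point
  have hTc : IsCompact (K ∩ (GG f)ᶜ) := hK.inter_right (GG_open f).isClosed_compl
  obtain ⟨e, ⟨heK, heG⟩, hmin⟩ := hTc.exists_isMinOn ⟨x₁, hx₁, hG⟩ (f := fun e => ‖z - f e‖)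
    (continuousOn_const.sub (hfK.mono inter_subset_left)).norm
  have hτ : ‖z - f e‖ < c * ρ / 4 := by
    have h1 : ‖z - f e‖ ≤ ‖z - f x₁‖ := hmin ⟨hx₁, hG⟩
    have h2 : dist z (f x₁) < c * ρ / 4 := haf
    rw [dist_eq_norm] at h2
    linarith
  set η := z - f e with hη
  have hη0 : 0 < ‖η‖ := by
    rw [norm_pos_iff]
    intro h0
    have h1 := hlow e (hKb heK) heG a (hKb haK)
    have h2 := hlow e (hKb heK) heG b (hKb hbK)
    rw [← hz, ← hη, h0, norm_zero] at h1
    rw [← hab, ← hη, h0, norm_zero] at h2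
    have h3 : ‖a - e‖ = 0 := le_antisymm (by
      by_contra hh; push Not at hh; have := mul_pos hc hh; linarith) (norm_nonneg _)
    have h4 : ‖b - e‖ = 0 := le_antisymm (by
      by_contra hh; push Not at hh; have := mul_pos hc hh; linarith) (norm_nonneg _)
    rw [norm_eq_zero, sub_eq_zero] at h3 h4
    exact hne (h3.trans h4.symm)
  have hloc : ∀ y ∈ K, f y ∈ ball z ‖η‖ → LocHomeo f K y := by
    intro y hy hyB
    rw [mem_ball, dist_eq_norm] at hyB
    have hyb : y ∈ ball x₁ (ρ / 2) := by
      by_contra hn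
      have hd : ρ / 2 ≤ ‖y - x₁‖ := by
        rw [← dist_eq_norm]; simpa using hn
      have h1 := hlow x₁ (hKb hx₁) hG y (hKb hy)
      have h2 : dist z (f x₁) < c * ρ / 4 := haf
      rw [dist_eq_norm] at h2
      have h3 : ‖f y - f x₁‖ ≤ ‖f y - z‖ + ‖z - f x₁‖ := norm_sub_le_norm_sub_add_norm_sub _ _ _
      have h4 : c * (ρ / 2) ≤ c * ‖y - x₁‖ := by gcongr
      linarith
    refine locHomeo_of isOpen_ball hyb ball_subset_closedBall
      (fun y hy => hreg y (hKb (ball_subset_closedBall hy))) ?_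
    by_contra hn
    have h1 : ‖z - f e‖ ≤ ‖z - f y‖ := hmin ⟨hy, hn⟩
    rw [norm_sub_rev z (f y), ← hη] at h1
    linarith
  obtain ⟨D, hD, -⟩ := hreg e (hKb heK)
  have hl := hD.isLittleO.def (c := c / 4) (by positivity)
  obtain ⟨δ, hδ, hh⟩ := Metric.eventually_nhds_iff.mp hl
  obtain ⟨t, ht0, ht1, htδ⟩ : ∃ t : ℝ, 0 < t ∧ t < 1 ∧ t * ‖η‖ / c < δ := by
    refine ⟨min (1 / 2) (δ * c / ‖η‖ / 2), by positivity, ?_, ?_⟩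
    · exact lt_of_le_of_lt (min_le_left _ _) (by norm_num)
    · have : min (1 / 2) (δ * c / ‖η‖ / 2) * ‖η‖ / c ≤ (δ * c / ‖η‖ / 2) * ‖η‖ / c := by
        gcongr; exact min_le_right _ _
      refine this.trans_lt ?_
      have : (δ * c / ‖η‖ / 2) * ‖η‖ / c = δ / 2 := by field_simp
      linarith
  obtain ⟨a', ha', b', hb', hne', hfa, hfb⟩ := key_two f K hK hfK z ‖η‖ hloc a b haK hbK hne hab
    (mem_ball_self hη0) (f e + t • η) (by
      rw [mem_ball, dist_eq_norm]
      have : f e + t • η - z = -((1 - t) • η) := by rw [hη]; module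
      rw [this, norm_neg, norm_smul, Real.norm_eq_abs, abs_of_pos (by linarith)]
      nlinarith)
  set S := {y : E | ‖y - e‖ ≤ t * ‖η‖ / c ∧ ‖D (y - e) - t • η‖ ≤ t * ‖η‖ / 4} with hS
  have hSc : Convex ℝ S := by
    have h1 : Convex ℝ (closedBall e (t * ‖η‖ / c)) := convex_closedBall _ _
    have h2 : Convex ℝ ((fun y => D y) ⁻¹' closedBall (D e + t • η) (t * ‖η‖ / 4)) :=
      (convex_closedBall _ _).is_linear_preimage D.isBoundedLinearMap.toIsLinearMap
    convert h1.inter h2 using 1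
    ext y
    simp only [hS, mem_inter_iff, mem_preimage, mem_closedBall, dist_eq_norm, map_sub,
      Set.mem_ofPred_eq, sub_sub]
  have hmem : ∀ y ∈ K, f y = f e + t • η → y ∈ S := by
    intro y hy hfy
    have h1 := hlow e (hKb heK) heG y (hKb hy)
    have h2 : f y - f e = t • η := by rw [hfy]; abel
    rw [h2, norm_smul, Real.norm_eq_abs, abs_of_pos ht0] at h1
    have h3 : ‖y - e‖ ≤ t * ‖η‖ / c := by
      rw [le_div_iff₀ hc]; linarith
    refine ⟨h3, ?_⟩
    have h4 := hh (show dist y e < δ by rw [dist_eq_norm]; linarith)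
    rw [h2, norm_sub_rev] at h4
    linarith
  have hseg : segment ℝ a' b' ⊆ S := hSc.segment_subset (hmem a' ha' hfa) (hmem b' hb' hfb)
  have hinj := key_inj f K hK hfK z ‖η‖ hloc (segment ℝ a' b') (convex_segment a' b').isPreconnected
    ((convex_closedBall _ _).segment_subset ha' hb') (by
      intro y hy
      obtain ⟨h1, h2⟩ := hseg hy
      have h4 := hh (show dist y e < δ by rw [dist_eq_norm]; linarith)
      rw [mem_ball, dist_eq_norm]
      have h5 : f y - z = (f y - f e - D (y - e)) + (D (y - e) - t • η) + -((1 - t) • η) := by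
        rw [hη]; module
      have h6 : ‖f y - z‖ ≤ ‖f y - f e - D (y - e)‖ + ‖D (y - e) - t • η‖ + ‖-((1 - t) • η)‖ := by
        rw [h5]; exact norm_add₃_le
      rw [norm_neg, norm_smul, Real.norm_eq_abs, abs_of_pos (by linarith : 0 < 1 - t)] at h6
      have h7 : c / 4 * ‖y - e‖ ≤ c / 4 * (t * ‖η‖ / c) := by gcongr
      have h8 : c / 4 * (t * ‖η‖ / c) = t * ‖η‖ / 4 := by field_simp
      have h9 := mul_pos ht0 hη0
      linarith)
  exact hne' (hinj (left_mem_segment _ _ _) (right_mem_segment _ _ _) (hfa.trans hfb.symm))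

lemma loc_inj {f : E → E} {Ω : Set E} (hΩ : IsOpen Ω) (hreg : ∀ y ∈ Ω, Reg f y) :
    Ω ⊆ GG f := by
  intro x hx
  by_contra hxG
  obtain ⟨x₁, -, hG, c, hc, ρ, hρ, hsub, hlow⟩ := baire_step hΩ hreg x hx hxG
  exact contra_step hc hρ (fun y hy => hreg y (hsub hy)) hG hlow


lemma impl_exists {P : Type*} [TopologicalSpace P] {F : P × E → E} {O : Set P} {W : Set E}
    (hO : IsOpen O) (hW : IsOpen W) (hF : ContinuousOn F (O ×ˢ W))
    (hreg : ∀ s ∈ O, ∀ y ∈ W, Reg (fun y => F (s, y)) y)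
    {s₁ : P} {y₁ : E} (hs : s₁ ∈ O) (hy : y₁ ∈ W) (h0 : F (s₁, y₁) = 0) {ρ : ℝ} (hρ : 0 < ρ) :
    ∀ᶠ s in 𝓝 s₁, ∃ y ∈ ball y₁ ρ, F (s, y) = 0 := by
  obtain ⟨c, hc, r, hr, hlow⟩ := (hreg s₁ hs y₁ hy).lower
  obtain ⟨r', hr', hsub⟩ := Metric.isOpen_iff.mp hW y₁ hy
  obtain ⟨R, hR0, hRr, hRr', hRρ⟩ : ∃ R, 0 < R ∧ R < r ∧ R < r' ∧ R < ρ := by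
    obtain ⟨R, h1, h2⟩ := exists_between (lt_min hr (lt_min hr' hρ))
    simp only [lt_min_iff] at h2
    exact ⟨R, h1, h2.1, h2.2.1, h2.2.2⟩
  have hcb : closedBall y₁ R ⊆ W := (closedBall_subset_ball hRr').trans hsub
  have hcont : ∀ y ∈ W, ContinuousAt F (s₁, y) := fun y hy =>
    hF.continuousAt ((hO.prod hW).mem_nhds ⟨hs, hy⟩)
  have e1 : ∀ᶠ s in 𝓝 s₁, ∀ y ∈ sphere y₁ R, c * R / 2 < ‖F (s, y)‖ := by
    refine (isCompact_sphere y₁ R).eventually_forall_of_forall_eventually fun y hyS => ?_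
    have hyd : dist y y₁ = R := hyS
    have h1 := hlow y (by linarith)
    rw [h0, sub_zero, ← dist_eq_norm, hyd] at h1
    have h2 : c * R / 2 < ‖F (s₁, y)‖ := by
      have := mul_pos hc hR0
      linarith
    exact (hcont y (hcb (sphere_subset_closedBall hyS))).norm.eventually (lt_mem_nhds h2)
  have e2 : ∀ᶠ s in 𝓝 s₁, ‖F (s, y₁)‖ < c * R / 2 := by
    have h1 : ContinuousAt (fun s => ‖F (s, y₁)‖) s₁ :=
      ContinuousAt.norm (ContinuousAt.comp (f := fun s => (s, y₁)) (hcont y₁ hy) (by fun_prop))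
    exact h1.eventually (gt_mem_nhds (by simp only [h0, norm_zero]; positivity))
  filter_upwards [e1, e2, hO.mem_nhds hs] with s h1 h2 h3
  obtain ⟨y, hyb, hy0⟩ := exists_sol (f := fun y => F (s, y)) (z := 0) hR0
    (fun y hy => (hreg s h3 y (hcb hy)).cont.continuousWithinAt)
    (fun y hy => hreg s h3 y (hcb (ball_subset_closedBall hy)))
    (fun y hy => by simpa using h2.trans (h1 y hy))
  exact ⟨y, ball_subset_ball hRρ.le hyb, hy0⟩

lemma impl_unique {P : Type*} [TopologicalSpace P] {F : P × E → E} {O : Set P} {W : Set E}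
    (hO : IsOpen O) (hW : IsOpen W) (hF : ContinuousOn F (O ×ˢ W))
    (hreg : ∀ s ∈ O, ∀ y ∈ W, Reg (fun y => F (s, y)) y)
    {s₁ : P} {y₁ : E} (hs : s₁ ∈ O) (hy : y₁ ∈ W) (h0 : F (s₁, y₁) = 0) :
    ∃ ρ > 0, ball y₁ ρ ⊆ W ∧ ∀ᶠ s in 𝓝 s₁, InjOn (fun y => F (s, y)) (ball y₁ ρ) := by
  obtain ⟨c, hc, r, hr, hlow⟩ := (hreg s₁ hs y₁ hy).lower
  obtain ⟨r', hr', hsub⟩ := Metric.isOpen_iff.mp hW y₁ hy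
  obtain ⟨R, hR0, hRr, hRr'⟩ : ∃ R, 0 < R ∧ R < r ∧ R < r' := by
    obtain ⟨R, h1, h2⟩ := exists_between (lt_min hr hr')
    simp only [lt_min_iff] at h2
    exact ⟨R, h1, h2.1, h2.2⟩
  have hcb : closedBall y₁ R ⊆ W := (closedBall_subset_ball hRr').trans hsub
  have hcont : ∀ y ∈ W, ContinuousAt F (s₁, y) := fun y hy =>
    hF.continuousAt ((hO.prod hW).mem_nhds ⟨hs, hy⟩)
  have e1 : ∀ᶠ s in 𝓝 s₁, ∀ y ∈ sphere y₁ R, c * R / 2 < ‖F (s, y)‖ := by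
    refine (isCompact_sphere y₁ R).eventually_forall_of_forall_eventually fun y hyS => ?_
    have hyd : dist y y₁ = R := hyS
    have h1 := hlow y (by linarith)
    rw [h0, sub_zero, ← dist_eq_norm, hyd] at h1
    have h2 : c * R / 2 < ‖F (s₁, y)‖ := by
      have := mul_pos hc hR0
      linarith
    exact (hcont y (hcb (sphere_subset_closedBall hyS))).norm.eventually (lt_mem_nhds h2)
  have e2 : ∀ᶠ p in 𝓝 (s₁, y₁), ‖F p‖ < c * R / 2 :=
    (hcont y₁ hy).norm.eventually (gt_mem_nhds (by simp only [h0, norm_zero]; positivity))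
  rw [nhds_prod_eq, eventually_prod_iff] at e2
  obtain ⟨p, hp, q, hq, hpq⟩ := e2
  obtain ⟨ρ', hρ', hq'⟩ := Metric.eventually_nhds_iff_ball.mp hq
  refine ⟨min ρ' R, lt_min hρ' hR0,
    (ball_subset_ball (min_le_right _ _)).trans (ball_subset_closedBall.trans hcb), ?_⟩
  filter_upwards [e1, hp, hO.mem_nhds hs] with s h1 h2 h3
  refine key_inj (fun y => F (s, y)) (closedBall y₁ R) (isCompact_closedBall _ _)
    (fun y hy => (hreg s h3 y (hcb hy)).cont.continuousWithinAt) 0 (c * R / 2) ?_ _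
    (convex_ball _ _).isPreconnected
    ((ball_subset_ball (min_le_right _ _)).trans ball_subset_closedBall) ?_
  · intro y hy hyB
    have hyb : y ∈ ball y₁ R := by
      by_contra hn
      have : y ∈ sphere y₁ R := by
        simp only [mem_sphere, mem_closedBall, mem_ball, not_lt] at *
        exact le_antisymm hy hn
      have := h1 y this
      rw [mem_ball, dist_zero_right] at hyB
      linarith
    exact locHomeo_of isOpen_ball hyb ball_subset_closedBall
      (fun y hy => hreg s h3 y (hcb (ball_subset_closedBall hy)))
      (loc_inj hW (hreg s h3) (hcb hy))
  · intro y hy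
    rw [mem_ball, dist_zero_right]
    exact hpq h2 (hq' y (ball_subset_ball (min_le_left _ _) hy))

lemma impl_fun {P : Type*} [TopologicalSpace P] {F : P × E → E} {O : Set P} {W : Set E}
    (hO : IsOpen O) (hW : IsOpen W) (hF : ContinuousOn F (O ×ˢ W))
    (hreg : ∀ s ∈ O, ∀ y ∈ W, Reg (fun y => F (s, y)) y)
    {s₁ : P} {y₁ : E} (hs : s₁ ∈ O) (hy : y₁ ∈ W) (h0 : F (s₁, y₁) = 0) :
    ∃ N ⊆ O, IsOpen N ∧ s₁ ∈ N ∧ ∃ g : P → E, ∃ M, (∀ s, ‖g s‖ ≤ M) ∧ g s₁ = y₁ ∧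
      ∀ s ∈ N, g s ∈ W ∧ F (s, g s) = 0 ∧ ContinuousAt g s := by
  classical
  obtain ⟨ρ, hρ, hρW, hu⟩ := impl_unique hO hW hF hreg hs hy h0
  have he := impl_exists hO hW hF hreg hs hy h0 hρ
  obtain ⟨N, hN, hNo, hsN⟩ := eventually_nhds_iff.mp ((hu.and he).and (hO.mem_nhds hs))
  let g : P → E := fun s => if h : ∃ y ∈ ball y₁ ρ, F (s, y) = 0 then h.choose else y₁
  have hgb : ∀ s, g s ∈ ball y₁ ρ := by
    intro s
    by_cases h : ∃ y ∈ ball y₁ ρ, F (s, y) = 0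
    · simp only [g, dif_pos h]; exact h.choose_spec.1
    · simp only [g, dif_neg h]; exact mem_ball_self hρ
  have hg0 : ∀ s ∈ N, F (s, g s) = 0 := by
    intro s hsN
    have h := (hN s hsN).1.2
    simp only [g, dif_pos h]; exact h.choose_spec.2
  have huniq : ∀ s ∈ N, ∀ y ∈ ball y₁ ρ, F (s, y) = 0 → y = g s := fun s hsN y hy hy0 =>
    (hN s hsN).1.1 hy (hgb s) (hy0.trans (hg0 s hsN).symm)
  refine ⟨N, fun s hs => (hN s hs).2, hNo, hsN, g, ‖y₁‖ + ρ, fun s => ?_,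
    (huniq s₁ hsN y₁ (mem_ball_self hρ) h0).symm,
    fun s hs' => ⟨hρW (hgb s), hg0 s hs', ?_⟩⟩
  · have h1 := hgb s
    rw [mem_ball, dist_eq_norm] at h1
    have := norm_le_norm_add_norm_sub' (g s) y₁
    linarith
  · rw [ContinuousAt, Metric.tendsto_nhds]
    intro ε hε
    have hb : 0 < ρ - dist (g s) y₁ := by have := hgb s; rw [mem_ball] at this; linarith
    filter_upwards [impl_exists hO hW hF hreg (hN s hs').2 (hρW (hgb s)) (hg0 s hs')
      (lt_min hε hb), hNo.mem_nhds hs'] with s' ⟨y, hyb, hy0⟩ hs'N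
    rw [mem_ball, lt_min_iff] at hyb
    rw [← huniq s' hs'N y ?_ hy0]
    · exact hyb.1
    · rw [mem_ball]
      have := dist_triangle y (g s) y₁
      linarith [hyb.2]

lemma euler (f : ℝ × E → E) (t₀ : ℝ) (x₀ : E) (h : ℝ) :
    ∃ X : ℤ → E, X 0 = x₀ ∧ ∀ j, ∃ i, (i = j ∨ i = j + 1) ∧
      X (j + 1) - X j = h • f (t₀ + i * h, X i) := by
  let P : ℕ → E := fun n => Nat.rec x₀ (fun n x => x + h • f (t₀ + n * h, x)) n
  let Q : ℕ → E := fun n => Nat.rec x₀ (fun n x => x - h • f (t₀ - n * h, x)) n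
  let X : ℤ → E := fun j => if 0 ≤ j then P j.toNat else Q (-j).toNat
  have hX1 : ∀ n : ℕ, X n = P n := fun n => by simp [X]
  have hX2 : ∀ n : ℕ, X (-n) = Q n := fun n => by
    rcases n with _ | n
    · simp [X, P, Q]
    · have : ¬ (0 : ℤ) ≤ -((n + 1 : ℕ) : ℤ) := by omega
      simp only [X, if_neg this, neg_neg, Int.toNat_natCast]
  refine ⟨X, by simp [X, P], fun j => ?_⟩
  rcases lt_or_ge j 0 with hj | hj
  · obtain ⟨n, rfl⟩ : ∃ n : ℕ, j = -((n + 1 : ℕ) : ℤ) := ⟨(-j - 1).toNat, by omega⟩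
    refine ⟨-(n : ℤ), Or.inr (by push_cast; ring), ?_⟩
    have e : -((n + 1 : ℕ) : ℤ) + 1 = -(n : ℤ) := by push_cast; ring
    rw [e, hX2, hX2]
    have : Q (n + 1) = Q n - h • f (t₀ - n * h, Q n) := rfl
    rw [this, sub_sub_cancel]
    congr 3
    push_cast; ring
  · obtain ⟨n, rfl⟩ : ∃ n : ℕ, j = n := ⟨j.toNat, by omega⟩
    refine ⟨n, Or.inl rfl, ?_⟩
    have e : (n : ℤ) + 1 = ((n + 1 : ℕ) : ℤ) := by push_cast; ring
    rw [e, hX1, hX1]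
    have : P (n + 1) = P n + h • f (t₀ + n * h, P n) := rfl
    rw [this, add_sub_cancel_left]
    push_cast; rfl

lemma euler_est {f : ℝ × E → E} {t₀ h : ℝ} (hh : 0 ≤ h) {X : ℤ → E}
    (hX : ∀ j, ∃ i, (i = j ∨ i = j + 1) ∧ X (j + 1) - X j = h • f (t₀ + i * h, X i))
    (a b : ℤ) (v : E) (ε : ℝ)
    (hv : ∀ i : ℤ, |i - a| ≤ |b - a| → ‖f (t₀ + i * h, X i) - v‖ ≤ ε) :
    ‖X b - X a - (b * h - a * h) • v‖ ≤ ε * |b * h - a * h| := by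
  have main : ∀ (m : ℕ) (a : ℤ), (∀ i : ℤ, a ≤ i → i ≤ a + m → ‖f (t₀ + i * h, X i) - v‖ ≤ ε) →
      ‖X (a + m) - X a - (m * h) • v‖ ≤ ε * (m * h) := by
    intro m a
    induction m with
    | zero => intro _; simp
    | succ m ih =>
      intro hi
      have h1 := ih fun i h1 h2 => hi i h1 (by push_cast; omega)
      obtain ⟨i, hij, hs⟩ := hX (a + m)
      have h2 := hi i (by omega) (by push_cast; omega)
      have e : a + ((m + 1 : ℕ) : ℤ) = a + m + 1 := by push_cast; ring
      have e2 : X (a + ((m + 1 : ℕ) : ℤ)) - X a - (((m + 1 : ℕ) : ℝ) * h) • v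
          = (X (a + m) - X a - (m * h) • v) + h • (f (t₀ + i * h, X i) - v) := by
        rw [e, smul_sub, ← hs]; push_cast; module
      rw [e2]
      refine (norm_add_le _ _).trans ?_
      rw [norm_smul, Real.norm_eq_abs, abs_of_nonneg hh]
      have h3 : h * ‖f (t₀ + i * h, X i) - v‖ ≤ h * ε := by gcongr
      push_cast
      linarith
  rcases le_total a b with hab | hab
  · obtain ⟨m, rfl⟩ : ∃ m : ℕ, b = a + m := ⟨(b - a).toNat, by omega⟩
    have h1 := main m a fun i h1 h2 => hv i (by rw [abs_of_nonneg (by omega), abs_of_nonneg (by omega)]; omega)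
    have e : (((a + m : ℤ) : ℝ) * h - a * h) = m * h := by push_cast; ring
    rw [e, abs_of_nonneg (by positivity)]
    exact h1
  · obtain ⟨m, rfl⟩ : ∃ m : ℕ, a = b + m := ⟨(a - b).toNat, by omega⟩
    have h1 := main m b fun i h1 h2 => hv i (by rw [abs_of_nonpos (by omega), abs_of_nonpos (by omega)]; omega)
    have e : (b * h - ((b + m : ℤ) : ℝ) * h) = -(m * h) := by push_cast; ring
    rw [e, abs_neg, abs_of_nonneg (by positivity), ← norm_neg]
    have e3 : -(X b - X (b + m) - (-((m:ℝ) * h)) • v) = X (b + m) - X b - ((m:ℝ) * h) • v := by module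
    rw [e3]; exact h1

lemma peano (f : ℝ × E → E) (M : ℝ) (hM : ∀ p, ‖f p‖ ≤ M) (t₀ : ℝ) (x₀ : E) :
    ∃ φ : ℝ → E, φ t₀ = x₀ ∧ Continuous φ ∧
      ∀ t, ContinuousAt f (t, φ t) → HasDerivAt φ (f (t, φ t)) t := by
  have hM0 : 0 ≤ M := (norm_nonneg _).trans (hM (t₀, x₀))
  let h : ℕ → ℝ := fun k => 1 / ((k : ℝ) + 1)
  have hpos : ∀ k, 0 < h k := fun k => by positivity
  choose X hX0 hX using fun k => euler f t₀ x₀ (h k)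
  let N : ℕ → ℝ → ℤ := fun k t => ⌊(t - t₀) / h k⌋
  have hN1 : ∀ k t, N k t * h k ≤ t - t₀ := fun k t => by
    rw [← le_div_iff₀ (hpos k)]; exact Int.floor_le _
  have hN2 : ∀ k t, t - t₀ < N k t * h k + h k := fun k t => by
    have := Int.lt_floor_add_one ((t - t₀) / h k)
    rw [div_lt_iff₀ (hpos k)] at this
    linarith
  have hl : ∀ k (a b : ℤ), ‖X k b - X k a‖ ≤ M * |b * h k - a * h k| := fun k a b => by
    simpa using euler_est (hpos k).le (hX k) a b 0 M (fun i _ => by simpa using hM _)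
  let U : Ultrafilter ℕ := hyperfilter ℕ
  have hU : (U : Filter ℕ) ≤ atTop := Nat.hyperfilter_le_atTop
  have hh0 : Tendsto h U (𝓝 0) := (tendsto_one_div_add_atTop_nhds_zero_nat (𝕜 := ℝ)).mono_left hU
  have hσ : ∀ t, Tendsto (fun k => N k t * h k) U (𝓝 (t - t₀)) := fun t => by
    have h1 : Tendsto (fun k => (t - t₀) - h k) U (𝓝 (t - t₀)) := by
      simpa using hh0.const_sub (t - t₀)
    exact tendsto_of_tendsto_of_tendsto_of_le_of_le h1 tendsto_const_nhds
      (fun k => by have := hN2 k t; simp only; linarith) (fun k => hN1 k t)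
  have hlim : ∀ t, ∃ x, Tendsto (fun k => X k (N k t)) U (𝓝 x) := fun t => by
    have hb : ∀ k, X k (N k t) ∈ closedBall x₀ (M * (|t - t₀| + 1)) := fun k => by
      rw [mem_closedBall, dist_eq_norm, ← hX0 k]
      refine (hl k 0 (N k t)).trans ?_
      gcongr
      have h1 : h k ≤ 1 := by
        simp only [h]; rw [div_le_one (by positivity)]; linarith [(Nat.cast_nonneg k : (0 : ℝ) ≤ k)]
      have := hN1 k t
      have := hN2 k t
      have := le_abs_self (t - t₀)
      have := neg_abs_le (t - t₀)
      rw [abs_le]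
      constructor <;> push_cast <;> linarith
    obtain ⟨x, -, hx⟩ := (isCompact_closedBall x₀ (M * (|t - t₀| + 1))).ultrafilter_le_nhds
      (U.map fun k => X k (N k t)) (by
        rw [le_principal_iff]
        exact Filter.mem_map.mpr (Filter.univ_mem' hb))
    exact ⟨x, hx⟩
  choose φ hφ using hlim
  have hLip : ∀ s t, ‖φ s - φ t‖ ≤ M * |s - t| := fun s t => by
    have h1 : Tendsto (fun k => ‖X k (N k s) - X k (N k t)‖) U (𝓝 ‖φ s - φ t‖) :=
      ((hφ s).sub (hφ t)).norm
    have h2 : Tendsto (fun k => M * |N k s * h k - N k t * h k|) U (𝓝 (M * |s - t|)) := by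
      have := (((hσ s).sub (hσ t)).abs).const_mul M
      simpa using this
    exact le_of_tendsto_of_tendsto' h1 h2 fun k => hl k _ _
  refine ⟨φ, ?_, ?_, ?_⟩
  · refine tendsto_nhds_unique (hφ t₀) ?_
    have : (fun k => X k (N k t₀)) = fun _ => x₀ := by
      funext k; simp [N, hX0]
    rw [this]; exact tendsto_const_nhds
  · have : LipschitzWith M.toNNReal φ := LipschitzWith.of_dist_le_mul fun s t => by
      rw [dist_eq_norm, Real.dist_eq, Real.coe_toNNReal _ hM0]; exact hLip s t
    exact this.continuous
  · intro t hc
    set v := f (t, φ t) with hv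
    rw [hasDerivAt_iff_isLittleO, Asymptotics.isLittleO_iff]
    intro ε hε
    obtain ⟨δ, hδ, hcδ⟩ := Metric.continuousAt_iff.mp hc ε hε
    set δ₁ := δ / (4 * (M + 1)) with hδ₁
    have hδ₁0 : 0 < δ₁ := by positivity
    have hδM : M * δ₁ + δ₁ = δ / 4 := by rw [hδ₁]; field_simp
    have hMδ : 0 ≤ M * δ₁ := by positivity
    filter_upwards [Metric.ball_mem_nhds t hδ₁0] with s hs
    rw [mem_ball, Real.dist_eq] at hs
    have h1 : Tendsto (fun k => ‖X k (N k s) - X k (N k t) - (N k s * h k - N k t * h k) • v‖) U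
        (𝓝 ‖φ s - φ t - (s - t) • v‖) := by
      have h3 := (hσ s).sub (hσ t)
      rw [sub_sub_sub_cancel_right] at h3
      exact (((hφ s).sub (hφ t)).sub (h3.smul_const v)).norm
    have h2 : Tendsto (fun k => ε * |N k s * h k - N k t * h k|) U (𝓝 (ε * |s - t|)) := by
      have := (((hσ s).sub (hσ t)).abs).const_mul ε
      simpa using this
    refine le_of_tendsto_of_tendsto h1 h2 ?_
    have e1 : ∀ᶠ k in U, h k < δ₁ / 2 := hh0.eventually (gt_mem_nhds (by positivity))
    have e2 : ∀ᶠ k in U, dist (X k (N k t)) (φ t) < δ / 4 :=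
      (Metric.tendsto_nhds.mp (hφ t)) _ (by positivity)
    filter_upwards [e1, e2] with k hk1 hk2
    refine euler_est (hpos k).le (hX k) _ _ _ _ fun i hi => ?_
    have a1 := hN1 k t
    have a2 := hN2 k t
    have a3 := hN1 k s
    have a4 := hN2 k s
    have hi' : |(i : ℝ) * h k - N k t * h k| ≤ |N k s * h k - N k t * h k| := by
      rw [← sub_mul, ← sub_mul, abs_mul, abs_mul]
      exact mul_le_mul_of_nonneg_right (by exact_mod_cast hi) (abs_nonneg _)
    have hst := abs_lt.mp hs
    have hd : |N k s * h k - N k t * h k| < 2 * δ₁ := by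
      rw [abs_lt]; constructor <;> linarith [hst.1, hst.2]
    have hlt := hi'.trans_lt hd
    have hX' := hl k (N k t) i
    have hX'' : M * |(i : ℝ) * h k - N k t * h k| ≤ M * (2 * δ₁) := by gcongr
    have := @hcδ (t₀ + i * h k, X k i) (by
      rw [Prod.dist_eq, max_lt_iff]
      constructor
      · rw [Real.dist_eq, abs_lt]
        have := abs_lt.mp hlt
        constructor <;> simp only <;> linarith [this.1, this.2]
      · have := dist_triangle (X k i) (X k (N k t)) (φ t)
        rw [dist_eq_norm (X k i) (X k (N k t))] at this
        simp only
        linarith)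
    rw [dist_eq_norm] at this
    exact this.le

end ImplODE

/-- Existence of solutions of the implicit ODE `F (t, x, x') = 0` when, for each `(t, x)`,
the map `y ↦ F (t, x, y)` is differentiable without critical points. -/
theorem implicit_ode_solution
    {n : ℕ} {I : Set ℝ} {V W : Set (EuclideanSpace ℝ (Fin n))}
    (hI : IsOpen I) (hV : IsOpen V) (hW : IsOpen W)
    {t₀ : ℝ} {x₀ y₀ : EuclideanSpace ℝ (Fin n)}
    (ht₀ : t₀ ∈ I) (hx₀ : x₀ ∈ V) (hy₀ : y₀ ∈ W)
    (F : ℝ × EuclideanSpace ℝ (Fin n) × EuclideanSpace ℝ (Fin n) → EuclideanSpace ℝ (Fin n))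
    (hF : ContinuousOn F (I ×ˢ V ×ˢ W))
    (hF0 : F (t₀, x₀, y₀) = 0)
    (hdiff : ∀ t ∈ I, ∀ x ∈ V, ∀ y ∈ W,
      ∃ D : EuclideanSpace ℝ (Fin n) →L[ℝ] EuclideanSpace ℝ (Fin n),
        HasFDerivAt (fun y' => F (t, x, y')) D y ∧ Function.Bijective D) :
    ∃ ε > (0 : ℝ), ∃ φ φ' : ℝ → EuclideanSpace ℝ (Fin n),
      φ t₀ = x₀ ∧ φ' t₀ = y₀ ∧
      ∀ t ∈ Set.Ioo (t₀ - ε) (t₀ + ε),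
        HasDerivAt φ (φ' t) t ∧ φ t ∈ V ∧ φ' t ∈ W ∧ F (t, φ t, φ' t) = 0 := by
  have hO : IsOpen (I ×ˢ V) := hI.prod hV
  let G : (ℝ × EuclideanSpace ℝ (Fin n)) × EuclideanSpace ℝ (Fin n) → EuclideanSpace ℝ (Fin n) :=
    fun p => F (p.1.1, p.1.2, p.2)
  have hG : ContinuousOn G ((I ×ˢ V) ×ˢ W) :=
    hF.comp (by fun_prop) fun p hp => ⟨hp.1.1, hp.1.2, hp.2⟩
  obtain ⟨N, hNO, hN, hsN, g, M, hM, hg0, hg⟩ := ImplODE.impl_fun hO hW hG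
    (fun s hs y hy => hdiff s.1 hs.1 s.2 hs.2 y hy) (s₁ := (t₀, x₀)) ⟨ht₀, hx₀⟩ hy₀ hF0
  obtain ⟨φ, hφ0, hφc, hφ⟩ := ImplODE.peano g M hM t₀ x₀
  have hopen : IsOpen {t | (t, φ t) ∈ N} := hN.preimage (by fun_prop)
  obtain ⟨ε, hε, hsub⟩ := Metric.isOpen_iff.mp hopen t₀ (by simpa [hφ0] using hsN)
  refine ⟨ε, hε, φ, fun t => g (t, φ t), hφ0, by simp only [hφ0, hg0], fun t ht => ?_⟩
  have htN : (t, φ t) ∈ N := hsub (by rw [Real.ball_eq_Ioo]; exact ht)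
  obtain ⟨h1, h2, h3⟩ := hg _ htN
  exact ⟨hφ t h3, (hNO htN).2, h1, h2⟩
end

section
/- (Differentiable Darboux theorem.) Let U be an open connected subset of ℝⁿ and let f : U → ℝⁿ be differentiable, i.e. at every x ∈ U there is a continuous linear map f′(x) : ℝⁿ → ℝⁿ with HasFDerivAt f (f′(x)) x. Suppose there exist α ∈ ℝ and points x₀, x₁ ∈ U such that det(f′(x₀) − α·id) < 0 and det(f′(x₁) − α·id) > 0. Then there exists x₂ ∈ U such that det(f′(x₂) − α·id) = 0 (i.e. α is an eigenvalue of f′(x₂)). -/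
open Metric Set Filter Topology MeasureTheory Polynomial
set_option linter.unusedSectionVars false

section
variable {E : Type*} [NormedAddCommGroup E] [InnerProductSpace ℝ E] [FiniteDimensional ℝ E]

theorem dd_det_poly (A : E →L[ℝ] E) : ∃ P : ℝ[X], P.natDegree ≤ Module.finrank ℝ E ∧
    ∀ t : ℝ, P.eval t = (ContinuousLinearMap.id ℝ E + t • A).det := by
  let b := Module.finBasis ℝ E
  let M := LinearMap.toMatrix b b (A : E →ₗ[ℝ] E)
  refine ⟨Matrix.det ((X : ℝ[X]) • M.map C + (1 : Matrix _ _ ℝ).map C), ?_, ?_⟩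
  · simpa using natDegree_det_X_add_C_le M 1
  · intro t
    have h1 : (ContinuousLinearMap.id ℝ E + t • A).det = Matrix.det (1 + t • M) := by
      rw [ContinuousLinearMap.det, ← LinearMap.det_toMatrix b]
      congr 1
      simp [M]
    rw [h1, ← coe_evalRingHom, RingHom.map_det]
    congr 1
    ext i j
    by_cases hij : i = j <;> simp [hij, add_comm] <;> ring

theorem dd_poly (A : E →L[ℝ] E) (a v : E) (N : ℕ) : ∃ P : ℝ[X],
    P.natDegree ≤ 2 * N + Module.finrank ℝ E ∧
    ∀ t : ℝ, P.eval t = (4 - ‖a + t • v‖ ^ 2) ^ N * (ContinuousLinearMap.id ℝ E + t • A).det := by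
  obtain ⟨P, hP, hP'⟩ := dd_det_poly A
  refine ⟨(C (4 - ‖a‖ ^ 2) - C (2 * inner ℝ a v) * X - C (‖v‖ ^ 2) * X ^ 2) ^ N * P, ?_, ?_⟩
  · refine natDegree_mul_le.trans (add_le_add ?_ hP)
    refine natDegree_pow_le.trans ?_
    rw [mul_comm]
    gcongr
    compute_degree
  · intro t
    rw [eval_mul, hP']
    congr 1
    rw [norm_add_sq_real]
    simp [norm_smul, inner_smul_right, mul_pow]
    ring

variable [MeasurableSpace E] [BorelSpace E]

theorem dd_small (u : E → E) (hu : Differentiable ℝ u) (M : ℝ) (hM : ∀ x, ‖fderiv ℝ u x‖ ≤ M)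
    (h0 : ∀ x, 1 ≤ ‖x‖ → u x = 0) (y : E) (N : ℕ) : ∃ t₀ : ℝ, 0 < t₀ ∧ ∀ t : ℝ, 0 < t → t < t₀ →
    ∫ x in ball (0 : E) 1, (4 - ‖x - y + t • u x‖ ^ 2) ^ N *
      (ContinuousLinearMap.id ℝ E + t • fderiv ℝ u x).det
     = ∫ x in ball (0 : E) 1, (4 - ‖x - y‖ ^ 2) ^ N := by
  have hcont : ∀ᶠ A in 𝓝 (ContinuousLinearMap.id ℝ E), 0 < A.det := by
    have := (ContinuousLinearMap.continuous_det (𝕜 := ℝ) (E := E)).tendsto (ContinuousLinearMap.id ℝ E)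
    refine this.eventually (lt_mem_nhds ?_)
    simp [ContinuousLinearMap.det]
  obtain ⟨δ, hδ, hdet⟩ := Metric.eventually_nhds_iff.1 hcont
  have hM0 : 0 ≤ M := (norm_nonneg _).trans (hM 0)
  refine ⟨min 1 δ / (M + 1), by positivity, fun t ht ht' => ?_⟩
  have htM : t * (M + 1) < min 1 δ := (lt_div_iff₀ (by positivity)).1 ht'
  have htM1 : t * M < 1 := by nlinarith [min_le_left 1 δ]
  have htM2 : t * M < δ := by nlinarith [min_le_right 1 δ]
  have hlip : ∀ x z, ‖u x - u z‖ ≤ M * ‖x - z‖ := fun x z =>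
    Convex.norm_image_sub_le_of_norm_fderiv_le (𝕜 := ℝ) (fun w _ => hu w) (fun w _ => hM w)
      convex_univ (mem_univ _) (mem_univ _)
  let h : E → E := fun x => x + t • u x
  have happ : ApproximatesLinearOn h
      ((ContinuousLinearEquiv.refl ℝ E : E ≃L[ℝ] E) : E →L[ℝ] E) univ ⟨t * M, by positivity⟩ := by
    intro x _ z _
    have : h x - h z - (x - z) = t • (u x - u z) := by
      simp only [h, smul_sub]; abel
    simp only [ContinuousLinearEquiv.coe_refl, ContinuousLinearMap.coe_id', id]
    rw [this, norm_smul, Real.norm_of_nonneg ht.le]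
    change _ ≤ t * M * _
    rw [mul_assoc]
    gcongr
    exact hlip x z
  have hc : Subsingleton E ∨ (⟨t * M, by positivity⟩ : NNReal) <
      ‖((ContinuousLinearEquiv.refl ℝ E).symm : E →L[ℝ] E)‖₊⁻¹ := by
    rcases subsingleton_or_nontrivial E with hE | hE
    · exact Or.inl hE
    · right
      have : ‖((ContinuousLinearEquiv.refl ℝ E).symm : E →L[ℝ] E)‖₊ = 1 := by
        ext; simp
      rw [this, inv_one]
      exact_mod_cast htM1
  have hinj : Function.Injective h := injOn_univ.1 (happ.injOn hc)
  have hsurj : Function.Surjective h := happ.surjective hc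
  have hid : ∀ x, 1 ≤ ‖x‖ → h x = x := fun x hx => by simp [h, h0 x hx]
  have himg : h '' ball 0 1 = ball 0 1 := by
    ext z
    constructor
    · rintro ⟨x, hx, rfl⟩
      by_contra hz
      have hz' : 1 ≤ ‖h x‖ := by simpa using hz
      have := hinj (hid _ hz')
      rw [this] at hz
      exact hz hx
    · intro hz
      obtain ⟨x, rfl⟩ := hsurj z
      refine ⟨x, ?_, rfl⟩
      by_contra hx
      have hx' : 1 ≤ ‖x‖ := by simpa using hx
      rw [hid x hx'] at hz
      exact hx hz
  have key := integral_image_eq_integral_abs_det_fderiv_smul (volume : Measure E)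
    (f := h) (f' := fun x => ContinuousLinearMap.id ℝ E + t • fderiv ℝ u x)
    (s := ball 0 1) measurableSet_ball
    (fun x _ => ((hasFDerivAt_id x).add ((hu x).hasFDerivAt.const_smul t)).hasFDerivWithinAt)
    hinj.injOn (fun z => (4 - ‖z - y‖ ^ 2) ^ N)
  rw [himg] at key
  rw [key]
  refine setIntegral_congr_fun measurableSet_ball fun x _ => ?_
  have hpos : 0 < (ContinuousLinearMap.id ℝ E + t • fderiv ℝ u x).det := by
    apply hdet
    rw [dist_eq_norm, add_sub_cancel_left, norm_smul, Real.norm_of_nonneg ht.le]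
    exact lt_of_le_of_lt (by gcongr; exact hM x) htM2
  simp only [smul_eq_mul, h]
  rw [abs_of_pos hpos, mul_comm, add_sub_right_comm]

theorem dd_det_bound (M : ℝ) : ∃ D : ℝ, ∀ A : E →L[ℝ] E, ‖A‖ ≤ M → |A.det| ≤ D := by
  have hK : IsCompact (closedBall (0 : E →L[ℝ] E) M) := by
    have : ProperSpace (E →L[ℝ] E) := FiniteDimensional.proper ℝ _
    exact isCompact_closedBall _ _
  obtain ⟨D, hD⟩ := hK.exists_bound_of_continuousOn
    (ContinuousLinearMap.continuous_det (𝕜 := ℝ) (E := E)).continuousOn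
  exact ⟨D, fun A hA => hD A (by simpa using hA)⟩

theorem dd_integrable (u : E → E) (hu : Differentiable ℝ u) (M : ℝ)
    (hM : ∀ x, ‖fderiv ℝ u x‖ ≤ M) (y : E) (N : ℕ) (t : ℝ) :
    IntegrableOn (fun x => (4 - ‖x - y + t • u x‖ ^ 2) ^ N *
      (ContinuousLinearMap.id ℝ E + t • fderiv ℝ u x).det) (ball (0 : E) 1) := by
  obtain ⟨D, hD⟩ := dd_det_bound (E := E) (1 + |t| * M)
  have hucont := hu.continuous
  have h1 : IntegrableOn (fun x => (4 - ‖x - y + t • u x‖ ^ 2) ^ N) (ball (0 : E) 1) := by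
    refine IntegrableOn.mono_set ?_ ball_subset_closedBall
    refine ContinuousOn.integrableOn_compact (isCompact_closedBall _ _) ?_
    apply Continuous.continuousOn
    fun_prop
  refine Integrable.mul_bdd (c := D) h1 ?_ ?_
  · have : Measurable (fun x => (ContinuousLinearMap.id ℝ E + t • fderiv ℝ u x).det) :=
      (ContinuousLinearMap.continuous_det (𝕜 := ℝ) (E := E)).measurable.comp
        (((measurable_fderiv ℝ u).const_smul t).const_add _)
    exact this.aestronglyMeasurable
  · refine Eventually.of_forall fun x => hD _ ?_
    refine (norm_add_le _ _).trans (add_le_add ContinuousLinearMap.norm_id_le ?_)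
    rw [norm_smul, Real.norm_eq_abs]
    gcongr
    exact hM x

theorem dd_milnor (u : E → E) (hu : Differentiable ℝ u) (M : ℝ) (hM : ∀ x, ‖fderiv ℝ u x‖ ≤ M)
    (h0 : ∀ x, 1 ≤ ‖x‖ → u x = 0) (y : E) (N : ℕ) :
    ∫ x in ball (0 : E) 1, (4 - ‖x - y + u x‖ ^ 2) ^ N *
      (ContinuousLinearMap.id ℝ E + fderiv ℝ u x).det
     = ∫ x in ball (0 : E) 1, (4 - ‖x - y‖ ^ 2) ^ N := by
  obtain ⟨t₀, ht₀, H⟩ := dd_small u hu M hM h0 y N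
  set V := ∫ x in ball (0 : E) 1, (4 - ‖x - y‖ ^ 2) ^ N with hV
  set D := 2 * N + Module.finrank ℝ E
  let F : ℝ → E → ℝ := fun t x => (4 - ‖x - y + t • u x‖ ^ 2) ^ N *
      (ContinuousLinearMap.id ℝ E + t • fderiv ℝ u x).det
  let v : ℕ → ℝ := fun i => t₀ / (i + 2)
  have hv : Function.Injective v := by
    intro i j hij
    simp only [v] at hij
    have h1 : (0 : ℝ) < i + 2 := by positivity
    have h2 : (0 : ℝ) < j + 2 := by positivity
    field_simp at hij
    have : (i : ℝ) = j := by linarith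
    exact_mod_cast this
  have hv0 : ∀ i, 0 < v i := fun i => by positivity
  have hv1 : ∀ i, v i < t₀ := fun i => by
    have h1 : (0 : ℝ) ≤ i := by positivity
    exact div_lt_self ht₀ (by linarith)
  let s := Finset.range (D + 1)
  have hF : ∀ x, F 1 x = ∑ i ∈ s, F (v i) x * (Lagrange.basis s v i).eval 1 := by
    intro x
    obtain ⟨P, hP, hP'⟩ := dd_poly (fderiv ℝ u x) (x - y) (u x) N
    have hdeg : P.degree < s.card := by
      refine lt_of_le_of_lt degree_le_natDegree ?_
      simp only [s, Finset.card_range]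
      exact_mod_cast Nat.lt_succ_of_le hP
    have := congrArg (Polynomial.eval 1) (Lagrange.eq_interpolate (s := s) hv.injOn hdeg)
    rw [Lagrange.interpolate_apply, eval_finsetSum] at this
    simp only [eval_mul, eval_C, hP'] at this
    exact this
  have hs : ∑ i ∈ s, (Lagrange.basis s v i).eval 1 = 1 := by
    have := congrArg (Polynomial.eval 1) (Lagrange.sum_basis (s := s) (v := v) hv.injOn ⟨0, by simp [s]⟩)
    rwa [eval_finsetSum, eval_one] at this
  have h1 : ∫ x in ball (0 : E) 1, F 1 x = V := by
    simp_rw [hF]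
    rw [integral_finsetSum]
    · simp_rw [integral_mul_const]
      have : ∀ i ∈ s, (∫ x in ball (0 : E) 1, F (v i) x) * (Lagrange.basis s v i).eval 1
          = V * (Lagrange.basis s v i).eval 1 := fun i _ => by
        rw [H (v i) (hv0 i) (hv1 i)]
      rw [Finset.sum_congr rfl this, ← Finset.mul_sum, hs, mul_one]
    · intro i _
      exact (dd_integrable u hu M hM y N (v i)).mul_const _
  simpa [F] using h1
end

section
variable {E : Type*} [NormedAddCommGroup E] [InnerProductSpace ℝ E] [FiniteDimensional ℝ E]

def ddLB (f : E → E) (x : E) : Prop :=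
  ∃ m : ℝ, ∀ᶠ z in 𝓝 x, DifferentiableAt ℝ f z ∧ ‖fderiv ℝ f z‖ ≤ m

theorem ddLB.congr {f g : E → E} {x : E} (hf : ddLB f x) (h : g =ᶠ[𝓝 x] f) : ddLB g x := by
  obtain ⟨m, hm⟩ := hf
  refine ⟨m, ?_⟩
  filter_upwards [hm, h.eventually_nhds] with z hz hz'
  exact ⟨hz.1.congr_of_eventuallyEq hz', by rw [EventuallyEq.fderiv_eq hz']; exact hz.2⟩

theorem ddLB_of_contDiff {f : E → E} (hf : ContDiff ℝ 1 f) (x : E) : ddLB f x := by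
  refine ⟨‖fderiv ℝ f x‖ + 1, ?_⟩
  have hc : Continuous (fun z => ‖fderiv ℝ f z‖) := (hf.continuous_fderiv (by simp)).norm
  filter_upwards [hc.continuousAt.eventually_lt continuousAt_const (lt_add_one _)] with z hz
  exact ⟨(hf.differentiable (by simp)) z, hz.le⟩

theorem ddLB.add {f g : E → E} {x : E} (hf : ddLB f x) (hg : ddLB g x) :
    ddLB (fun z => f z + g z) x := by
  obtain ⟨m, hm⟩ := hf
  obtain ⟨k, hk⟩ := hg
  refine ⟨m + k, ?_⟩
  filter_upwards [hm, hk] with z hz hz'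
  refine ⟨hz.1.add hz'.1, ?_⟩
  rw [fderiv_fun_add hz.1 hz'.1]
  exact (norm_add_le _ _).trans (add_le_add hz.2 hz'.2)

theorem ddLB.neg {f : E → E} {x : E} (hf : ddLB f x) : ddLB (fun z => - f z) x := by
  obtain ⟨m, hm⟩ := hf
  refine ⟨m, ?_⟩
  filter_upwards [hm] with z hz
  refine ⟨hz.1.neg, ?_⟩
  rw [fderiv_fun_neg, norm_neg]
  exact hz.2

theorem ddLB.smul {f : E → E} {x : E} (hf : ddLB f x) {φ : E → ℝ} (hφ : ContDiff ℝ 1 φ) :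
    ddLB (fun z => φ z • f z) x := by
  obtain ⟨m, hm⟩ := hf
  have hc : Continuous (fun z => ‖fderiv ℝ φ z‖) := (hφ.continuous_fderiv (by simp)).norm
  have hfc : ContinuousAt (fun z => ‖f z‖) x := (hm.self_of_nhds.1.continuousAt).norm
  have hφc : Continuous (fun z => ‖φ z‖) := hφ.continuous.norm
  refine ⟨(‖φ x‖ + 1) * m + (‖fderiv ℝ φ x‖ + 1) * (‖f x‖ + 1), ?_⟩
  filter_upwards [hm, hc.continuousAt.eventually_lt continuousAt_const (lt_add_one _),
    hfc.eventually_lt continuousAt_const (lt_add_one _),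
    hφc.continuousAt.eventually_lt continuousAt_const (lt_add_one _)] with z hz h1 h2 h3
  have hd := (hφ.differentiable (by simp)) z
  refine ⟨hd.smul hz.1, ?_⟩
  rw [fderiv_fun_smul hd hz.1]
  refine (norm_add_le _ _).trans (add_le_add ?_ ?_)
  · rw [norm_smul]
    exact mul_le_mul h3.le hz.2 (norm_nonneg _) (by positivity)
  · refine (ContinuousLinearMap.opNorm_le_bound _ (by positivity) fun v => ?_)
    rw [ContinuousLinearMap.smulRight_apply, norm_smul]
    calc ‖fderiv ℝ φ z v‖ * ‖f z‖ ≤ (‖fderiv ℝ φ z‖ * ‖v‖) * ‖f z‖ := by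
          gcongr; exact ContinuousLinearMap.le_opNorm _ _
      _ ≤ ((‖fderiv ℝ φ x‖ + 1) * ‖v‖) * (‖f x‖ + 1) := by gcongr
      _ = _ := by ring

theorem ddLB_compact {f : E → E} {K : Set E} (hK : IsCompact K) (h : ∀ x ∈ K, ddLB f x) :
    ∃ m : ℝ, ∀ x ∈ K, ‖fderiv ℝ f x‖ ≤ m := by
  refine hK.induction_on (p := fun s => ∃ m : ℝ, ∀ x ∈ s, ‖fderiv ℝ f x‖ ≤ m) ⟨0, by simp⟩
    (fun s t hst ⟨m, hm⟩ => ⟨m, fun x hx => hm x (hst hx)⟩)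
    (fun s t ⟨m, hm⟩ ⟨k, hk⟩ => ⟨max m k, fun x hx => hx.elim
      (fun hx => (hm x hx).trans (le_max_left _ _)) (fun hx => (hk x hx).trans (le_max_right _ _))⟩)
    fun x hx => ?_
  obtain ⟨m, hm⟩ := h x hx
  exact ⟨_, mem_nhdsWithin_of_mem_nhds hm, m, fun z hz => hz.2⟩

variable [MeasurableSpace E] [BorelSpace E]

theorem dd_degree (u : E → E) (hu : Differentiable ℝ u) (M : ℝ) (hM : ∀ x, ‖fderiv ℝ u x‖ ≤ M)
    (h0 : ∀ x, 1 ≤ ‖x‖ → u x = 0) (hu1 : ∀ x, ‖u x‖ ≤ 3 / 8) (y : E) (hy : ‖y‖ ≤ 1 / 4)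
    (c : ℝ) (hc : 0 < c) (hc8 : c ≤ 1 / 8)
    (H : ∀ x, (ContinuousLinearMap.id ℝ E + fderiv ℝ u x).det < 0 ∨ c ≤ ‖x - y + u x‖) :
    False := by
  obtain ⟨D, hD⟩ := dd_det_bound (E := E) (1 + M)
  have hDx : ∀ x, |(ContinuousLinearMap.id ℝ E + fderiv ℝ u x).det| ≤ D := fun x => hD _
    ((norm_add_le _ _).trans (add_le_add ContinuousLinearMap.norm_id_le (hM x)))
  have hD0 : 0 ≤ D := (abs_nonneg _).trans (hDx 0)
  set V := volume.real (ball (0 : E) 1)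
  set W := volume.real (ball y (c / 2))
  have hW : 0 < W := by
    refine ENNReal.toReal_pos ?_ measure_ball_lt_top.ne
    exact (measure_ball_pos _ _ (by positivity)).ne'
  have main : ∀ N : ℕ, (4 - c ^ 2 / 4) ^ N * W ≤ (4 - c ^ 2) ^ N * D * V := by
    intro N
    have e := dd_milnor u hu M hM h0 y N
    have hint := dd_integrable u hu M hM y N 1
    simp only [one_smul] at hint
    have hcont : Continuous (fun x : E => (4 - ‖x - y‖ ^ 2) ^ N) := by fun_prop
    have hint2 : IntegrableOn (fun x : E => (4 - ‖x - y‖ ^ 2) ^ N) (ball 0 1) :=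
      (hcont.continuousOn.integrableOn_compact (isCompact_closedBall 0 1)).mono_set
        ball_subset_closedBall
    have hsub : ball y (c / 2) ⊆ ball 0 1 := by
      apply ball_subset_ball'
      rw [dist_zero_right]; linarith
    have hy2 : ∀ x ∈ ball (0 : E) 1, ‖x - y‖ ≤ 5 / 4 := fun x hx => by
      have : ‖x‖ < 1 := by simpa using hx
      linarith [norm_sub_le x y]
    have lower : (4 - c ^ 2 / 4) ^ N * W ≤ ∫ x in ball (0 : E) 1, (4 - ‖x - y‖ ^ 2) ^ N := by
      calc (4 - c ^ 2 / 4) ^ N * W = ∫ x in ball y (c / 2), (4 - c ^ 2 / 4) ^ N := by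
            simp [W, mul_comm]
        _ ≤ ∫ x in ball y (c / 2), (4 - ‖x - y‖ ^ 2) ^ N := by
            refine setIntegral_mono_on ?_ (hint2.mono_set hsub) measurableSet_ball fun x hx => ?_
            · exact integrableOn_const measure_ball_lt_top.ne
            · have hx' : ‖x - y‖ < c / 2 := by simpa [dist_eq_norm] using hx
              have := norm_nonneg (x - y)
              apply pow_le_pow_left₀ <;> nlinarith
        _ ≤ _ := by
            refine setIntegral_mono_set hint2 ?_ hsub.eventuallyLE
            filter_upwards [ae_restrict_mem measurableSet_ball] with x hx
            have h1 := hy2 x hx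
            have := norm_nonneg (x - y)
            exact pow_nonneg (by nlinarith) _
    have upper : ∫ x in ball (0 : E) 1, (4 - ‖x - y + u x‖ ^ 2) ^ N *
      (ContinuousLinearMap.id ℝ E + fderiv ℝ u x).det ≤ (4 - c ^ 2) ^ N * D * V := by
      calc _ ≤ ∫ x in ball (0 : E) 1, (4 - c ^ 2) ^ N * D := by
            refine setIntegral_mono_on hint ?_ measurableSet_ball fun x hx => ?_
            · exact integrableOn_const measure_ball_lt_top.ne
            · have h1 : ‖x - y + u x‖ ≤ 5 / 4 + 3 / 8 :=
                (norm_add_le _ _).trans (add_le_add (hy2 x hx) (hu1 x))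
              have h2 := norm_nonneg (x - y + u x)
              have h3 : 0 ≤ 4 - ‖x - y + u x‖ ^ 2 := by nlinarith
              have h4 : 0 ≤ 4 - c ^ 2 := by nlinarith
              rcases H x with h | h
              · have : (4 - ‖x - y + u x‖ ^ 2) ^ N *
                  (ContinuousLinearMap.id ℝ E + fderiv ℝ u x).det ≤ 0 :=
                  mul_nonpos_of_nonneg_of_nonpos (pow_nonneg h3 _) h.le
                exact this.trans (by positivity)
              · refine (mul_le_mul_of_nonneg_left ((le_abs_self _).trans (hDx x))
                  (pow_nonneg h3 _)).trans ?_
                refine mul_le_mul_of_nonneg_right ?_ hD0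
                apply pow_le_pow_left₀ h3
                nlinarith
        _ = _ := by simp [V, mul_comm]
    linarith
  have hr : 1 < (4 - c ^ 2 / 4) / (4 - c ^ 2) := by
    rw [one_lt_div] <;> nlinarith
  have h4 : 0 < 4 - c ^ 2 := by nlinarith
  have ht := (tendsto_pow_atTop_atTop_of_one_lt hr).atTop_mul_const hW
  obtain ⟨N, hN⟩ := (ht.eventually_gt_atTop (D * V)).exists
  have := main N
  rw [div_pow, div_mul_eq_mul_div, lt_div_iff₀ (by positivity)] at hN
  linarith

theorem dd_glue (g : E → E) (hg : ∀ x ∈ ball (0 : E) 2, DifferentiableAt ℝ g x)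
    (hdet : ∀ x ∈ ball (0 : E) 2, (fderiv ℝ g x).det < 0)
    (hgid : ∀ x ∈ ball (0 : E) 2, ‖g x - x‖ ≤ 1 / 4)
    (y : E) (hy : ‖y‖ ≤ 1 / 4) (hreg : ∀ x ∈ closedBall (0 : E) 1, g x = y → ddLB g x) : False := by
  have h12 : closedBall (0 : E) 1 ⊆ ball 0 2 := closedBall_subset_ball (by norm_num)
  have hgc : ContinuousOn g (ball 0 2) := fun x hx => (hg x hx).continuousAt.continuousWithinAt
  let O : Set E := {x | x ∈ ball (0 : E) 2 ∧ ddLB g x}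
  have hO : IsOpen O := by
    rw [isOpen_iff_mem_nhds]
    rintro x ⟨hx, m, hm⟩
    filter_upwards [isOpen_ball.mem_nhds hx, hm.eventually_nhds] with z hz hz'
    exact ⟨hz, m, hz'⟩
  let K : Set E := closedBall (0 : E) 1 ∩ g ⁻¹' {y}
  have hK : IsCompact K := by
    refine (isCompact_closedBall (0 : E) 1).of_isClosed_subset ?_ inter_subset_left
    exact (hgc.mono h12).preimage_isClosed_of_isClosed isClosed_closedBall isClosed_singleton
  have hKO : K ⊆ O := fun x hx => ⟨h12 hx.1, hreg x hx.1 hx.2⟩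
  obtain ⟨K', hK', hKK', hK'O⟩ := exists_compact_between hK hO hKO
  obtain ⟨K'', hK'', hKK'', hK''O⟩ := exists_compact_between hK' hO hK'O
  obtain ⟨χ, hχ, hχr, hχs, hχ1⟩ := exists_contMDiff_support_eq_eq_one_iff
    (n := 1) (modelWithCornersSelf ℝ E) isOpen_interior hK'.isClosed hKK''
  have hχ : ContDiff ℝ 1 χ := hχ.contDiff
  have hχts : tsupport χ ⊆ O := by
    rw [tsupport, hχs]
    exact (closure_minimal interior_subset hK''.isClosed).trans hK''O
  -- separation
  have hZ : IsCompact (closedBall (0 : E) 1 \ interior K') :=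
    (isCompact_closedBall (0 : E) 1).diff isOpen_interior
  obtain ⟨c₀, hc₀, hc₀'⟩ := hZ.exists_forall_le' (f := fun x => ‖g x - y‖) (a := 0)
    (((hgc.mono h12).mono sdiff_subset).sub continuousOn_const).norm
    (fun x hx => by
      rw [norm_pos_iff, sub_ne_zero]
      intro h
      exact hx.2 (hKK' ⟨hx.1, h⟩))
  set c := min (c₀ / 2) (1 / 8) with hcdef
  have hc : 0 < c := by positivity
  have hc1 : c ≤ c₀ / 2 := min_le_left _ _
  have hc2 : c ≤ 1 / 8 := min_le_right _ _
  -- smooth approximation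
  let θ : ContDiffBump (0 : E) := ⟨1, 3 / 2, by norm_num, by norm_num⟩
  have hθc : Continuous (fun x => θ x • g x) := by
    rw [continuous_iff_continuousAt]
    intro x
    by_cases hx : x ∈ ball (0 : E) 2
    · exact θ.continuous.continuousAt.smul (hg x hx).continuousAt
    · have hx' : x ∈ (closedBall (0 : E) (3 / 2))ᶜ := by
        simp only [mem_ball, dist_zero_right, mem_compl_iff, mem_closedBall] at hx ⊢
        linarith
      have : (fun x => θ x • g x) =ᶠ[𝓝 x] fun _ => 0 := by
        filter_upwards [isClosed_closedBall.isOpen_compl.mem_nhds hx'] with z hz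
        have : θ z = 0 := θ.zero_of_le_dist (by
          simp only [mem_compl_iff, mem_closedBall, not_le] at hz
          exact hz.le)
        simp [this]
      exact continuousAt_const.congr this.symm
  obtain ⟨p, hp, hpa, -⟩ := hθc.exists_contDiff_approx 1 (ε := fun _ => c) continuous_const
    (fun _ => hc)
  have hp : ContDiff ℝ 1 p := hp
  have hpa : ∀ x ∈ closedBall (0 : E) 1, ‖p x - g x‖ ≤ c := fun x hx => by
    have := hpa x
    rw [θ.one_of_mem_closedBall hx, one_smul, dist_eq_norm] at this
    exact this.le
  let ψ : ContDiffBump (0 : E) := ⟨3 / 4, 1, by norm_num, by norm_num⟩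
  have hψ0 : ∀ x : E, 1 ≤ ‖x‖ → ψ x = 0 := fun x hx => ψ.zero_of_le_dist (by simpa using hx)
  let h₁ : E → E := fun x => p x + χ x • (g x + - p x)
  let u : E → E := fun x => ψ x • (h₁ x + - x)
  have hχ01 : ∀ x, 0 ≤ χ x ∧ χ x ≤ 1 := fun x => hχr ⟨x, rfl⟩
  have h₁g : ∀ x ∈ closedBall (0 : E) 1, ‖h₁ x - g x‖ ≤ c := fun x hx => by
    have : h₁ x - g x = (1 - χ x) • (p x - g x) := by
      simp only [h₁]; module
    rw [this, norm_smul, Real.norm_of_nonneg (by linarith [hχ01 x])]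
    nlinarith [hpa x hx, norm_nonneg (p x - g x), hχ01 x]
  have hLB₁ : ∀ x, ddLB h₁ x := by
    intro x
    refine (ddLB_of_contDiff hp x).add ?_
    by_cases hx : x ∈ tsupport χ
    · exact ((hχts hx).2.add (ddLB_of_contDiff hp x).neg).smul hχ
    · refine (ddLB_of_contDiff (contDiff_const (c := (0 : E))) x).congr ?_
      filter_upwards [notMem_tsupport_iff_eventuallyEq.1 hx] with z hz
      simp [hz]
  have hLB : ∀ x, ddLB u x := fun x =>
    ((hLB₁ x).add (ddLB_of_contDiff contDiff_id x).neg).smul ψ.contDiff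
  have hudiff : Differentiable ℝ u := fun x => (hLB x).choose_spec.self_of_nhds.1
  have hu0 : ∀ x, 1 ≤ ‖x‖ → u x = 0 := fun x hx => by simp [u, hψ0 x hx]
  obtain ⟨m, hm⟩ := ddLB_compact (isCompact_closedBall (0 : E) 1) (fun x _ => hLB x)
  have hm' : ∀ x, ‖fderiv ℝ u x‖ ≤ max m 0 := fun x => by
    by_cases hx : x ∈ closedBall (0 : E) 1
    · exact (hm x hx).trans (le_max_left _ _)
    · have : u =ᶠ[𝓝 x] fun _ => 0 := by
        filter_upwards [isClosed_closedBall.isOpen_compl.mem_nhds hx] with z hz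
        apply hu0
        simp only [mem_compl_iff, mem_closedBall, dist_zero_right, not_le] at hz
        exact hz.le
      rw [this.fderiv_eq]
      simp
  have hu38 : ∀ x, ‖u x‖ ≤ 3 / 8 := fun x => by
    by_cases hx : x ∈ closedBall (0 : E) 1
    · have e : h₁ x + - x = (h₁ x - g x) + (g x - x) := by abel
      have h2 : ‖h₁ x + - x‖ ≤ 3 / 8 := by
        rw [e]
        refine (norm_add_le _ _).trans ?_
        linarith [h₁g x hx, hgid x (h12 hx)]
      simp only [u]
      rw [norm_smul, Real.norm_of_nonneg ψ.nonneg]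
      nlinarith [ψ.nonneg (x := x), ψ.le_one (x := x), norm_nonneg (h₁ x + - x)]
    · simp only [mem_closedBall, dist_zero_right, not_le] at hx
      rw [hu0 x hx.le]
      norm_num
  refine dd_degree u hudiff _ hm' hu0 hu38 y hy c hc hc2 fun x => ?_
  by_cases hx : x ∈ ball (0 : E) (3 / 4)
  · have hx1 : x ∈ closedBall (0 : E) 1 :=
      (ball_subset_closedBall.trans (closedBall_subset_closedBall (by norm_num))) hx
    by_cases hxK : x ∈ interior K'
    · left
      have : u =ᶠ[𝓝 x] fun z => g z - z := by
        filter_upwards [isOpen_ball.mem_nhds hx, isOpen_interior.mem_nhds hxK] with z hz hz'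
        have h1 : ψ z = 1 := ψ.one_of_mem_closedBall (ball_subset_closedBall hz)
        have h2 : χ z = 1 := (hχ1 z).1 (interior_subset hz')
        simp only [u, h₁, h1, h2]
        module
      rw [this.fderiv_eq, fderiv_fun_sub (hg x (h12 hx1)) differentiableAt_fun_id, fderiv_fun_id,
        add_sub_cancel]
      exact hdet x (h12 hx1)
    · right
      have h1 : ψ x = 1 := ψ.one_of_mem_closedBall (ball_subset_closedBall hx)
      have e : x - y + u x = (g x - y) - (g x - h₁ x) := by
        simp only [u, h1, one_smul]; abel
      rw [e]
      have h2 := norm_sub_norm_le (g x - y) (g x - h₁ x)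
      have h3 := hc₀' x ⟨hx1, hxK⟩
      have h4 := h₁g x hx1
      rw [norm_sub_rev] at h4
      linarith
  · right
    simp only [mem_ball, dist_zero_right, not_lt] at hx
    have e : x = (x - y + u x) + y + (- u x) := by abel
    have h1 : ‖x‖ ≤ ‖x - y + u x‖ + ‖y‖ + ‖u x‖ := by
      conv_lhs => rw [e]
      refine (norm_add_le _ _).trans ?_
      rw [norm_neg]
      gcongr
      exact norm_add_le _ _
    linarith [hu38 x]
end

section
theorem dd_baire {X : Type*} [MetricSpace X] [LocallyCompactSpace X] {T : Set X} (hT : IsGδ T)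
    (hne : T.Nonempty) {ι : Type*} [Countable ι] (C : ι → Set X)
    (hC : ∀ i, ∀ x ∈ T, x ∉ C i → ∀ᶠ z in 𝓝 x, z ∉ C i)
    (hcov : ∀ x ∈ T, ∃ i, x ∈ C i) : ∃ i, ∃ x ∈ T, ∀ᶠ z in 𝓝 x, z ∈ T → z ∈ C i := by
  have : BaireSpace T := hT.baireSpace_of_t2Space_locallyCompactSpace
  have : Nonempty T := hne.to_subtype
  obtain ⟨i, x, hx⟩ := nonempty_interior_of_iUnion_of_closed
    (f := fun i => ((↑) : T → X) ⁻¹' C i) (fun i => by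
      rw [← isOpen_compl_iff, isOpen_iff_mem_nhds]
      intro x hx
      exact continuousAt_subtype_val.eventually (hC i x x.2 hx)) (by
      rw [eq_univ_iff_forall]
      intro x
      obtain ⟨i, hi⟩ := hcov x x.2
      exact mem_iUnion.2 ⟨i, hi⟩)
  refine ⟨i, x, x.2, ?_⟩
  have h1 := mem_interior_iff_mem_nhds.1 hx
  rw [mem_nhds_subtype_iff_nhdsWithin] at h1
  have h2 := eventually_nhdsWithin_iff.1 h1
  filter_upwards [h2] with z hz hzT
  obtain ⟨w, hw, rfl⟩ := hz hzT
  exact hw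

variable {E : Type*} [NormedAddCommGroup E] [InnerProductSpace ℝ E] [FiniteDimensional ℝ E]

theorem dd_dense (g : E → E) {W : Set E} (hW : IsOpen W) (hne : W.Nonempty)
    (hg : ∀ x ∈ W, DifferentiableAt ℝ g x) : ∃ x ∈ W, ddLB g x := by
  have : LocallyCompactSpace E := by
    have := FiniteDimensional.proper ℝ E
    infer_instance
  obtain ⟨m, x, hx, h⟩ := dd_baire hW.isGδ hne
    (fun m : ℕ => {x : E | ∀ z ∈ W, dist z x < 1 / ((m : ℝ) + 1) →
      ‖g z - g x‖ ≤ ((m : ℝ) + 1) * ‖z - x‖})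
    (by
      intro m x hx hxC
      simp only [mem_ofPred_eq, not_forall, not_le] at hxC ⊢
      obtain ⟨z, hz, hzx, hlt⟩ := hxC
      have hgx := (hg x hx).continuousAt
      have e1 : ∀ᶠ w in 𝓝 x, dist z w < 1 / ((m : ℝ) + 1) :=
        (continuousAt_const.dist continuousAt_id).eventually_lt continuousAt_const hzx
      have e2 : ∀ᶠ w in 𝓝 x, ((m : ℝ) + 1) * ‖z - w‖ < ‖g z - g w‖ :=
        ContinuousAt.eventually_lt
          (continuousAt_const.mul (continuousAt_const.sub continuousAt_id).norm)
          (continuousAt_const.sub hgx).norm hlt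
      filter_upwards [e1, e2] with w h1 h2
      exact ⟨z, hz, h1, h2⟩)
    (by
      intro x hx
      obtain ⟨C, hC⟩ := (hg x hx).isBigO_sub.bound
      obtain ⟨δ, hδ, hδ'⟩ := Metric.eventually_nhds_iff.1 hC
      obtain ⟨m₁, hm₁⟩ := exists_nat_gt C
      obtain ⟨m₂, hm₂⟩ := exists_nat_one_div_lt hδ
      refine ⟨max m₁ m₂, fun z hz hzx => ?_⟩
      have h1 : (m₁ : ℝ) ≤ ((max m₁ m₂ : ℕ) : ℝ) := by exact_mod_cast le_max_left _ _
      have h2 : (m₂ : ℝ) ≤ ((max m₁ m₂ : ℕ) : ℝ) := by exact_mod_cast le_max_right _ _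
      have h3 : dist z x < δ := by
        refine hzx.trans (lt_of_le_of_lt ?_ hm₂)
        gcongr
      refine (hδ' h3).trans ?_
      gcongr
      linarith)
  refine ⟨x, hx, (m : ℝ) + 1, ?_⟩
  filter_upwards [h, hW.mem_nhds hx] with w hw hwW
  refine ⟨hg w hwW, (hg w hwW).hasFDerivAt.le_of_lip' (by positivity) ?_⟩
  filter_upwards [hW.mem_nhds hwW, ball_mem_nhds w (ε := 1 / ((m : ℝ) + 1)) (by positivity)]
    with z hz hz'
  exact hw hwW z hz hz'

theorem dd_regular (g : E → E) (hg : ∀ x ∈ ball (0 : E) 2, DifferentiableAt ℝ g x)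
    (hdet : ∀ x ∈ ball (0 : E) 2, (fderiv ℝ g x).det ≠ 0) :
    ∃ y : E, ‖y‖ ≤ 1 / 4 ∧ ∀ x ∈ closedBall (0 : E) 1, g x = y → ddLB g x := by
  have hprop := FiniteDimensional.proper ℝ E
  have h12 : closedBall (0 : E) 1 ⊆ ball 0 2 := closedBall_subset_ball (by norm_num)
  by_contra! hcon
  let q := TopologicalSpace.denseSeq E
  let P : ℕ × ℕ → Set E := fun i => {x | x ∈ closedBall (0 : E) 1 ∧
    dist x (q i.2) ≤ 1 / (4 * ((i.1 : ℝ) + 1)) ∧ ¬ ddLB g x ∧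
    ∀ z ∈ ball (0 : E) 2, dist z x < 1 / ((i.1 : ℝ) + 1) → ‖z - x‖ ≤ ((i.1 : ℝ) + 1) * ‖g z - g x‖}
  have hP : ∀ i, IsCompact (P i) := by
    intro i
    refine (isCompact_closedBall (0 : E) 1).of_isClosed_subset ?_ (fun x hx => hx.1)
    rw [← isOpen_compl_iff, isOpen_iff_mem_nhds]
    intro x hx
    by_cases h1 : x ∈ closedBall (0 : E) 1
    swap
    · filter_upwards [isClosed_closedBall.isOpen_compl.mem_nhds h1] with z hz hz'
      exact hz hz'.1
    by_cases h2 : dist x (q i.2) ≤ 1 / (4 * ((i.1 : ℝ) + 1))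
    swap
    · have : ∀ᶠ z in 𝓝 x, 1 / (4 * ((i.1 : ℝ) + 1)) < dist z (q i.2) :=
        continuousAt_const.eventually_lt (continuousAt_id.dist continuousAt_const) (not_le.1 h2)
      filter_upwards [this] with z hz hz'
      exact absurd hz'.2.1 (not_le.2 hz)
    by_cases h3 : ddLB g x
    · obtain ⟨m, hm⟩ := h3
      filter_upwards [hm.eventually_nhds] with z hz hz'
      exact hz'.2.2.1 ⟨m, hz⟩
    have h4 : ¬ ∀ z ∈ ball (0 : E) 2, dist z x < 1 / ((i.1 : ℝ) + 1) →
        ‖z - x‖ ≤ ((i.1 : ℝ) + 1) * ‖g z - g x‖ := fun h4 => hx ⟨h1, h2, h3, h4⟩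
    simp only [not_forall, not_le] at h4
    obtain ⟨z, hz, hzx, hlt⟩ := h4
    have hgx := (hg x (h12 h1)).continuousAt
    have e1 : ∀ᶠ w in 𝓝 x, dist z w < 1 / ((i.1 : ℝ) + 1) :=
      (continuousAt_const.dist continuousAt_id).eventually_lt continuousAt_const hzx
    have e2 : ∀ᶠ w in 𝓝 x, ((i.1 : ℝ) + 1) * ‖g z - g w‖ < ‖z - w‖ :=
      ContinuousAt.eventually_lt (continuousAt_const.mul (continuousAt_const.sub hgx).norm)
        (continuousAt_const.sub continuousAt_id).norm hlt
    filter_upwards [e1, e2] with w h1 h2 hw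
    exact absurd (hw.2.2.2 z hz h1) (not_le.2 h2)
  have hgP : ∀ i, IsClosed (g '' P i) := fun i =>
    ((hP i).image_of_continuousOn fun x hx =>
      (hg x (h12 hx.1)).continuousAt.continuousWithinAt).isClosed
  obtain ⟨i, y, hy, h⟩ := dd_baire (T := ball (0 : E) (1 / 4)) isOpen_ball.isGδ
    ⟨0, by simp⟩ (fun i => g '' P i)
    (fun i x _ hx => (hgP i).isOpen_compl.mem_nhds hx)
    (by
      intro y hy
      obtain ⟨x, hx, hxy, hbad⟩ := hcon y (by
        simp only [mem_ball, dist_zero_right] at hy; exact hy.le)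
      have hx2 := h12 hx
      let e := (fderiv ℝ g x).toContinuousLinearEquivOfDetNeZero (hdet x hx2)
      have hanti : Topology.IsInducing (fderiv ℝ g x) := e.toHomeomorph.isInducing
      obtain ⟨C, hC⟩ := ((hg x hx2).hasFDerivAt.isTheta_sub hanti).2.bound
      obtain ⟨δ, hδ, hδ'⟩ := Metric.eventually_nhds_iff.1 hC
      obtain ⟨m₁, hm₁⟩ := exists_nat_gt C
      obtain ⟨m₂, hm₂⟩ := exists_nat_one_div_lt hδ
      obtain ⟨k, hk⟩ := (TopologicalSpace.denseRange_denseSeq E).exists_dist_lt x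
        (ε := 1 / (4 * (((max m₁ m₂ : ℕ) : ℝ) + 1))) (by positivity)
      refine ⟨(max m₁ m₂, k), x, ⟨hx, hk.le, hbad, fun z hz hzx => ?_⟩, hxy⟩
      have h1 : (m₁ : ℝ) ≤ ((max m₁ m₂ : ℕ) : ℝ) := by exact_mod_cast le_max_left _ _
      have h2 : (m₂ : ℝ) ≤ ((max m₁ m₂ : ℕ) : ℝ) := by exact_mod_cast le_max_right _ _
      have h3 : dist z x < δ := by
        refine hzx.trans (lt_of_le_of_lt ?_ hm₂)
        simp only
        gcongr
      refine (hδ' h3).trans ?_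
      simp only
      gcongr
      linarith)
  obtain ⟨x, hx, rfl⟩ := h.self_of_nhds hy
  have hx2 := h12 hx.1
  have hgx := (hg x hx2).continuousAt
  have hbad : ∀ᶠ z in 𝓝 x, ¬ ddLB g z := by
    filter_upwards [hgx.eventually h, hgx.eventually (isOpen_ball.mem_nhds hy),
      isOpen_ball.mem_nhds hx2, ball_mem_nhds x (ε := 1 / (4 * ((i.1 : ℝ) + 1))) (by positivity)]
      with z hz1 hz2 hz3 hz4
    obtain ⟨x', hx', hxx'⟩ := hz1 hz2
    have hd : dist z x' < 1 / ((i.1 : ℝ) + 1) := by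
      have t1 : dist z x' ≤ dist z x + (dist x (q i.2) + dist x' (q i.2)) := by
        refine (dist_triangle z x x').trans ?_
        gcongr
        exact dist_triangle_right _ _ _
      have t2 := hx.2.1
      have t3 := hx'.2.1
      have t4 : dist z x < _ := hz4
      have t5 : 1 / ((i.1 : ℝ) + 1) = 4 * (1 / (4 * ((i.1 : ℝ) + 1))) := by
        field_simp
      have t6 : 0 < 1 / (4 * ((i.1 : ℝ) + 1)) := by positivity
      linarith
    have := hx'.2.2.2 z hz3 hd
    rw [hxx', sub_self, norm_zero, mul_zero, norm_le_zero_iff, sub_eq_zero] at this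
    rw [this]
    exact hx'.2.2.1
  obtain ⟨W, hW, hWo, hxW⟩ := _root_.mem_nhds_iff.1 (inter_mem hbad (isOpen_ball.mem_nhds hx2))
  obtain ⟨z, hz, hzLB⟩ := dd_dense g hWo ⟨x, hxW⟩ (fun z hz => hg z (hW hz).2)
  exact (hW hz).1 hzLB

variable [MeasurableSpace E] [BorelSpace E]

theorem dd_norm (g : E → E) (hg : ∀ x ∈ ball (0 : E) 2, DifferentiableAt ℝ g x)
    (hdet : ∀ x ∈ ball (0 : E) 2, (fderiv ℝ g x).det < 0)
    (hgid : ∀ x ∈ ball (0 : E) 2, ‖g x - x‖ ≤ 1 / 4) : False := by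
  obtain ⟨y, hy, hreg⟩ := dd_regular g hg (fun x hx => (hdet x hx).ne)
  exact dd_glue g hg hdet hgid y hy hreg

theorem dd_porous (f : E → E) (x : E) (L : E →L[ℝ] E) (hf : HasFDerivAt f L x) (hL : L.det ≠ 0) :
    ∀ᶠ p in 𝓝 x, p ≠ x → (∀ z ∈ ball p (dist p x), DifferentiableAt ℝ f z) →
      (∀ z ∈ ball p (dist p x), (fderiv ℝ f z).det * L.det < 0) → False := by
  let e := L.toContinuousLinearEquivOfDetNeZero hL
  let Ls : E →L[ℝ] E := (e.symm : E →L[ℝ] E)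
  have hLs : ∀ v, Ls (L v) = v := fun v => e.symm_apply_apply v
  have hcomp : Ls.comp L = ContinuousLinearMap.id ℝ E := by ext v; simp [hLs]
  have hdetmul : ∀ A B : E →L[ℝ] E, (A.comp B).det = A.det * B.det := fun A B => by
    exact LinearMap.det_comp (A : E →ₗ[ℝ] E) (B : E →ₗ[ℝ] E)
  have hdet1 : Ls.det * L.det = 1 := by
    rw [← hdetmul, hcomp]; simp [ContinuousLinearMap.det]
  have hη : 0 < 1 / (16 * (‖Ls‖ + 1)) := by positivity
  obtain ⟨δ, hδ, hδ'⟩ := Metric.eventually_nhds_iff.1 (hf.isLittleO.bound hη)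
  filter_upwards [ball_mem_nhds x (half_pos hδ)] with p hp hpx hdiff hneg
  have hd : 0 < dist p x := dist_pos.2 hpx
  set d := dist p x with hddef
  set ρ := d / 2 with hρ
  have hρ0 : 0 < ρ := by positivity
  have hpd : d < δ / 2 := hp
  let g : E → E := fun v => ρ⁻¹ • (Ls (f (p + ρ • v) - f x) - (p - x))
  have hmem : ∀ v ∈ ball (0 : E) 2, p + ρ • v ∈ ball p d := fun v hv => by
    simp only [mem_ball, dist_zero_right] at hv
    rw [mem_ball, dist_eq_norm, add_sub_cancel_left, norm_smul, Real.norm_of_nonneg hρ0.le]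
    nlinarith
  have hgd : ∀ v ∈ ball (0 : E) 2,
      HasFDerivAt g (Ls.comp (fderiv ℝ f (p + ρ • v))) v := fun v hv => by
    have h1 : HasFDerivAt (fun v : E => p + ρ • v) (ρ • ContinuousLinearMap.id ℝ E) v :=
      ((hasFDerivAt_id v).const_smul ρ).const_add p
    have h2 := (hdiff _ (hmem v hv)).hasFDerivAt.comp v h1
    have h3 := ((Ls.hasFDerivAt.comp v (h2.sub_const (f x))).sub_const (p - x)).const_smul ρ⁻¹
    refine h3.congr_fderiv ?_
    ext w
    simp [smul_smul, hρ0.ne']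
  refine dd_norm g (fun v hv => (hgd v hv).differentiableAt) (fun v hv => ?_) fun v hv => ?_
  · rw [(hgd v hv).fderiv, hdetmul]
    have := hneg _ (hmem v hv)
    have h2 : Ls.det ≠ 0 := fun h => by rw [h, zero_mul] at hdet1; exact zero_ne_one hdet1
    have h3 : 0 < Ls.det ^ 2 := by positivity
    have h4 : Ls.det * (fderiv ℝ f (p + ρ • v)).det =
        Ls.det ^ 2 * ((fderiv ℝ f (p + ρ • v)).det * L.det) := by
      linear_combination (-(Ls.det * (fderiv ℝ f (p + ρ • v)).det)) * hdet1
    rw [h4]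
    exact mul_neg_of_pos_of_neg h3 this
  · have hz := hmem v hv
    set z := p + ρ • v with hzdef
    have hzx : dist z x < 2 * d := by
      have := dist_triangle z p x
      have h2 : dist z p < d := hz
      linarith
    have h1 := hδ' (show dist z x < δ by linarith)
    have e1 : g v - v = ρ⁻¹ • Ls (f z - f x - L (z - x)) := by
      have : z - x = (p - x) + ρ • v := by rw [hzdef]; abel
      rw [map_sub Ls _ (L (z - x)), hLs, this]
      simp only [g]
      rw [← sub_sub, smul_sub _ _ (ρ • v), smul_smul, inv_mul_cancel₀ hρ0.ne', one_smul]
    rw [e1, norm_smul, Real.norm_of_nonneg (by positivity)]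
    have h2 : ‖Ls (f z - f x - L (z - x))‖ ≤ ‖Ls‖ * (1 / (16 * (‖Ls‖ + 1)) * (2 * d)) := by
      refine (Ls.le_opNorm _).trans ?_
      gcongr
      refine h1.trans ?_
      rw [← dist_eq_norm]
      gcongr
    have h3 : ‖Ls‖ * (1 / (16 * (‖Ls‖ + 1)) * (2 * d)) ≤ d / 8 := by
      have := norm_nonneg Ls
      rw [show ‖Ls‖ * (1 / (16 * (‖Ls‖ + 1)) * (2 * d)) = (‖Ls‖ / (‖Ls‖ + 1)) * (d / 8) by
        field_simp; ring]
      have : ‖Ls‖ / (‖Ls‖ + 1) ≤ 1 := by rw [div_le_one (by positivity)]; linarith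
      nlinarith
    calc ρ⁻¹ * ‖Ls (f z - f x - L (z - x))‖ ≤ ρ⁻¹ * (d / 8) := by
          gcongr; exact h2.trans h3
      _ = 1 / 4 := by rw [hρ]; field_simp; norm_num
end

section
variable {E : Type*} [NormedAddCommGroup E] [InnerProductSpace ℝ E] [FiniteDimensional ℝ E]
  [MeasurableSpace E] [BorelSpace E]

theorem dd_final {U : Set E} (f : E → E) (hf : ∀ x ∈ U, DifferentiableAt ℝ f x)
    (D : E → ℝ) (hDdef : ∀ x, D x = (fderiv ℝ f x).det)
    (hU : IsOpen U) (σ : ℝ) (hne : ∀ x ∈ U, σ * D x ≠ 0) (xs : E) (hxU : xs ∈ U)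
    (hxA : xs ∈ closure {z | z ∈ U ∧ 0 < σ * D z}) (hxB : xs ∈ closure {z | z ∈ U ∧ σ * D z < 0})
    (h : ∀ᶠ z in 𝓝 xs, z ∈ U → z ∈ closure {z | z ∈ U ∧ 0 < σ * D z} →
      z ∈ closure {z | z ∈ U ∧ σ * D z < 0} → 0 < σ * D z) : False := by
  have hprop := FiniteDimensional.proper ℝ E
  set A := {z | z ∈ U ∧ 0 < σ * D z} with hA
  set B := {z | z ∈ U ∧ σ * D z < 0} with hB
  obtain ⟨R, hR, hR'⟩ := Metric.eventually_nhds_iff.1 (h.and (hU.mem_nhds hxU))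
  obtain ⟨b, hb, hbx⟩ := Metric.mem_closure_iff.1 hxB (R / 4) (by positivity)
  rw [dist_comm] at hbx
  have hK : IsCompact (closedBall xs (R / 2) ∩ (closure A ∩ closure B)) :=
    (isCompact_closedBall _ _).inter_right (isClosed_closure.inter isClosed_closure)
  have hxsK : xs ∈ closedBall xs (R / 2) ∩ (closure A ∩ closure B) :=
    ⟨mem_closedBall_self (by positivity), hxA, hxB⟩
  obtain ⟨x, hx, hxd⟩ := hK.exists_infDist_eq_dist ⟨xs, hxsK⟩ b
  have hmin : ∀ w ∈ closedBall xs (R / 2) ∩ (closure A ∩ closure B), dist b x ≤ dist b w :=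
    fun w hw => hxd ▸ infDist_le_dist_of_mem hw
  have hxR : dist x xs < R := by
    have : dist x xs ≤ R / 2 := hx.1
    linarith
  have hxpos : 0 < σ * D x := (hR' hxR).1 (hR' hxR).2 hx.2.1 hx.2.2
  have hbxne : b ≠ x := by
    rintro rfl
    exact absurd hb.2 (not_lt.2 hxpos.le)
  set d := dist b x with hd
  have hd0 : 0 < d := dist_pos.2 hbxne
  have hdR : d < R / 4 := (hmin xs hxsK).trans_lt hbx
  have hball : ∀ z ∈ ball b d, dist z xs < R / 2 := fun z hz => by
    have h1 : dist z b < d := hz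
    linarith [dist_triangle z b xs]
  have hballU : ∀ z ∈ ball b d, z ∈ U := fun z hz => (hR' ((hball z hz).trans (by linarith))).2
  have hballB : ∀ z ∈ ball b d, σ * D z < 0 := by
    intro z hz
    by_contra hzn
    have hzA : z ∈ A := ⟨hballU z hz, lt_of_le_of_ne (not_lt.1 hzn) (hne z (hballU z hz)).symm⟩
    have hpre : IsPreconnected (ball b d) := (convex_ball b d).isPreconnected
    obtain ⟨w, hw, hw'⟩ := isPreconnected_closed_iff.1 hpre (closure A) (closure B)
      isClosed_closure isClosed_closure (fun w hw => by
        rcases lt_or_gt_of_ne (hne w (hballU w hw)) with h1 | h1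
        · exact Or.inr (subset_closure ⟨hballU w hw, h1⟩)
        · exact Or.inl (subset_closure ⟨hballU w hw, h1⟩))
      ⟨z, hz, subset_closure hzA⟩ ⟨b, mem_ball_self hd0, subset_closure hb⟩
    have h1 := hmin w ⟨(hball w hw).le, hw'⟩
    have h2 : dist w b < d := hw
    rw [dist_comm] at h2
    linarith
  have hxU' : x ∈ U := (hR' hxR).2
  have hpor := dd_porous f x _ (hf x hxU').hasFDerivAt (by
    rw [← hDdef]
    intro h0
    rw [h0, mul_zero] at hxpos
    exact lt_irrefl _ hxpos)
  have hcurve : Tendsto (fun t : ℝ => x + t • (b - x)) (𝓝[>] 0) (𝓝 x) := by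
    have : Continuous (fun t : ℝ => x + t • (b - x)) := by fun_prop
    have h1 := this.tendsto 0
    simp only [zero_smul, add_zero] at h1
    exact h1.mono_left nhdsWithin_le_nhds
  have ev := hcurve.eventually hpor
  have ev2 : ∀ᶠ t : ℝ in 𝓝[>] 0, t ∈ Ioo (0 : ℝ) 1 := Ioo_mem_nhdsGT one_pos
  obtain ⟨t, ht, ht01⟩ := (ev.and ev2).exists
  set p := x + t • (b - x) with hp
  have hpx : dist p x = t * d := by
    rw [dist_eq_norm, hp, add_sub_cancel_left, norm_smul, Real.norm_of_nonneg ht01.1.le, hd,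
      dist_eq_norm]
  have hpb : dist p b = (1 - t) * d := by
    have : p - b = (1 - t) • (x - b) := by rw [hp]; module
    rw [dist_eq_norm, this, norm_smul, Real.norm_of_nonneg (by linarith [ht01.2]), hd,
      dist_comm, dist_eq_norm]
  have hsub : ∀ z ∈ ball p (dist p x), z ∈ ball b d := fun z hz => by
    have h1 : dist z p < dist p x := hz
    rw [mem_ball]
    have := dist_triangle z p b
    rw [hpx] at h1
    rw [hpb] at this
    linarith
  refine ht ?_ (fun z hz => hf z (hballU z (hsub z hz))) (fun z hz => ?_)
  · rw [← dist_pos, hpx]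
    exact mul_pos ht01.1 hd0
  · rw [← hDdef, ← hDdef]
    have h1 := mul_neg_of_neg_of_pos (hballB z (hsub z hz)) hxpos
    have h2 : σ * D z * (σ * D x) = σ ^ 2 * (D z * D x) := by ring
    rw [h2] at h1
    by_contra h3
    exact absurd h1 (not_lt.2 (mul_nonneg (sq_nonneg _) (not_lt.1 h3)))

theorem dd_main {U : Set E} (f : E → E) (hf : ∀ x ∈ U, DifferentiableAt ℝ f x)
    (hU : IsOpen U) (hUc : IsConnected U) (x₀ x₁ : E) (hx₀ : x₀ ∈ U) (hx₁ : x₁ ∈ U)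
    (h₀ : (fderiv ℝ f x₀).det < 0) (h₁ : 0 < (fderiv ℝ f x₁).det) :
    ∃ x ∈ U, (fderiv ℝ f x).det = 0 := by
  by_contra! hne
  have hprop := FiniteDimensional.proper ℝ E
  have hdetc := ContinuousLinearMap.continuous_det (𝕜 := ℝ) (E := E)
  set D : E → ℝ := fun x => (fderiv ℝ f x).det with hD
  set A := {z | z ∈ U ∧ 0 < D z} with hA
  set B := {z | z ∈ U ∧ D z < 0} with hB
  have hSne : (U ∩ (closure A ∩ closure B)).Nonempty := by
    refine isPreconnected_closed_iff.1 hUc.isPreconnected (closure A) (closure B)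
      isClosed_closure isClosed_closure (fun w hw => ?_)
      ⟨x₁, hx₁, subset_closure ⟨hx₁, h₁⟩⟩ ⟨x₀, hx₀, subset_closure ⟨hx₀, h₀⟩⟩
    rcases lt_or_gt_of_ne (hne w hw) with h1 | h1
    · exact Or.inr (subset_closure ⟨hw, h1⟩)
    · exact Or.inl (subset_closure ⟨hw, h1⟩)
  have hSG : IsGδ (U ∩ (closure A ∩ closure B)) :=
    hU.isGδ.inter (isClosed_closure.inter isClosed_closure).isGδ
  let q := TopologicalSpace.denseSeq (E →L[ℝ] E)
  let good : ℕ → ℕ → Prop := fun k j =>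
    (∀ T : E →L[ℝ] E, dist T (q k) ≤ 1 / ((j : ℝ) + 1) → 0 < T.det) ∨
    (∀ T : E →L[ℝ] E, dist T (q k) ≤ 1 / ((j : ℝ) + 1) → T.det < 0)
  obtain ⟨⟨m, k, j⟩, x, hx, h⟩ := dd_baire hSG hSne
    (fun i : ℕ × ℕ × ℕ => {x : E | good i.2.1 i.2.2 ∧ ∀ z ∈ U, dist z x < 1 / ((i.1 : ℝ) + 1) →
      ‖f z - f x - q i.2.1 (z - x)‖ ≤ 1 / ((i.2.2 : ℝ) + 1) * ‖z - x‖})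
    (by
      rintro ⟨m, k, j⟩ x hx hxC
      simp only [mem_ofPred_eq, not_and] at hxC ⊢
      by_cases hgood : good k j
      swap
      · exact Eventually.of_forall fun z hz => absurd hz hgood
      have hxC := hxC hgood
      simp only [not_forall, not_le] at hxC
      obtain ⟨z, hz, hzx, hlt⟩ := hxC
      have hgx := (hf x hx.1).continuousAt
      have e1 : ∀ᶠ w in 𝓝 x, dist z w < 1 / ((m : ℝ) + 1) :=
        (continuousAt_const.dist continuousAt_id).eventually_lt continuousAt_const hzx
      have e2 : ∀ᶠ w in 𝓝 x, 1 / ((j : ℝ) + 1) * ‖z - w‖ < ‖f z - f w - q k (z - w)‖ :=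
        ContinuousAt.eventually_lt
          (continuousAt_const.mul (continuousAt_const.sub continuousAt_id).norm)
          ((continuousAt_const.sub hgx).sub
            ((q k).continuous.continuousAt.comp (continuousAt_const.sub continuousAt_id))).norm hlt
      filter_upwards [e1, e2] with w h1 h2 _ hall
      exact absurd (hall z hz h1) (not_le.2 h2))
    (by
      intro x hx
      have hsign : ∃ ε > 0, (∀ T : E →L[ℝ] E, dist T (fderiv ℝ f x) < ε → 0 < T.det) ∨
          (∀ T : E →L[ℝ] E, dist T (fderiv ℝ f x) < ε → T.det < 0) := by
        rcases lt_or_gt_of_ne (hne x hx.1) with h1 | h1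
        · obtain ⟨ε, hε, hε'⟩ := Metric.eventually_nhds_iff.1
            (hdetc.continuousAt.eventually_lt continuousAt_const h1)
          exact ⟨ε, hε, Or.inr fun T hT => hε' hT⟩
        · obtain ⟨ε, hε, hε'⟩ := Metric.eventually_nhds_iff.1
            (continuousAt_const.eventually_lt hdetc.continuousAt h1)
          exact ⟨ε, hε, Or.inl fun T hT => hε' hT⟩
      obtain ⟨ε, hε, hsign⟩ := hsign
      obtain ⟨j, hj⟩ := exists_nat_one_div_lt (half_pos hε)
      have hj0 : 0 < 1 / ((j : ℝ) + 1) := by positivity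
      obtain ⟨k, hk⟩ := (TopologicalSpace.denseRange_denseSeq (E →L[ℝ] E)).exists_dist_lt
        (fderiv ℝ f x) (half_pos hj0)
      have hk : dist (fderiv ℝ f x) (q k) < _ := hk
      obtain ⟨δ, hδ, hδ'⟩ := Metric.eventually_nhds_iff.1
        ((hf x hx.1).hasFDerivAt.isLittleO.bound (half_pos hj0))
      obtain ⟨m, hm⟩ := exists_nat_one_div_lt hδ
      have hlt : ∀ T : E →L[ℝ] E, dist T (q k) ≤ 1 / ((j : ℝ) + 1) →
          dist T (fderiv ℝ f x) < ε := fun T hT => by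
        have := dist_triangle_right T (fderiv ℝ f x) (q k)
        linarith
      refine ⟨(m, k, j), ?_, fun z hz hzx => ?_⟩
      · exact hsign.imp (fun h T hT => h T (hlt T hT)) (fun h T hT => h T (hlt T hT))
      · have h1 := hδ' (hzx.trans hm)
        have e1 : f z - f x - q k (z - x) =
            (f z - f x - fderiv ℝ f x (z - x)) + (fderiv ℝ f x - q k) (z - x) := by
          simp
        simp only
        rw [e1]
        refine (norm_add_le _ _).trans ?_
        have h2 := (fderiv ℝ f x - q k).le_opNorm (z - x)
        rw [← dist_eq_norm (fderiv ℝ f x)] at h2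
        have h3 := norm_nonneg (z - x)
        nlinarith)
  have hgood : good k j := (h.self_of_nhds hx).1
  have hclose : ∀ᶠ z in 𝓝 x, z ∈ U → z ∈ closure A → z ∈ closure B →
      dist (fderiv ℝ f z) (q k) ≤ 1 / ((j : ℝ) + 1) := by
    filter_upwards [h] with z hz hzU hzA hzB
    have h1 := (hz ⟨hzU, hzA, hzB⟩).2
    rw [dist_eq_norm]
    have h2 : HasFDerivAt (fun w => f w - q k w) (fderiv ℝ f z - q k) z :=
      (hf z hzU).hasFDerivAt.sub (q k).hasFDerivAt
    refine h2.le_of_lip' (by positivity) ?_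
    filter_upwards [hU.mem_nhds hzU, ball_mem_nhds z (ε := 1 / ((m : ℝ) + 1)) (by positivity)]
      with w hw hw'
    have h3 := h1 w hw hw'
    have e1 : f w - q k w - (f z - q k z) = f w - f z - q k (w - z) := by
      rw [map_sub]; abel
    rw [e1]
    exact h3
  rcases hgood with hg | hg
  · refine dd_final f hf D (fun _ => rfl) hU 1 (by simpa using hne) x hx.1
      (by simpa using hx.2.1) (by simpa using hx.2.2) ?_
    simp only [one_mul]
    filter_upwards [hclose] with z hz h1 h2 h3
    exact hg _ (hz h1 h2 h3)
  · refine dd_final f hf D (fun _ => rfl) hU (-1) (by simpa using hne) x hx.1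
      (by simpa using hx.2.2) (by simpa using hx.2.1) ?_
    simp only [neg_mul, one_mul, Left.neg_pos_iff, Left.neg_neg_iff]
    filter_upwards [hclose] with z hz h1 h2 h3
    exact hg _ (hz h1 h3 h2)
end


/-- Differentiable Darboux theorem: if `det (f' x₀ - α • id) < 0` and
`det (f' x₁ - α • id) > 0` then `det (f' x₂ - α • id) = 0` for some `x₂ ∈ U`. -/
theorem differentiable_darboux
    {n : ℕ} {U : Set (EuclideanSpace ℝ (Fin n))} (hU : IsOpen U) (hUconn : IsConnected U)
    (f : EuclideanSpace ℝ (Fin n) → EuclideanSpace ℝ (Fin n))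
    (f' : EuclideanSpace ℝ (Fin n) → EuclideanSpace ℝ (Fin n) →L[ℝ] EuclideanSpace ℝ (Fin n))
    (hf : ∀ x ∈ U, HasFDerivAt f (f' x) x)
    (α : ℝ) (x₀ x₁ : EuclideanSpace ℝ (Fin n)) (hx₀ : x₀ ∈ U) (hx₁ : x₁ ∈ U)
    (h₀ : (f' x₀ - α • ContinuousLinearMap.id ℝ (EuclideanSpace ℝ (Fin n))).det < 0)
    (h₁ : (f' x₁ - α • ContinuousLinearMap.id ℝ (EuclideanSpace ℝ (Fin n))).det > 0) :
    ∃ x₂ ∈ U, (f' x₂ - α • ContinuousLinearMap.id ℝ (EuclideanSpace ℝ (Fin n))).det = 0 := by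
  have hd : ∀ x ∈ U, HasFDerivAt
      (fun z => f z - α • z) (f' x - α • ContinuousLinearMap.id ℝ (EuclideanSpace ℝ (Fin n))) x :=
    fun x hx => (hf x hx).sub ((hasFDerivAt_id x).const_smul α)
  obtain ⟨x, hx, h⟩ := dd_main (fun z => f z - α • z) (fun x hx => (hd x hx).differentiableAt)
    hU hUconn x₀ x₁ hx₀ hx₁ (by rw [(hd x₀ hx₀).fderiv]; exact h₀)
    (by rw [(hd x₁ hx₁).fderiv]; exact h₁)
  exact ⟨x, hx, by rw [← (hd x hx).fderiv]; exact h⟩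
end

section
/- Let U be an open connected subset of ℝⁿ and let f, g : U → ℝⁿ be differentiable maps, i.e. at every x ∈ U there are continuous linear maps f′(x), g′(x) : ℝⁿ → ℝⁿ with HasFDerivAt f (f′(x)) x and HasFDerivAt g (g′(x)) x. Suppose there exist α ∈ ℝ and points x₀, x₁ ∈ U such that det(f′(x₀) − α·g′(x₀)) < 0 and det(f′(x₁) − α·g′(x₁)) > 0. Then there exists x₂ ∈ U such that det(f′(x₂) − α·g′(x₂)) = 0. -/
open MeasureTheory Metric Set Filter Topology

lemma small_s {n : ℕ} (u : EuclideanSpace ℝ (Fin n) → EuclideanSpace ℝ (Fin n))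
    (hu : ContDiff ℝ 1 u) (R : ℝ) (hs : ∀ x, R < ‖x‖ → u x = 0) :
    ∃ s₀ > 0, ∀ s : ℝ, 0 ≤ s → s ≤ s₀ → ∀ φ : EuclideanSpace ℝ (Fin n) → ℝ,
      ∫ x in closedBall 0 R, (ContinuousLinearMap.id ℝ _ + s • fderiv ℝ u x).det * φ (x + s • u x)
        = ∫ x in closedBall 0 R, φ x := by
  have hcs : HasCompactSupport u :=
    HasCompactSupport.of_support_subset_isCompact (isCompact_closedBall 0 R) (by
      intro x hx
      by_contra h
      exact hx (hs x (by simpa using h)))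
  obtain ⟨C, hC⟩ := hu.lipschitzWith_of_hasCompactSupport hcs (by simp)
  have hdet : ∀ᶠ A : EuclideanSpace ℝ (Fin n) →L[ℝ] EuclideanSpace ℝ (Fin n) in
      𝓝 (ContinuousLinearMap.id ℝ _), 0 < A.det := by
    apply ContinuousLinearMap.continuous_det.continuousAt.eventually_const_lt
    simp [ContinuousLinearMap.det]
  obtain ⟨ε, hε, hdet⟩ := Metric.eventually_nhds_iff.1 hdet
  have hCp : (0:ℝ) < C + 1 := by positivity
  refine ⟨min (ε / 2) (1/2) / (C + 1), by positivity, fun s hs0 hs1 φ => ?_⟩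
  rw [le_div_iff₀ hCp] at hs1
  have h1 : s * (C + 1) ≤ ε / 2 := hs1.trans (min_le_left _ _)
  have h2 : s * (C + 1) ≤ 1 / 2 := hs1.trans (min_le_right _ _)
  have hdiff : ∀ x, HasFDerivAt u (fderiv ℝ u x) x := fun x =>
    (hu.differentiable (by simp) x).hasFDerivAt
  have hpos : ∀ x, 0 < (ContinuousLinearMap.id ℝ _ + s • fderiv ℝ u x).det := by
    intro x
    apply hdet
    rw [dist_eq_norm, add_sub_cancel_left, norm_smul, Real.norm_of_nonneg hs0]
    have := norm_fderiv_le_of_lipschitz ℝ hC (x₀ := x)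
    nlinarith
  set F : EuclideanSpace ℝ (Fin n) → EuclideanSpace ℝ (Fin n) := fun x => x + s • u x with hF
  have happ : ApproximatesLinearOn F
      ((ContinuousLinearEquiv.refl ℝ (EuclideanSpace ℝ (Fin n)) : _ ≃L[ℝ] _) : _ →L[ℝ] _) univ (1/2 : NNReal) := by
    intro x _ y _
    have := hC.dist_le_mul x y
    rw [dist_eq_norm, dist_eq_norm] at this
    have e : F x - F y - ((ContinuousLinearEquiv.refl ℝ (EuclideanSpace ℝ (Fin n)) : _ ≃L[ℝ] _) : _ →L[ℝ] _) (x - y) = s • (u x - u y) := by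
      simp [hF, smul_sub]; abel
    rw [e, norm_smul, Real.norm_of_nonneg hs0]
    have h3 : s * C ≤ 1/2 := by nlinarith
    calc s * ‖u x - u y‖ ≤ s * (C * ‖x - y‖) := by gcongr
      _ = s * C * ‖x - y‖ := by ring
      _ ≤ _ := by push_cast; gcongr
  have hc : Subsingleton (EuclideanSpace ℝ (Fin n)) ∨ (1/2 : NNReal) < ‖((ContinuousLinearEquiv.refl ℝ (EuclideanSpace ℝ (Fin n))).symm : EuclideanSpace ℝ (Fin n) →L[ℝ] EuclideanSpace ℝ (Fin n))‖₊⁻¹ := by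
    rcases subsingleton_or_nontrivial (EuclideanSpace ℝ (Fin n)) with h | h
    · exact Or.inl h
    · right
      have : ‖((ContinuousLinearEquiv.refl ℝ (EuclideanSpace ℝ (Fin n))).symm : EuclideanSpace ℝ (Fin n) →L[ℝ] EuclideanSpace ℝ (Fin n))‖₊ = 1 := by
        apply NNReal.eq
        simp
      rw [this, inv_one]
      norm_num [← NNReal.coe_lt_coe]
  have hsurj := happ.surjective hc
  have hinj : Function.Injective F := injOn_univ.1 (happ.injOn hc)
  have hout : ∀ x, R < ‖x‖ → F x = x := fun x hx => by simp [hF, hs x hx]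
  have himg : F '' closedBall 0 R = closedBall 0 R := by
    ext y
    simp only [mem_image, mem_closedBall_zero_iff]
    constructor
    · rintro ⟨x, hx, rfl⟩
      by_contra! h
      have := hinj (hout _ h)
      rw [this] at h
      linarith
    · intro hy
      obtain ⟨x, rfl⟩ := hsurj y
      refine ⟨x, ?_, rfl⟩
      by_contra! h
      rw [hout x h] at hy
      linarith
  have := integral_image_eq_integral_abs_det_fderiv_smul volume (s := closedBall 0 R) (f := F)
    (f' := fun x => ContinuousLinearMap.id ℝ _ + s • fderiv ℝ u x) measurableSet_closedBall
    (fun x _ => ((hasFDerivAt_id x).add ((hdiff x).const_smul s)).hasFDerivWithinAt) hinj.injOn φ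
  rw [himg] at this
  rw [this]
  simp only [abs_of_pos (hpos _), smul_eq_mul, hF]

lemma poly_exists {n : ℕ} (A : EuclideanSpace ℝ (Fin n) →L[ℝ] EuclideanSpace ℝ (Fin n))
    (x v : EuclideanSpace ℝ (Fin n)) (c : ℝ) (N : ℕ) :
    ∃ P : Polynomial ℝ, P.natDegree ≤ n + N * 2 ∧ ∀ s : ℝ, P.eval s =
      (ContinuousLinearMap.id ℝ _ + s • A).det * (1 - c * ‖x + s • v‖ ^ 2) ^ N := by
  let b := (EuclideanSpace.basisFun (Fin n) ℝ).toBasis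
  let Mx := LinearMap.toMatrix b b (A : EuclideanSpace ℝ (Fin n) →ₗ[ℝ] EuclideanSpace ℝ (Fin n))
  let D : Polynomial ℝ := ((Polynomial.X : Polynomial ℝ) • Mx.map (Polynomial.C : ℝ → Polynomial ℝ) + (1 : Matrix (Fin n) (Fin n) ℝ).map (Polynomial.C : ℝ → Polynomial ℝ)).det
  let Q : Polynomial ℝ := Polynomial.C (-c * ‖v‖^2) * Polynomial.X ^ 2 + Polynomial.C (-c * (2 * inner ℝ x v)) * Polynomial.X + Polynomial.C (1 - c * ‖x‖^2)
  refine ⟨D * Q ^ N, ?_, fun s => ?_⟩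
  · refine Polynomial.natDegree_mul_le.trans (add_le_add ?_ ?_)
    · exact (Polynomial.natDegree_det_X_add_C_le Mx 1).trans (by simp)
    · exact Polynomial.natDegree_pow_le_of_le N Polynomial.natDegree_quadratic_le
  · have hQ : Q.eval s = 1 - c * ‖x + s • v‖^2 := by
      rw [norm_add_sq_real, inner_smul_right, norm_smul, mul_pow, Real.norm_eq_abs, sq_abs]
      simp [Q]; ring
    have hD : D.eval s = (ContinuousLinearMap.id ℝ _ + s • A).det := by
      have h1 : (LinearMap.toMatrix b b) ((ContinuousLinearMap.id ℝ (EuclideanSpace ℝ (Fin n)) + s • A :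
          EuclideanSpace ℝ (Fin n) →L[ℝ] EuclideanSpace ℝ (Fin n)) :
          EuclideanSpace ℝ (Fin n) →ₗ[ℝ] EuclideanSpace ℝ (Fin n)) = 1 + s • Mx := by
        simp [Mx]
      rw [ContinuousLinearMap.det, ← LinearMap.det_toMatrix b, h1]
      simp only [D]
      rw [← Polynomial.coe_evalRingHom, RingHom.map_det]
      congr 1
      ext i j
      by_cases hij : i = j <;> simp [hij, add_comm, mul_comm s]
    rw [Polynomial.eval_mul, Polynomial.eval_pow, hQ, hD]

lemma deg_id {n : ℕ} (u : EuclideanSpace ℝ (Fin n) → EuclideanSpace ℝ (Fin n))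
    (hu : ContDiff ℝ 1 u) (R : ℝ) (hs : ∀ x, R < ‖x‖ → u x = 0) (c : ℝ) (N : ℕ) :
      ∫ x in closedBall 0 R, (ContinuousLinearMap.id ℝ _ + fderiv ℝ u x).det * (1 - c * ‖x + u x‖ ^ 2) ^ N
        = ∫ x in closedBall (0 : EuclideanSpace ℝ (Fin n)) R, (1 - c * ‖x‖ ^ 2) ^ N := by
  obtain ⟨s₀, hs₀, H⟩ := small_s u hu R hs
  set d := n + N * 2 with hd
  let v : ℕ → ℝ := fun i => s₀ / (i + 1)
  have hv : Set.InjOn v (Finset.range (d + 1) : Set ℕ) := by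
    intro i _ j _ h
    simp only [v] at h
    field_simp at h
    exact_mod_cast (by linarith : (i:ℝ) = j)
  let w : ℕ → ℝ := fun i => (Lagrange.basis (Finset.range (d+1)) v i).eval 1
  have hw : ∑ i ∈ Finset.range (d+1), w i = 1 := by
    have := congrArg (Polynomial.eval 1) (Lagrange.sum_basis hv (by simp))
    rw [Polynomial.eval_finsetSum] at this
    simpa using this
  have hpt : ∀ x, (ContinuousLinearMap.id ℝ _ + fderiv ℝ u x).det * (1 - c * ‖x + u x‖ ^ 2) ^ N
      = ∑ i ∈ Finset.range (d+1), w i * ((ContinuousLinearMap.id ℝ _ + v i • fderiv ℝ u x).det * (1 - c * ‖x + v i • u x‖ ^ 2) ^ N) := by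
    intro x
    obtain ⟨P, hP, he⟩ := poly_exists (fderiv ℝ u x) x (u x) c N
    have h1 := he 1
    simp only [one_smul] at h1
    rw [← h1, Lagrange.eq_interpolate (f := P) hv (by
      rw [Finset.card_range]
      exact lt_of_le_of_lt Polynomial.degree_le_natDegree (by exact_mod_cast Nat.lt_succ_of_le hP)),
      Lagrange.interpolate_apply, Polynomial.eval_finsetSum]
    refine Finset.sum_congr rfl fun i _ => ?_
    rw [← he]
    simp [w, mul_comm]
  simp_rw [hpt]
  have hfd : Continuous (fderiv ℝ u) := hu.continuous_fderiv (by simp)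
  have huc := hu.continuous
  rw [integral_finsetSum]
  · have : ∀ i ∈ Finset.range (d+1), ∫ x in closedBall 0 R, w i * ((ContinuousLinearMap.id ℝ _ + v i • fderiv ℝ u x).det * (1 - c * ‖x + v i • u x‖ ^ 2) ^ N) = w i * ∫ x in closedBall (0 : EuclideanSpace ℝ (Fin n)) R, (1 - c * ‖x‖ ^ 2) ^ N := by
      intro i _
      rw [integral_const_mul]
      congr 1
      refine H (v i) (by positivity) ?_ (fun y => (1 - c * ‖y‖^2)^N)
      simp only [v]
      apply div_le_self hs₀.le
      simp
    rw [Finset.sum_congr rfl this, ← Finset.sum_mul, hw, one_mul]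
  · intro i _
    apply fun h => (Continuous.continuousOn h).integrableOn_compact (isCompact_closedBall _ _)
    refine continuous_const.mul (Continuous.mul (ContinuousLinearMap.continuous_det.comp ?_) ?_) <;> fun_prop

lemma no_neg {n : ℕ} (u : EuclideanSpace ℝ (Fin n) → EuclideanSpace ℝ (Fin n))
    (hu : ContDiff ℝ 1 u) (R : ℝ) (hR : 0 < R) (hs : ∀ x, R < ‖x‖ → u x = 0)
    (hneg : ∀ x, x + u x = 0 → (ContinuousLinearMap.id ℝ _ + fderiv ℝ u x).det < 0) : False := by
  have hfd : Continuous (fderiv ℝ u) := hu.continuous_fderiv (by simp)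
  have huc := hu.continuous
  have hdc : Continuous fun x => (ContinuousLinearMap.id ℝ _ + fderiv ℝ u x).det :=
    ContinuousLinearMap.continuous_det.comp (by fun_prop)
  have hK : IsCompact (closedBall (0 : EuclideanSpace ℝ (Fin n)) R) := isCompact_closedBall _ _
  have hO : IsOpen {x | (ContinuousLinearMap.id ℝ _ + fderiv ℝ u x).det < 0} :=
    isOpen_lt hdc continuous_const
  obtain ⟨δ, hδ, hδg⟩ := (hK.diff hO).exists_forall_le' (f := fun x => ‖x + u x‖) (a := 0)
    (by fun_prop) (by
      intro x hx
      rw [norm_pos_iff]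
      exact fun h => hx.2 (hneg x h))
  obtain ⟨M₀, hM₀⟩ := hK.exists_bound_of_continuousOn (f := fun x => x + u x) (by fun_prop)
  obtain ⟨C₀, hC₀⟩ := hK.exists_bound_of_continuousOn hdc.continuousOn
  set M := max (max M₀ R) δ with hM
  have hMδ : δ ≤ M := le_max_right _ _
  have hMR : R ≤ M := (le_max_right _ _).trans (le_max_left _ _)
  have hMM : M₀ ≤ M := (le_max_left _ _).trans (le_max_left _ _)
  have hMpos : 0 < M := hδ.trans_le hMδ
  set c := 1 / (2 * M ^ 2) with hc
  have hcpos : 0 < c := by positivity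
  have hcM : c * M ^ 2 = 1 / 2 := by rw [hc]; field_simp
  have hC₀p : 0 ≤ C₀ := (norm_nonneg _).trans (hC₀ 0 (by simp [hR.le]))
  have hφ0 : ∀ t, 0 ≤ t → t ≤ M → 0 ≤ 1 - c * t ^ 2 := by
    intro t h0 ht
    have : c * t ^ 2 ≤ c * M ^ 2 := by gcongr
    linarith
  have ha0 := hφ0 δ hδ.le hMδ
  have hρ : 0 < min (δ / 2) R := by positivity
  set ρ := min (δ / 2) R with hρd
  have hb0 := hφ0 (δ / 2) (by positivity) (by linarith)
  set a := 1 - c * δ ^ 2 with ha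
  set b := 1 - c * (δ / 2) ^ 2 with hb
  have hab : a < b := by
    have : 0 < c * δ ^ 2 := by positivity
    rw [ha, hb]; nlinarith
  have hbpos : 0 < b := ha0.trans_lt hab
  have key : ∀ N : ℕ, b ^ N * volume.real (closedBall (0 : EuclideanSpace ℝ (Fin n)) ρ) ≤
      C₀ * a ^ N * volume.real (closedBall (0 : EuclideanSpace ℝ (Fin n)) R) := by
    intro N
    have h1 : ∫ x in closedBall 0 R, (ContinuousLinearMap.id ℝ _ + fderiv ℝ u x).det * (1 - c * ‖x + u x‖ ^ 2) ^ N ≤ ∫ x in closedBall (0 : EuclideanSpace ℝ (Fin n)) R, C₀ * a ^ N := by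
      apply setIntegral_mono_on
      · apply fun h => (Continuous.continuousOn h).integrableOn_compact hK
        exact hdc.mul (by fun_prop)
      · apply fun h => (Continuous.continuousOn h).integrableOn_compact hK
        fun_prop
      · exact measurableSet_closedBall
      intro x hx
      have hg : ‖x + u x‖ ≤ M := (hM₀ x hx).trans hMM
      have hg0 := hφ0 _ (norm_nonneg _) hg
      by_cases hxO : (ContinuousLinearMap.id ℝ _ + fderiv ℝ u x).det < 0
      · have : 0 ≤ C₀ * a ^ N := by positivity
        exact (mul_nonpos_of_nonpos_of_nonneg hxO.le (by positivity)).trans this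
      · have h3 := hδg x ⟨hx, hxO⟩
        have h4 : 1 - c * ‖x + u x‖ ^ 2 ≤ a := by
          rw [ha]; gcongr
        have h5 := (le_abs_self _).trans (hC₀ x hx)
        gcongr
    have h2 : ∫ x in closedBall (0 : EuclideanSpace ℝ (Fin n)) ρ, b ^ N ≤ ∫ x in closedBall (0 : EuclideanSpace ℝ (Fin n)) R, (1 - c * ‖x‖ ^ 2) ^ N := by
      have hcont : Continuous fun x : EuclideanSpace ℝ (Fin n) => (1 - c * ‖x‖ ^ 2) ^ N := by fun_prop
      calc _ ≤ ∫ x in closedBall (0 : EuclideanSpace ℝ (Fin n)) ρ, (1 - c * ‖x‖ ^ 2) ^ N := by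
            apply setIntegral_mono_on
            · apply fun h => (Continuous.continuousOn h).integrableOn_compact (isCompact_closedBall _ _)
              fun_prop
            · exact hcont.continuousOn.integrableOn_compact (isCompact_closedBall _ _)
            · exact measurableSet_closedBall
            intro x hx
            have hx' : ‖x‖ ≤ δ / 2 := (mem_closedBall_zero_iff.1 hx).trans (min_le_left _ _)
            rw [hb]
            gcongr
        _ ≤ _ := by
            apply setIntegral_mono_set (hcont.continuousOn.integrableOn_compact hK)
            · rw [EventuallyLE, ae_restrict_iff' measurableSet_closedBall]
              refine Eventually.of_forall fun x hx => ?_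
              have := hφ0 ‖x‖ (norm_nonneg _) ((mem_closedBall_zero_iff.1 hx).trans hMR)
              simp only [Pi.zero_apply]
              positivity
            · exact (closedBall_subset_closedBall (min_le_right _ _)).eventuallyLE
    rw [deg_id u hu R hs c N] at h1
    have h3 := h2.trans h1
    simp only [setIntegral_const, smul_eq_mul] at h3
    linarith
  have hvol : 0 < volume.real (closedBall (0 : EuclideanSpace ℝ (Fin n)) ρ) := by
    rw [measureReal_def, ENNReal.toReal_pos_iff]
    exact ⟨measure_closedBall_pos _ _ hρ, measure_closedBall_lt_top⟩
  have hlim : Tendsto (fun N : ℕ => C₀ * volume.real (closedBall (0 : EuclideanSpace ℝ (Fin n)) R) * (a / b) ^ N) atTop (𝓝 (C₀ * volume.real (closedBall (0 : EuclideanSpace ℝ (Fin n)) R) * 0)) :=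
    (tendsto_pow_atTop_nhds_zero_of_lt_one (by positivity) ((div_lt_one hbpos).2 hab)).const_mul _
  rw [mul_zero] at hlim
  obtain ⟨N, hN⟩ := (hlim.eventually_lt_const hvol).exists
  have h1 := key N
  rw [div_pow, ← mul_div_assoc, div_lt_iff₀ (by positivity)] at hN
  nlinarith

lemma anti_of_det {n : ℕ} (A : EuclideanSpace ℝ (Fin n) →L[ℝ] EuclideanSpace ℝ (Fin n))
    (hA : A.det ≠ 0) : ∃ C, AntilipschitzWith C A := by
  have h : A = (A.toContinuousLinearEquivOfDetNeZero hA : _ →L[ℝ] _) := by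
    ext; simp
  rw [h]
  exact ⟨_, (A.toContinuousLinearEquivOfDetNeZero hA).antilipschitz⟩

lemma core {n : ℕ} (h : EuclideanSpace ℝ (Fin n) → EuclideanSpace ℝ (Fin n))
    (h' : EuclideanSpace ℝ (Fin n) → EuclideanSpace ℝ (Fin n) →L[ℝ] EuclideanSpace ℝ (Fin n))
    (hd : ∀ y ∈ closedBall 0 1, HasFDerivAt h (h' y) y)
    (hneg : ∀ y ∈ closedBall 0 1, (h' y).det < 0)
    (hid : ∀ y ∈ closedBall 0 1, ‖h y - y‖ ≤ 1 / 4) : False := by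
  let χ : ContDiffBump (0 : EuclideanSpace ℝ (Fin n)) := ⟨1/2, 1, by norm_num, by norm_num⟩
  let χ₂ : ContDiffBump (0 : EuclideanSpace ℝ (Fin n)) := ⟨1, 2, by norm_num, by norm_num⟩
  set G : EuclideanSpace ℝ (Fin n) → EuclideanSpace ℝ (Fin n) := fun y => y + χ y • (h y - y) with hG
  have hχ0 : ∀ y, 1 ≤ ‖y‖ → χ y = 0 := fun y hy => χ.zero_of_le_dist (by simpa using hy)
  have hGout : ∀ y, 1 ≤ ‖y‖ → G y = y := fun y hy => by simp [hG, hχ0 y hy]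
  have hGin : ∀ y, ‖y‖ ≤ 1/2 → G y = h y := fun y hy => by
    have : χ y = 1 := χ.one_of_mem_closedBall (by simpa [χ] using hy)
    simp [hG, this]
  have hGc : Continuous G := by
    rw [continuous_iff_continuousAt]
    intro y
    rcases le_or_gt ‖y‖ 1 with hy | hy
    · have := (hd y (by simpa using hy)).continuousAt
      have h2 : ContinuousAt χ y := χ.continuous.continuousAt
      fun_prop
    · have : G =ᶠ[𝓝 y] id := by
        filter_upwards [(isOpen_lt continuous_const continuous_norm).mem_nhds hy] with z hz
        exact hGout z (le_of_lt hz)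
      exact continuousAt_id.congr this.symm
  have hGid : ∀ y, ‖G y - y‖ ≤ 1 / 4 := by
    intro y
    rcases le_or_gt ‖y‖ 1 with hy | hy
    · simp only [hG, add_sub_cancel_left, norm_smul]
      have h1 := hid y (by simpa using hy)
      have h2 : ‖χ y‖ ≤ 1 := by rw [Real.norm_of_nonneg χ.nonneg]; exact χ.le_one
      nlinarith [norm_nonneg (χ y), norm_nonneg (h y - y)]
    · rw [hGout y hy.le]; simp
  set S := {y | G y = 0} with hS
  have hS4 : ∀ y ∈ S, ‖y‖ ≤ 1/4 := by
    intro y hy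
    have := hGid y
    rwa [show G y = 0 from hy, zero_sub, norm_neg] at this
  have hScomp : IsCompact S :=
    (isCompact_closedBall (0 : EuclideanSpace ℝ (Fin n)) (1/4)).of_isClosed_subset
      (isClosed_eq hGc continuous_const) (fun y hy => by simpa using hS4 y hy)
  have hSb : ∀ y ∈ S, y ∈ closedBall (0 : EuclideanSpace ℝ (Fin n)) 1 := fun y hy => by
    have := hS4 y hy
    rw [mem_closedBall_zero_iff]; linarith
  have hSd : ∀ x ∈ S, HasFDerivAt G (h' x) x := by
    intro x hx
    refine (hd x (hSb x hx)).congr_of_eventuallyEq ?_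
    have : ‖x‖ < 1/2 := by linarith [hS4 x hx]
    filter_upwards [(isOpen_lt continuous_norm continuous_const).mem_nhds this] with z hz
    exact hGin z (le_of_lt hz)
  have hSa : ∀ x ∈ S, ∃ C, AntilipschitzWith C (h' x) := fun x hx =>
    anti_of_det _ (hneg x (hSb x hx)).ne
  have hk : ∀ x ∈ S, ∃ k > 0, ∀ A : EuclideanSpace ℝ (Fin n) →L[ℝ] EuclideanSpace ℝ (Fin n),
      ‖A - h' x‖ ≤ k * (‖h' x‖ + 1) → A.det < 0 := by
    intro x hx
    have h1 : ∀ᶠ A : EuclideanSpace ℝ (Fin n) →L[ℝ] EuclideanSpace ℝ (Fin n) in 𝓝 (h' x), A.det < 0 :=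
      ContinuousLinearMap.continuous_det.continuousAt.eventually_lt_const (hneg x (hSb x hx))
    obtain ⟨ε, hε, h2⟩ := Metric.eventually_nhds_iff.1 h1
    have hp : 0 < ‖h' x‖ + 1 := by positivity
    refine ⟨ε / 2 / (‖h' x‖ + 1), by positivity, fun A hA => h2 ?_⟩
    rw [div_mul_cancel₀ _ hp.ne'] at hA
    rw [dist_eq_norm]; linarith
  obtain ⟨κ₀, hκ₀, hκ⟩ : ∃ κ > 0, ∀ x ∈ S, ∀ A : EuclideanSpace ℝ (Fin n) →L[ℝ] EuclideanSpace ℝ (Fin n),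
      ‖A - h' x‖ ≤ κ * (‖h' x‖ + 1) → A.det < 0 := by
    have := hScomp.induction_on (p := fun T => ∃ κ > 0, ∀ x ∈ T, x ∈ S → ∀ A : EuclideanSpace ℝ (Fin n) →L[ℝ] EuclideanSpace ℝ (Fin n),
      ‖A - h' x‖ ≤ κ * (‖h' x‖ + 1) → A.det < 0) ⟨1, one_pos, by simp⟩
      (fun s t hst ⟨κ, h0, h1⟩ => ⟨κ, h0, fun x hx => h1 x (hst hx)⟩)
      (by
        rintro s t ⟨κ, h0, h1⟩ ⟨κ', h0', h1'⟩
        refine ⟨min κ κ', lt_min h0 h0', fun x hx hxS A hA => ?_⟩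
        rcases hx with hx | hx
        · refine h1 x hx hxS A (hA.trans ?_)
          gcongr; exact min_le_left _ _
        · refine h1' x hx hxS A (hA.trans ?_)
          gcongr; exact min_le_right _ _)
      (by
        intro x hx
        obtain ⟨k, hk0, hk1⟩ := hk x hx
        obtain ⟨C, hC⟩ := hSa x hx
        have h1 : ∀ᶠ z in 𝓝[≠] x, G z ≠ 0 :=
          (hSd x hx).eventually_ne ⟨C, hC⟩
        rw [eventually_nhdsWithin_iff] at h1
        refine ⟨_, mem_nhdsWithin_of_mem_nhds h1, k, hk0, fun z hz hzS => ?_⟩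
        by_cases hzx : z = x
        · subst hzx; exact hk1
        · exact absurd hzS (hz hzx))
    obtain ⟨κ, h0, h1⟩ := this
    exact ⟨κ, h0, fun x hx => h1 x hx hx⟩
  set κ := min κ₀ (1/2) with hκd
  have hκpos : 0 < κ := by positivity
  have hκ2 : κ ≤ 1/2 := min_le_right _ _
  have hκκ : κ ≤ κ₀ := min_le_left _ _
  obtain ⟨g, hg⟩ := exists_contMDiffMap_forall_mem_convex_of_local (n := 1)
    (modelWithCornersSelf ℝ (EuclideanSpace ℝ (Fin n))) (t := fun y => closedBall (G y) (κ * ‖G y‖))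
    (fun y => convex_closedBall _ _) (by
      intro x
      by_cases hx : x ∈ S
      · obtain ⟨C, hC⟩ := hSa x hx
        have h1 := (hSd x hx).isLittleO.trans_isBigO ((hSd x hx).isTheta_sub
          (hC.isUniformInducing (h' x).uniformContinuous).isInducing).2
        have h2 := h1.bound hκpos
        refine ⟨_, h2, fun y => h' x (y - x), ?_, fun y hy => ?_⟩
        · rw [contMDiffOn_iff_contDiffOn]
          exact ((h' x).contDiff.comp (contDiff_id.sub contDiff_const)).contDiffOn
        · have hGx : G x = 0 := hx
          simp only [mem_ofPred_eq, hGx, sub_zero] at hy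
          rw [mem_closedBall, dist_comm, dist_eq_norm]
          exact hy
      · have h1 : ∀ᶠ y in 𝓝 x, ‖G x - G y‖ < κ * ‖G y‖ := by
          have hpos : 0 < ‖G x‖ := norm_pos_iff.2 hx
          have : ContinuousAt (fun y => κ * ‖G y‖ - ‖G x - G y‖) x := by
            fun_prop
          filter_upwards [this.eventually_const_lt (u := 0) (by simp; positivity)] with y hy
          linarith
        refine ⟨_, h1, fun _ => G x, contMDiffOn_const, fun y hy => ?_⟩
        rw [mem_closedBall, dist_eq_norm]
        exact le_of_lt hy)
  have hgc : ContDiff ℝ 1 g := contMDiff_iff_contDiff.1 g.contMDiff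
  have hgn : ∀ y, ‖g y - G y‖ ≤ κ * ‖G y‖ := fun y => by
    have := hg y
    rwa [mem_closedBall, dist_eq_norm] at this
  set u : EuclideanSpace ℝ (Fin n) → EuclideanSpace ℝ (Fin n) := fun y => χ₂ y • (g y - y) with hu
  have huc : ContDiff ℝ 1 u := χ₂.contDiff.smul (hgc.sub contDiff_id)
  have hun : ∀ y, ‖y + u y - G y‖ ≤ κ * ‖G y‖ := by
    intro y
    rcases le_or_gt ‖y‖ 1 with hy | hy
    · have h1 : χ₂ y = 1 := χ₂.one_of_mem_closedBall (by simpa [χ₂] using hy)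
      simpa [hu, h1] using hgn y
    · have h1 := hgn y
      rw [hGout y hy.le] at h1 ⊢
      simp only [hu, add_sub_cancel_left, norm_smul]
      have h2 : ‖χ₂ y‖ ≤ 1 := by rw [Real.norm_of_nonneg χ₂.nonneg]; exact χ₂.le_one
      nlinarith [norm_nonneg (χ₂ y), norm_nonneg (g y - y)]
  refine no_neg u huc 2 (by norm_num) ?_ ?_
  · intro x hx
    have : χ₂ x = 0 := χ₂.zero_of_le_dist (by simpa [χ₂] using hx.le)
    simp [hu, this]
  · intro x hx
    have hxS : x ∈ S := by
      have := hun x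
      rw [hx, zero_sub, norm_neg] at this
      have h0 := norm_nonneg (G x)
      have : ‖G x‖ = 0 := by nlinarith
      exact norm_eq_zero.1 this
    have hGx : G x = 0 := hxS
    refine hκ x hxS _ ?_
    have hder : HasFDerivAt (fun y => y + u y - G y) (ContinuousLinearMap.id ℝ _ + fderiv ℝ u x - h' x) x :=
      ((hasFDerivAt_id x).add (huc.differentiable (by simp) x).hasFDerivAt).sub (hSd x hxS)
    have h1 : ‖ContinuousLinearMap.id ℝ _ + fderiv ℝ u x - h' x‖ ≤ κ * (‖h' x‖ + 1) := by
      apply hder.le_of_lip' (by positivity)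
      filter_upwards [(hSd x hxS).isLittleO.bound one_pos] with y hy
      rw [hx, hGx, sub_zero, sub_zero]
      rw [hGx, sub_zero, one_mul] at hy
      refine (hun y).trans ?_
      rw [mul_assoc]
      gcongr
      calc ‖G y‖ = ‖(G y - h' x (y - x)) + h' x (y - x)‖ := by rw [sub_add_cancel]
        _ ≤ ‖y - x‖ + ‖h' x‖ * ‖y - x‖ := (norm_add_le _ _).trans (add_le_add hy ((h' x).le_opNorm _))
        _ = _ := by ring
    refine h1.trans ?_
    gcongr

lemma tangent {n : ℕ} (h : EuclideanSpace ℝ (Fin n) → EuclideanSpace ℝ (Fin n))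
    (h' : EuclideanSpace ℝ (Fin n) → EuclideanSpace ℝ (Fin n) →L[ℝ] EuclideanSpace ℝ (Fin n))
    (w x : EuclideanSpace ℝ (Fin n)) (r : ℝ) (hr : 0 < r) (hx : ‖w - x‖ = r)
    (hdx : HasFDerivAt h (h' x) x)
    (hd : ∀ y ∈ ball w r, HasFDerivAt h (h' y) y)
    (hneg : ∀ y ∈ ball w r, (h' y).det * (h' x).det < 0) : False := by
  have hdet : (h' x).det ≠ 0 := by
    intro h0
    have := hneg w (mem_ball_self hr)
    rw [h0, mul_zero] at this
    exact lt_irrefl _ this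
  let L := (h' x).toContinuousLinearEquivOfDetNeZero hdet
  let Li : EuclideanSpace ℝ (Fin n) →L[ℝ] EuclideanSpace ℝ (Fin n) := L.symm
  have hLi : ∀ v, Li (h' x v) = v := fun v => L.symm_apply_apply v
  have hLid : Li.det * (h' x).det = 1 := by
    have h1 : Li ∘L h' x = ContinuousLinearMap.id ℝ _ := by ext1 v; exact hLi v
    have h2 := congrArg ContinuousLinearMap.det h1
    simpa [ContinuousLinearMap.det, LinearMap.det_comp] using h2
  have hc : 0 < 1 / (12 * (‖Li‖ + 1)) := by positivity
  obtain ⟨ε, hε, hb⟩ := Metric.eventually_nhds_iff.1 (hdx.isLittleO.bound hc)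
  obtain ⟨τ, hτ0, hτ1, hτε⟩ : ∃ τ : ℝ, 0 < τ ∧ τ < 1 ∧ τ * (2 * r) < ε := by
    refine ⟨min (1/2) (ε / (4 * r)), by positivity, (min_le_left _ _).trans_lt (by norm_num), ?_⟩
    calc _ ≤ ε / (4 * r) * (2 * r) := by gcongr; exact min_le_right _ _
      _ = ε / 2 := by field_simp; norm_num
      _ < ε := by linarith
  set ρ := τ * r / 2 with hρ
  have hρ0 : 0 < ρ := by positivity
  set a := τ • (w - x) with ha
  have han : ‖a‖ = 2 * ρ := by rw [ha, norm_smul, hx, Real.norm_of_nonneg hτ0.le, hρ]; ring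
  have hq : ∀ y ∈ closedBall (0 : EuclideanSpace ℝ (Fin n)) 1, x + (a + ρ • y) ∈ ball w r := by
    intro y hy
    rw [mem_closedBall_zero_iff] at hy
    rw [mem_ball, dist_eq_norm]
    have e : x + (a + ρ • y) - w = -((1 - τ) • (w - x)) + ρ • y := by
      rw [ha]; module
    rw [e]
    calc _ ≤ (1 - τ) * r + ρ * ‖y‖ := by
          refine (norm_add_le _ _).trans ?_
          rw [norm_neg, norm_smul, norm_smul, hx, Real.norm_of_nonneg (by linarith), Real.norm_of_nonneg hρ0.le]
      _ ≤ (1 - τ) * r + ρ * 1 := by gcongr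
      _ < r := by rw [hρ]; nlinarith [mul_pos hτ0 hr]
  refine core (fun y => ρ⁻¹ • Li (h (x + (a + ρ • y)) - h x - h' x a))
    (fun y => Li ∘L h' (x + (a + ρ • y))) ?_ ?_ ?_
  · intro y hy
    have h1 : HasFDerivAt (fun y : EuclideanSpace ℝ (Fin n) => x + (a + ρ • y)) (ρ • ContinuousLinearMap.id ℝ _) y :=
      (((hasFDerivAt_id y).const_smul ρ).const_add a).const_add x
    have h2 := ((((hd _ (hq y hy)).comp y h1).sub_const (h x)).sub_const (h' x a))
    have h3 := ((Li.hasFDerivAt.comp y h2).const_smul ρ⁻¹)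
    refine h3.congr_fderiv ?_
    ext1 v
    simp [hρ0.ne', smul_smul]
  · intro y hy
    have h1 := hneg _ (hq y hy)
    have h2 : (Li ∘L h' (x + (a + ρ • y))).det = Li.det * (h' (x + (a + ρ • y))).det := by
      simp [ContinuousLinearMap.det, LinearMap.det_comp]
    rw [h2]
    have h3 : 0 < (h' x).det ^ 2 := by positivity
    by_contra! h4
    have : Li.det * (h' (x + (a + ρ • y))).det * (h' x).det ^ 2 = (Li.det * (h' x).det) * ((h' (x + (a + ρ • y))).det * (h' x).det) := by ring
    rw [hLid, one_mul] at this
    nlinarith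
  · intro y hy
    have hy1 := mem_closedBall_zero_iff.1 hy
    have hn : ‖a + ρ • y‖ ≤ 3 * ρ := by
      refine (norm_add_le _ _).trans ?_
      rw [han, norm_smul, Real.norm_of_nonneg hρ0.le]
      nlinarith
    have h1 := hb (y := x + (a + ρ • y)) (by
      rw [dist_eq_norm, add_sub_cancel_left]
      refine hn.trans_lt ?_
      rw [hρ]; nlinarith [mul_pos hτ0 hr])
    rw [add_sub_cancel_left] at h1
    have e : ρ⁻¹ • Li (h (x + (a + ρ • y)) - h x - h' x a) - y
        = ρ⁻¹ • Li (h (x + (a + ρ • y)) - h x - h' x (a + ρ • y)) := by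
      simp only [map_sub, map_add, map_smul, hLi, smul_sub, smul_add, smul_smul, inv_mul_cancel₀ hρ0.ne', one_smul]
      abel
    simp only [e]
    rw [norm_smul, norm_inv, Real.norm_of_nonneg hρ0.le, inv_mul_le_iff₀ hρ0]
    calc _ ≤ ‖Li‖ * (1 / (12 * (‖Li‖ + 1)) * (3 * ρ)) := by
          refine (Li.le_opNorm _).trans ?_
          gcongr
          refine h1.trans ?_
          gcongr
      _ = (‖Li‖ / (‖Li‖ + 1)) * (ρ * (1/4)) := by field_simp; ring
      _ ≤ 1 * (ρ * (1/4)) := by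
          gcongr
          rw [div_le_one (by positivity)]; linarith
      _ = _ := one_mul _

lemma meets_frontier {X : Type*} [TopologicalSpace X] {s A : Set X} (hs : IsPreconnected s)
    (h1 : (s ∩ A).Nonempty) (h2 : (s ∩ Aᶜ).Nonempty) : (s ∩ frontier A).Nonempty := by
  by_contra! h
  have hcov : ∀ x ∈ s, x ∈ interior A ∨ x ∈ interior Aᶜ := by
    intro x hx
    by_contra! hh
    have : x ∈ s ∩ frontier A := ⟨hx, by
      rw [frontier, Set.mem_sdiff]
      refine ⟨?_, hh.1⟩
      have := hh.2
      rw [interior_compl] at this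
      simpa using this⟩
    rw [h] at this
    exact this
  obtain ⟨a, ha, haA⟩ := h1
  obtain ⟨b, hb, hbA⟩ := h2
  have ha' : a ∈ interior A := (hcov a ha).resolve_right fun h => interior_subset h haA
  have hb' : b ∈ interior Aᶜ := (hcov b hb).resolve_left fun h => hbA (interior_subset h)
  obtain ⟨z, -, hz1, hz2⟩ := hs _ _ isOpen_interior isOpen_interior (fun x hx => hcov x hx) ⟨a, ha, ha'⟩ ⟨b, hb, hb'⟩
  exact interior_subset hz2 (interior_subset hz1)

/-- determinants of difference quotients -/
lemma approx_det {n : ℕ} (h : EuclideanSpace ℝ (Fin n) → EuclideanSpace ℝ (Fin n))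
    (h' : EuclideanSpace ℝ (Fin n) → EuclideanSpace ℝ (Fin n) →L[ℝ] EuclideanSpace ℝ (Fin n))
    (p : EuclideanSpace ℝ (Fin n)) (r : ℝ) (hr : 0 < r)
    (hd : ∀ y ∈ ball p (2 * r), HasFDerivAt h (h' y) y) :
    ∃ d : ℕ → EuclideanSpace ℝ (Fin n) → ℝ, (∀ m, ContinuousOn (d m) (ball p r)) ∧
      ∀ x ∈ ball p r, Tendsto (fun m => d m x) atTop (𝓝 (h' x).det) := by
  obtain ⟨m₀, hm₀⟩ := exists_nat_gt (1 / r)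
  have hm₀p : (0:ℝ) < m₀ := lt_trans (by positivity) hm₀
  let b := (EuclideanSpace.basisFun (Fin n) ℝ).toBasis
  let c : ℕ → ℝ := fun m => m + m₀
  have hc : ∀ m, 0 < c m := fun m => by positivity
  have hcr : ∀ m, (c m)⁻¹ < r := fun m => by
    rw [inv_lt_comm₀ (hc m) hr]
    simp only [c]
    rw [one_div] at hm₀
    have : (0:ℝ) ≤ m := by positivity
    linarith
  have hbn : ∀ j, ‖b j‖ = 1 := fun j => by simp [b]
  refine ⟨fun m x => Matrix.det (fun i j => b.repr (c m • (h (x + (c m)⁻¹ • b j) - h x)) i), fun m => ?_, fun x hx => ?_⟩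
  · have hent : ∀ i j, ContinuousOn (fun x => b.repr (c m • (h (x + (c m)⁻¹ • b j) - h x)) i) (ball p r) := by
      intro i j x hx
      apply ContinuousAt.continuousWithinAt
      have hx1 : ContinuousAt h x := (hd x (by rw [mem_ball] at hx ⊢; linarith)).continuousAt
      have hx2 : ContinuousAt h (x + (c m)⁻¹ • b j) := by
        refine (hd _ ?_).continuousAt
        rw [mem_ball] at hx ⊢
        calc dist (x + (c m)⁻¹ • b j) p ≤ dist (x + (c m)⁻¹ • b j) x + dist x p := dist_triangle _ _ _
          _ < r + r := by
            refine add_lt_add ?_ hx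
            rw [dist_eq_norm, add_sub_cancel_left, norm_smul, hbn, mul_one, Real.norm_of_nonneg (inv_pos.2 (hc m)).le]
            exact hcr m
          _ = _ := by ring
      have hx3 : ContinuousAt (fun x => h (x + (c m)⁻¹ • b j)) x :=
        ContinuousAt.comp (f := fun x => x + (c m)⁻¹ • b j) hx2 (by fun_prop)
      have hl : Continuous (fun v => b.repr v i) := (b.coord i).continuous_of_finiteDimensional
      have hx4 : ContinuousAt (fun x => c m • (h (x + (c m)⁻¹ • b j) - h x)) x := by fun_prop
      exact hl.continuousAt.comp hx4
    rw [continuousOn_iff_continuous_domRestrict]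
    apply Continuous.matrix_det
    refine continuous_matrix fun i j => ?_
    exact continuousOn_iff_continuous_domRestrict.1 (hent i j)
  · have hdx := hd x (by rw [mem_ball] at hx ⊢; linarith)
    have hM : (h' x).det = Matrix.det (fun i j => b.repr (h' x (b j)) i) := by
      rw [ContinuousLinearMap.det, ← LinearMap.det_toMatrix b]
      congr 1
      ext i j
      rw [LinearMap.toMatrix_apply]; rfl
    rw [hM]
    have hctop : Tendsto c atTop atTop := tendsto_atTop_add_const_right _ _ tendsto_natCast_atTop_atTop
    have hent : Tendsto (fun m => (fun i j => b.repr (c m • (h (x + (c m)⁻¹ • b j) - h x)) i : Matrix (Fin n) (Fin n) ℝ)) atTop (𝓝 (fun i j => b.repr (h' x (b j)) i)) := by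
      rw [tendsto_pi_nhds]; intro i
      rw [tendsto_pi_nhds]; intro j
      have hl : Continuous (fun v => b.repr v i) := (b.coord i).continuous_of_finiteDimensional
      refine (hl.tendsto _).comp ?_
      refine hdx.lim_real (b j) |>.comp hctop
    exact ((continuous_id.matrix_det (A := fun M : Matrix (Fin n) (Fin n) ℝ => M)).tendsto _).comp hent

/-- Darboux-type theorem for a pair of differentiable maps: if
`det (f' x₀ - α • g' x₀) < 0` and `det (f' x₁ - α • g' x₁) > 0` then
`det (f' x₂ - α • g' x₂) = 0` for some `x₂ ∈ U`. -/
theorem darboux_pair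
    {n : ℕ} {U : Set (EuclideanSpace ℝ (Fin n))} (hU : IsOpen U) (hUconn : IsConnected U)
    (f g : EuclideanSpace ℝ (Fin n) → EuclideanSpace ℝ (Fin n))
    (f' g' : EuclideanSpace ℝ (Fin n) → EuclideanSpace ℝ (Fin n) →L[ℝ] EuclideanSpace ℝ (Fin n))
    (hf : ∀ x ∈ U, HasFDerivAt f (f' x) x)
    (hg : ∀ x ∈ U, HasFDerivAt g (g' x) x)
    (α : ℝ) (x₀ x₁ : EuclideanSpace ℝ (Fin n)) (hx₀ : x₀ ∈ U) (hx₁ : x₁ ∈ U)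
    (h₀ : (f' x₀ - α • g' x₀).det < 0)
    (h₁ : (f' x₁ - α • g' x₁).det > 0) :
    ∃ x₂ ∈ U, (f' x₂ - α • g' x₂).det = 0 := by
  by_contra! hne
  let h : EuclideanSpace ℝ (Fin n) → EuclideanSpace ℝ (Fin n) := fun x => f x - α • g x
  obtain ⟨h', hh'⟩ : ∃ h' : EuclideanSpace ℝ (Fin n) → EuclideanSpace ℝ (Fin n) →L[ℝ] EuclideanSpace ℝ (Fin n),
    h' = fun x => f' x - α • g' x := ⟨_, rfl⟩
  have hd : ∀ x ∈ U, HasFDerivAt h (h' x) x := fun x hx => by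
    rw [hh']; exact (hf x hx).sub ((hg x hx).const_smul α)
  replace hne : ∀ x ∈ U, (h' x).det ≠ 0 := by rw [hh']; exact hne
  replace h₀ : (h' x₀).det < 0 := by rw [hh']; exact h₀
  replace h₁ : 0 < (h' x₁).det := by rw [hh']; exact h₁
  set A := {x | x ∈ U ∧ 0 < (h' x).det} with hA
  have hAm : ∀ x, x ∈ A ↔ x ∈ U ∧ 0 < (h' x).det := fun x => Iff.rfl
  obtain ⟨p₀, hp₀U, hp₀F⟩ := meets_frontier (A := A) hUconn.isPreconnected ⟨x₁, hx₁, hx₁, h₁⟩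
    ⟨x₀, hx₀, fun hx => by have := ((hAm _).1 hx).2; linarith⟩
  obtain ⟨R, hR, hRU⟩ := Metric.isOpen_iff.1 hU p₀ hp₀U
  obtain ⟨r, hr, hrR⟩ : ∃ r > 0, 2 * r = R := ⟨R / 2, by positivity, by ring⟩
  rw [← hrR] at hRU
  obtain ⟨d, hdc, hdt⟩ := approx_det h h' p₀ r hr (fun y hy => hd y (hRU hy))
  have hrU : ball p₀ r ⊆ U := (ball_subset_ball (by linarith)).trans hRU
  let X := ↥(frontier A ∩ ball p₀ r)
  have hlc : LocallyCompactSpace X :=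
    (isClosed_frontier.isLocallyClosed.inter isOpen_ball.isLocallyClosed).locallyCompactSpace
  have hne' : Nonempty X := ⟨⟨p₀, hp₀F, mem_ball_self hr⟩⟩
  let e : Bool → ℝ := fun b => if b then 1 else -1
  have he : ∀ b, e b * e b = 1 := by intro b; cases b <;> simp [e]
  have hpos : ∀ x ∈ U, ∃ b, 0 < e b * (h' x).det := by
    intro x hx
    rcases lt_or_gt_of_ne (hne x hx) with h1 | h1
    · exact ⟨false, by simpa [e] using h1⟩
    · exact ⟨true, by simpa [e] using h1⟩
  let C : Bool × ℕ → Set X := fun i => {x | ∀ m, i.2 ≤ m → 1 / ((i.2 : ℝ) + 1) ≤ e i.1 * d m x}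
  have hCc : ∀ i, IsClosed (C i) := by
    intro i
    have : C i = ⋂ m, ⋂ (_ : i.2 ≤ m), {x : X | 1 / ((i.2 : ℝ) + 1) ≤ e i.1 * d m x} := by
      ext x; simp [C]
    rw [this]
    refine isClosed_iInter fun m => isClosed_iInter fun _ => isClosed_le continuous_const ?_
    exact continuous_const.mul ((hdc m).comp_continuous continuous_subtype_val (fun x => x.2.2))
  have hCu : ⋃ i, C i = univ := by
    rw [eq_univ_iff_forall]
    intro x
    obtain ⟨b, hb⟩ := hpos x (hrU x.2.2)
    have ht := (hdt x x.2.2).const_mul (e b)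
    obtain ⟨K, hK⟩ := eventually_atTop.1 (ht.eventually_const_lt (half_lt_self hb))
    obtain ⟨k, hk⟩ := exists_nat_one_div_lt (half_pos hb)
    refine mem_iUnion.2 ⟨(b, max K k), fun m hm => ?_⟩
    have h1 := hK m ((le_max_left _ _).trans hm)
    have h2 : 1 / (((max K k : ℕ) : ℝ) + 1) ≤ 1 / ((k : ℝ) + 1) := by
      gcongr; exact le_max_right _ _
    exact h2.trans (hk.le.trans h1.le)
  obtain ⟨⟨b, k⟩, p, hp⟩ := nonempty_interior_of_iUnion_of_closed hCc hCu
  have hCpos : ∀ x ∈ C (b, k), 0 < e b * (h' x).det := by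
    intro x hx
    have ht := (hdt x x.2.2).const_mul (e b)
    have h1 : 1 / ((k : ℝ) + 1) ≤ e b * (h' x).det :=
      ge_of_tendsto ht (eventually_atTop.2 ⟨k, fun m hm => hx m hm⟩)
    exact lt_of_lt_of_le (by positivity) h1
  obtain ⟨ε₁, hε₁, hball⟩ := Metric.mem_nhds_iff.1 (mem_interior_iff_mem_nhds.1 hp)
  obtain ⟨ε₂, hε₂, hball₂⟩ := Metric.isOpen_iff.1 isOpen_ball p.1 p.2.2
  set ε := min ε₁ ε₂
  have hε : 0 < ε := lt_min hε₁ hε₂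
  have hεr : ball p.1 ε ⊆ ball p₀ r := (ball_subset_ball (min_le_right _ _)).trans hball₂
  have hFpos : ∀ x ∈ frontier A, x ∈ ball p.1 ε → 0 < e b * (h' x).det := by
    intro x hx hxb
    refine hCpos ⟨x, hx, hεr hxb⟩ (hball ?_)
    rw [mem_ball] at hxb ⊢
    exact hxb.trans_le (min_le_left _ _)
  have hside : ∀ x ∈ U, e b * (h' x).det < 0 → (x ∈ A ↔ b = false) := by
    intro x hx hlt
    rw [hAm]
    cases b
    · simp only [e] at hlt
      simp [hx]; simpa using hlt
    · simp only [e] at hlt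
      simp [hx]; simpa using hlt.le
  have hside' : ∀ x ∈ U, 0 < e b * (h' x).det → (x ∈ A ↔ b = true) := by
    intro x hx hlt
    rw [hAm]
    cases b
    · simp only [e] at hlt
      simp [hx]; simpa using hlt.le
    · simp only [e] at hlt
      simp [hx]; simpa using hlt
  obtain ⟨w, hwp, hw⟩ : ∃ w, dist w p.1 < ε / 2 ∧ e b * (h' w).det < 0 := by
    have hfr : p.1 ∈ closure A ∩ closure Aᶜ :=
      (frontier_eq_closure_inter_closure (s := A)).subset p.2.1
    obtain ⟨w, hwp, hww⟩ : ∃ w, dist p.1 w < ε / 2 ∧ ¬ (w ∈ A ↔ b = true) := by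
      cases b
      · obtain ⟨w, hw, hwd⟩ := Metric.mem_closure_iff.1 hfr.1 (ε / 2) (half_pos hε)
        exact ⟨w, hwd, by simpa using hw⟩
      · obtain ⟨w, hw, hwd⟩ := Metric.mem_closure_iff.1 hfr.2 (ε / 2) (half_pos hε)
        exact ⟨w, hwd, by simpa using hw⟩
    rw [dist_comm] at hwp
    refine ⟨w, hwp, ?_⟩
    have hwU : w ∈ U := hrU (hεr (by rw [mem_ball]; linarith))
    by_contra! hcon
    refine hww (hside' w hwU (lt_of_le_of_ne hcon ?_))
    intro h0
    have : e b * (e b * (h' w).det) = 0 := by rw [← h0, mul_zero]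
    rw [← mul_assoc, he, one_mul] at this
    exact hne w hwU this
  have hwF : w ∉ frontier A := fun hwF => by
    have := hFpos w hwF (by rw [mem_ball]; linarith)
    linarith
  obtain ⟨x, hxF, hxd⟩ := isClosed_frontier.exists_infDist_eq_dist ⟨p.1, p.2.1⟩ w
  have hxp : dist w x ≤ dist w p.1 := hxd ▸ infDist_le_dist_of_mem p.2.1
  have hr' : 0 < dist w x := dist_pos.2 fun heq => hwF (heq ▸ hxF)
  have hxb : x ∈ ball p.1 ε := by
    rw [mem_ball]
    have := dist_triangle x w p.1
    rw [dist_comm x w] at this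
    linarith
  have hbs : ∀ y ∈ ball w (dist w x), y ∈ U := by
    intro y hy
    apply hrU; apply hεr
    rw [mem_ball] at hy ⊢
    have := dist_triangle y w p.1
    linarith
  refine tangent h h' w x (dist w x) hr' (dist_eq_norm _ _).symm (hd x (hrU (hεr hxb)))
    (fun y hy => hd y (hbs y hy)) ?_
  intro y hy
  have hxpos := hFpos x hxF hxb
  have hyneg : e b * (h' y).det < 0 := by
    by_contra! hcon
    have hy0 : 0 < e b * (h' y).det := by
      refine lt_of_le_of_ne hcon fun h0 => ?_
      have : e b * (e b * (h' y).det) = 0 := by rw [← h0, mul_zero]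
      rw [← mul_assoc, he, one_mul] at this
      exact hne y (hbs y hy) this
    have hyA := hside' y (hbs y hy) hy0
    have hwB := mem_ball_self (x := w) hr'
    have hwA := hside w (hbs w hwB) hw
    have hpc : IsPreconnected (ball w (dist w x)) := (convex_ball _ _).isPreconnected
    obtain ⟨z, hzb, hzF⟩ : (ball w (dist w x) ∩ frontier A).Nonempty := by
      cases b
      · exact meets_frontier hpc ⟨w, hwB, by simpa using hwA⟩ ⟨y, hy, by simpa using hyA⟩
      · exact meets_frontier hpc ⟨y, hy, by simpa using hyA⟩ ⟨w, hwB, by simpa using hwA⟩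
    have h1 := infDist_le_dist_of_mem hzF (x := w)
    rw [mem_ball, dist_comm] at hzb
    linarith
  have h1 := mul_neg_of_neg_of_pos hyneg hxpos
  have h2 : e b * (h' y).det * (e b * (h' x).det) = (e b * e b) * ((h' y).det * (h' x).det) := by ring
  rw [h2, he, one_mul] at h1
  exact h1
end
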